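/- There exist a constant c > 0 and a constant K > 0 such that for all n: P(det(A_{2n}) = 0) ≤ K exp(−n^c), P(det(M_n) = 0) ≤ K exp(−n^c), and P(det(L_n) = 0) ≤ K exp(−n^c), where A_{2n} is the random skew-symmetric matrix of size 2n, M_n the random symmetric matrix, and L_n the reduced Laplacian of an Erdős–Rényi graph, all with determinant taken over ℤ. -/

import Mathlib

/-!
Reduce the matrix modulo a prime `p` with `log p` of order `n ^ (1 / 4)`; it suffices to bound the
probability that the determinant vanishes modulo `p`. If it does, some column `a` depends on the other
columns (`border`), and a union bound over `a` costs a factor `n`. Write `N` for the matrix without row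
and column `a`, and `x` for the column `a` without its diagonal entry `d`. The dependence says that there
is `w'` with `N w' = -x` and `x · w' = -d`. The matrix `N` is exposed first, the column `x` afterwards.

* If `N` is singular and symmetric or skew-symmetric, every kernel vector `u` of `N` satisfies `u · x = 0`
  (`step_sing`). For a skew-symmetric matrix of even size this is the only case, since `N` then has odd
  size.
* If `N` is symmetric and invertible, the quadratic form `x · N⁻¹ x` has to take a prescribed value. By
  Cauchy–Schwarz the square of this probability is at most the probability that the value is taken both
  before and after the coordinates of `x` in a set `J` are resampled; subtracting, one gets a linear
  equation in the coordinates of `x` in a set `I` disjoint from `J`, whose coefficient vector `u` solves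
  `N u = v` with `v` supported on `J`, independent of `N`, and nonzero outside an unlikely event
  (`step_inv`).

In both cases the linear form takes a given value with probability at most `2 / p`, provided that `u` is
unstructured (`Unstr`, `Pr_unstr_le`): this means that coordinates of `u` can be paired so that the lazy
random walk `nu` whose steps are the differences along the pairs is almost uniformly distributed.

It remains to show that solutions `u` of `N u = v` are rarely structured (`bad_bound`). For any `u`, a
greedy choice of few pairs (`greedy`) reaches a walk for which all the unused coordinates differ by
elements of a level set of `nu`, a set of size at most about `1 / nu 0`. So, once the few chosen pairs
with their values are fixed, there are about `(1 / nu 0) ^ n` vectors, while for each of them the row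
equations hold with probability at most about `(nu 0) ^ n` (`row_prob`). On a positive proportion of the
coordinates a structured vector leaves a further constant factor to be gained, because Cauchy–Davenport
bounds the level set by about half of `1 / nu 0` (`lev_card_le'`). Hence the union bound is exponentially
small in `n`, even after multiplying by the number of choices of pairs and values.

The reduced Laplacian has a diagonal that depends on the off-diagonal entries. Given the column index `a`,
the randomness of the new column is taken from independent switches that exchange the edges `{a, j}` and
`{root, j}` (`swp`, `swap_resample`): these preserve the distribution of the graph and do not change `N`.
About half of the switches are effective, by a Chernoff bound (`tail_bound`).

The parameters are chosen in `numerics`, which yields the bound `exp (-n ^ (1 / 8))` for large `n`; small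
`n` are absorbed in the constant `K`.
-/

open MeasureTheory Filter

noncomputable section

def IsBalanced (α : ℝ) (μ : Measure ℤ) : Prop :=
  ∀ p : ℕ, p.Prime → ∀ r : ZMod p, μ {x : ℤ | (x : ZMod p) = r} ≤ ENNReal.ofReal (1 - α)

def symMatrix (n : ℕ) (x : Fin n × Fin n → ℤ) : Matrix (Fin n) (Fin n) ℤ :=
  Matrix.of fun i j => if i ≤ j then x (i, j) else x (j, i)

def skewMatrix (n : ℕ) (x : Fin n × Fin n → ℤ) : Matrix (Fin n) (Fin n) ℤ :=
  Matrix.of fun i j => if i < j then x (i, j) else if j < i then -x (j, i) else 0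

def edgeInd {n : ℕ} (x : Fin n × Fin n → Bool) (i j : Fin n) : ℤ :=
  if i < j then (if x (i, j) then 1 else 0)
  else if j < i then (if x (j, i) then 1 else 0) else 0

def redLap (n : ℕ) (x : Fin (n + 1) × Fin (n + 1) → Bool) : Matrix (Fin n) (Fin n) ℤ :=
  Matrix.of fun i j =>
    if i = j then -(∑ k : Fin (n + 1), edgeInd x k i.castSucc)
    else edgeInd x i.castSucc j.castSucc

def matMeasure (μ : Measure ℤ) (hμ : IsProbabilityMeasure μ) (n : ℕ) :
    Measure (Fin n × Fin n → ℤ) :=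
  haveI := hμ
  Measure.pi fun _ => μ

def graphMeasure (n : ℕ) : Measure (Fin (n + 1) × Fin (n + 1) → Bool) :=
  (PMF.uniformOfFintype (Fin (n + 1) × Fin (n + 1) → Bool)).toMeasure

namespace SingB

open Classical Matrix

/-! ### Expectations over finite product spaces -/

section Expectation

variable {Ω : Type} [Fintype Ω] {E : Type} [Fintype E]

/-- Expectation of `f` when the coordinates of `x : E → Ω` are independent with weights `w`. -/
def Ex (w : Ω → ℝ) (f : (E → Ω) → ℝ) : ℝ := ∑ x, (∏ e, w (x e)) * f x

/-- Probability of the event `A` for independent coordinates with weights `w`. -/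
def Pr (w : Ω → ℝ) (A : (E → Ω) → Prop) : ℝ := Ex w fun x => if A x then 1 else 0

/-- The point that agrees with `z` on the coordinates satisfying `P` and with `o` elsewhere. -/
def mix (P : E → Prop) (o z : E → Ω) : E → Ω := fun e => if P e then z e else o e

variable {w : Ω → ℝ}

lemma Ex_mono (hw : ∀ a, 0 ≤ w a) {f g : (E → Ω) → ℝ} (h : ∀ x, f x ≤ g x) : Ex w f ≤ Ex w g :=
  Finset.sum_le_sum fun x _ =>
    mul_le_mul_of_nonneg_left (h x) (Finset.prod_nonneg fun _ _ => hw _)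

lemma Ex_nonneg (hw : ∀ a, 0 ≤ w a) {f : (E → Ω) → ℝ} (h : ∀ x, 0 ≤ f x) : 0 ≤ Ex w f :=
  Finset.sum_nonneg fun x _ => mul_nonneg (Finset.prod_nonneg fun _ _ => hw _) (h x)

lemma sum_weight (hs : ∑ a, w a = 1) : ∑ x : E → Ω, ∏ e, w (x e) = 1 := by
  have := Finset.prod_univ_sum (fun _ : E => (Finset.univ : Finset Ω)) (fun _ a => w a)
  simp only [hs, Finset.prod_const_one, Fintype.piFinset_univ] at this
  exact this.symm

lemma Ex_const (hs : ∑ a, w a = 1) (c : ℝ) : Ex w (fun _ : E → Ω => c) = c := by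
  rw [Ex, ← Finset.sum_mul, sum_weight hs, one_mul]

lemma Ex_add (f g : (E → Ω) → ℝ) : Ex w (fun x => f x + g x) = Ex w f + Ex w g := by
  simp [Ex, mul_add, Finset.sum_add_distrib]

lemma Ex_sub (f g : (E → Ω) → ℝ) : Ex w (fun x => f x - g x) = Ex w f - Ex w g := by
  simp [Ex, mul_sub, Finset.sum_sub_distrib]

lemma Ex_mul_left (c : ℝ) (f : (E → Ω) → ℝ) : Ex w (fun x => c * f x) = c * Ex w f := by
  simp only [Ex, Finset.mul_sum]
  exact Finset.sum_congr rfl fun x _ => by ring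

lemma Ex_mul_right (c : ℝ) (f : (E → Ω) → ℝ) : Ex w (fun x => f x * c) = Ex w f * c := by
  simp only [Ex, Finset.sum_mul]
  exact Finset.sum_congr rfl fun x _ => by ring

lemma Ex_sum {ι : Type} (s : Finset ι) (f : ι → (E → Ω) → ℝ) :
    Ex w (fun x => ∑ i ∈ s, f i x) = ∑ i ∈ s, Ex w (f i) := by
  simp only [Ex, Finset.mul_sum]
  exact Finset.sum_comm

lemma Ex_comm {E' : Type} [Fintype E'] (f : (E → Ω) → (E' → Ω) → ℝ) :
    Ex w (fun x => Ex w (fun y => f x y)) = Ex w (fun y => Ex w (fun x => f x y)) := by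
  simp only [Ex, Finset.mul_sum]
  rw [Finset.sum_comm]
  exact Finset.sum_congr rfl fun x _ => Finset.sum_congr rfl fun y _ => by ring

lemma Ex_le_of_le (hw : ∀ a, 0 ≤ w a) (hs : ∑ a, w a = 1) {f : (E → Ω) → ℝ} {c : ℝ}
    (h : ∀ x, f x ≤ c) : Ex w f ≤ c :=
  (Ex_mono hw h).trans (Ex_const hs c).le

lemma Pr_nonneg (hw : ∀ a, 0 ≤ w a) (A : (E → Ω) → Prop) : 0 ≤ Pr w A :=
  Ex_nonneg hw fun x => by split_ifs <;> norm_num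

lemma Pr_mono (hw : ∀ a, 0 ≤ w a) {A B : (E → Ω) → Prop} (h : ∀ x, A x → B x) :
    Pr w A ≤ Pr w B := by
  refine Ex_mono hw fun x => ?_
  by_cases hA : A x
  · simp [hA, h x hA]
  · simp only [hA, if_false]
    split_ifs <;> norm_num

lemma Pr_le_one (hw : ∀ a, 0 ≤ w a) (hs : ∑ a, w a = 1) (A : (E → Ω) → Prop) : Pr w A ≤ 1 :=
  Ex_le_of_le hw hs fun x => by split_ifs <;> norm_num

lemma Pr_or_le (hw : ∀ a, 0 ≤ w a) (A B : (E → Ω) → Prop) :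
    Pr w (fun x => A x ∨ B x) ≤ Pr w A + Pr w B := by
  rw [Pr, Pr, Pr, ← Ex_add]
  refine Ex_mono hw fun x => ?_
  by_cases hA : A x <;> by_cases hB : B x <;> simp [hA, hB]

lemma Pr_exists_le (hw : ∀ a, 0 ≤ w a) {ι : Type} (s : Finset ι) (A : ι → (E → Ω) → Prop) :
    Pr w (fun x => ∃ i ∈ s, A i x) ≤ ∑ i ∈ s, Pr w (A i) := by
  simp only [Pr]
  rw [← Ex_sum]
  refine Ex_mono hw fun x => ?_
  split_ifs with h
  · obtain ⟨i, hi, hA⟩ := h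
    calc (1 : ℝ) = if A i x then 1 else 0 := by simp [hA]
      _ ≤ _ := Finset.single_le_sum (f := fun i => if A i x then (1 : ℝ) else 0)
        (fun j _ => by split_ifs <;> norm_num) hi
  · exact Finset.sum_nonneg fun j _ => by split_ifs <;> norm_num

/-- Resampling the coordinates in `P` does not change the expectation. -/
lemma Ex_resample (hs : ∑ a, w a = 1) (P : E → Prop) (f : (E → Ω) → ℝ) :
    Ex w f = Ex w fun o => Ex w fun z => f (mix P o z) := by
  have key : ∑ q : (E → Ω) × (E → Ω), (∏ e, w (q.1 e)) * ((∏ e, w (q.2 e)) * f (mix P q.1 q.2))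
      = ∑ q : (E → Ω) × (E → Ω), (∏ e, w (q.1 e)) * ((∏ e, w (q.2 e)) * f q.1) := by
    -- `(o, z) ↦ (mix P o z, mix P z o)` is a weight-preserving involution
    let T : (E → Ω) × (E → Ω) → (E → Ω) × (E → Ω) := fun q => (mix P q.1 q.2, mix P q.2 q.1)
    have hT : Function.Involutive T := by
      rintro ⟨o, z⟩
      ext e <;> by_cases he : P e <;> simp [T, mix, he]
    rw [← (Equiv.sum_comp (Function.Involutive.toPerm T hT) fun q : (E → Ω) × (E → Ω) =>
      (∏ e, w (q.1 e)) * ((∏ e, w (q.2 e)) * f q.1))]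
    refine Finset.sum_congr rfl fun q _ => ?_
    have hq : Function.Involutive.toPerm T hT q = (mix P q.1 q.2, mix P q.2 q.1) := rfl
    rw [hq]
    simp only [← mul_assoc, ← Finset.prod_mul_distrib]
    congr 1
    refine Finset.prod_congr rfl fun e _ => ?_
    by_cases he : P e <;> simp [mix, he, mul_comm]
  rw [Fintype.sum_prod_type, Fintype.sum_prod_type] at key
  simp only [Ex, ← Finset.mul_sum, ← Finset.sum_mul, sum_weight hs, one_mul] at key ⊢
  exact key.symm

lemma Pr_resample (hs : ∑ a, w a = 1) (P : E → Prop) (A : (E → Ω) → Prop) :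
    Pr w A = Ex w fun o => Pr w fun z => A (mix P o z) :=
  Ex_resample hs P _

lemma Ex_sq_le (hw : ∀ a, 0 ≤ w a) (hs : ∑ a, w a = 1) (f : (E → Ω) → ℝ) :
    (Ex w f) ^ 2 ≤ Ex w fun x => f x ^ 2 := by
  have h : 0 ≤ Ex w fun x => (f x - Ex w f) ^ 2 := Ex_nonneg hw fun x => sq_nonneg _
  have h2 : (Ex w fun x => (f x - Ex w f) ^ 2) = (Ex w fun x => f x ^ 2) - (Ex w f) ^ 2 := by
    have : (fun x => (f x - Ex w f) ^ 2)
        = fun x => (f x ^ 2 - (2 * Ex w f) * f x) + (Ex w f) ^ 2 := by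
      funext x; ring
    rw [this, Ex_add, Ex_sub, Ex_mul_left, Ex_const hs]
    ring
  linarith

/-- Decoupling: the square of a probability is at most the probability that the event holds both
before and after resampling the coordinates in `P`. -/
lemma Pr_sq_le (hw : ∀ a, 0 ≤ w a) (hs : ∑ a, w a = 1) (P : E → Prop) (A : (E → Ω) → Prop) :
    (Pr w A) ^ 2 ≤ Ex w fun y => Pr w fun y' => A y ∧ A (mix P y y') := by
  have h1 : (Pr w A) ^ 2 ≤ Ex w fun o => (Pr w fun z => A (mix P o z)) ^ 2 := by
    rw [Pr_resample hs P A]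
    exact Ex_sq_le hw hs _
  refine h1.trans (le_of_eq ?_)
  have h2 : ∀ y, (Pr w fun y' => A y ∧ A (mix P y y'))
      = (if A y then 1 else 0) * Pr w fun y' => A (mix P y y') := by
    intro y
    by_cases hy : A y <;> simp [hy, Pr, Ex]
  simp only [h2]
  rw [Ex_resample hs P (fun y => (if A y then 1 else 0) * Pr w fun y' => A (mix P y y'))]
  congr 1
  funext o
  have h3 : ∀ z y', mix P (mix P o z) y' = mix P o y' := by
    intro z y'
    funext e
    by_cases he : P e <;> simp [mix, he]
  simp only [h3, Ex_mul_right]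
  rw [sq]
  rfl

end Expectation

/-! ### Characters and linear anticoncentration -/

section Characters

variable {p : ℕ} [Fact p.Prime]

/-- `1 - cos (2 π m t / p)`, the defect of the character `t ↦ e(m t / p)` from `1`. -/
def kap (m t : ZMod p) : ℝ := 1 - (ZMod.stdAddChar (m * t)).re

lemma norm_char (x : ZMod p) : ‖ZMod.stdAddChar x‖ = 1 := AddChar.norm_apply _ _

lemma char_sq (x : ZMod p) :
    (ZMod.stdAddChar x).re ^ 2 + (ZMod.stdAddChar x).im ^ 2 = 1 := by
  have h := Complex.sq_norm (ZMod.stdAddChar x)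
  rw [norm_char, Complex.normSq_apply] at h
  nlinarith

lemma kap_nonneg (m t : ZMod p) : 0 ≤ kap m t := by
  have := char_sq (m * t)
  unfold kap
  nlinarith [sq_nonneg (ZMod.stdAddChar (m * t)).im]

lemma kap_le (m t : ZMod p) : kap m t ≤ 2 := by
  have := char_sq (m * t)
  unfold kap
  nlinarith [sq_nonneg (ZMod.stdAddChar (m * t)).im]

lemma kap_zero (m : ZMod p) : kap m 0 = 0 := by simp [kap]

lemma kap_neg (m t : ZMod p) : kap m (-t) = kap m t := by
  simp [kap, AddChar.map_neg_eq_conj]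

lemma kap_add_le (m s t : ZMod p) : kap m (s + t) ≤ 2 * kap m s + 2 * kap m t := by
  have h1 := char_sq (m * s)
  have h2 := char_sq (m * t)
  unfold kap
  rw [mul_add, AddChar.map_add_eq_mul, Complex.mul_re]
  set a := (ZMod.stdAddChar (m * s)).re
  set a' := (ZMod.stdAddChar (m * s)).im
  set c := (ZMod.stdAddChar (m * t)).re
  set c' := (ZMod.stdAddChar (m * t)).im
  -- `2 (1 - Re z) = |1 - z|²`, and `|1 - z w| ≤ |1 - z| + |1 - w|`
  nlinarith [sq_nonneg (a + c - 2), sq_nonneg (a' - c'), sq_nonneg (a - c), sq_nonneg (a' + c')]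

lemma kap_sub_le (m s t : ZMod p) : kap m (s - t) ≤ 2 * kap m s + 2 * kap m t := by
  rw [sub_eq_add_neg, ← kap_neg m t]
  exact kap_add_le m s (-t)

/-- The law of a single random entry: a finitely supported random variable with values `val` in
`ZMod p`, whose characteristic function is bounded away from `1` like that of a lazy step `± m`
taken with probability `4 b`. -/
structure Law (p : ℕ) [Fact p.Prime] (Ω : Type) [Fintype Ω] (b : ℝ) where
  /-- the weights -/
  w : Ω → ℝ
  /-- the values -/
  val : Ω → ZMod p
  w_nonneg : ∀ a, 0 ≤ w a
  w_sum : ∑ a, w a = 1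
  /-- the step of the comparison walk -/
  m : ZMod p
  m_ne : m ≠ 0
  b_pos : 0 < b
  b_le : b ≤ 1 / 16
  char_le : ∀ t, ‖∑ a, (w a : ℂ) * ZMod.stdAddChar (t * val a)‖ ≤ 1 - 4 * b * kap m t

variable {Ω : Type} [Fintype Ω] {b : ℝ} (Λ : Law p Ω b)

/-- Modulus of the characteristic function of the law. -/
def phi (t : ZMod p) : ℝ := ‖∑ a, (Λ.w a : ℂ) * ZMod.stdAddChar (t * Λ.val a)‖

lemma phi_nonneg (t : ZMod p) : 0 ≤ phi Λ t := norm_nonneg _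

lemma phi_le (t : ZMod p) : phi Λ t ≤ 1 - 4 * b * kap Λ.m t := Λ.char_le t

lemma phi_le_one (t : ZMod p) : phi Λ t ≤ 1 := by
  have := phi_le Λ t
  have := mul_nonneg Λ.b_pos.le (kap_nonneg Λ.m t)
  nlinarith

/-- Two coordinates with coefficients `s` and `t` contract the characteristic function at least as
much as one lazy step along the difference `s - t`; this removes common shifts. -/
lemma phi_mul_phi_le (s t : ZMod p) : phi Λ s * phi Λ t ≤ 1 - b * kap Λ.m (s - t) := by
  have hs := phi_le Λ s
  have ht := phi_le Λ t
  have h0 := phi_nonneg Λ s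
  have h1 := phi_nonneg Λ t
  have h2 := kap_nonneg Λ.m s
  have h3 := kap_nonneg Λ.m t
  have h4 := kap_le Λ.m s
  have h5 := kap_le Λ.m t
  have h6 := kap_sub_le Λ.m s t
  have hb := Λ.b_pos
  have hb' := Λ.b_le
  have hx : 4 * b * kap Λ.m s ≤ 1 := by nlinarith
  have hy : 4 * b * kap Λ.m t ≤ 1 := by nlinarith
  have hx0 : 0 ≤ 4 * b * kap Λ.m s := by positivity
  have hy0 : 0 ≤ 4 * b * kap Λ.m t := by positivity
  have h7 : phi Λ s * phi Λ t ≤ (1 - 4 * b * kap Λ.m s) * (1 - 4 * b * kap Λ.m t) :=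
    mul_le_mul hs ht h1 (by linarith)
  have h8 : b * kap Λ.m (s - t) ≤ b * (2 * kap Λ.m s + 2 * kap Λ.m t) :=
    mul_le_mul_of_nonneg_left h6 hb.le
  nlinarith

variable {E : Type} [Fintype E]

/-- Fourier bound for the concentration probability of `∑ g e * x e`. -/
def rho (g : E → ZMod p) : ℝ := (∑ t : ZMod p, ∏ e, phi Λ (t * g e)) / p

lemma p_pos : (0 : ℝ) < p := by exact_mod_cast (Fact.out : p.Prime).pos

lemma rho_nonneg (g : E → ZMod p) : 0 ≤ rho Λ g :=
  div_nonneg (Finset.sum_nonneg fun _ _ => Finset.prod_nonneg fun _ _ => phi_nonneg Λ _)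
    (p_pos).le

lemma sum_char (x : ZMod p) :
    (∑ t : ZMod p, ZMod.stdAddChar (t * x)) = if x = 0 then (p : ℂ) else 0 := by
  rw [AddChar.sum_mulShift x (ZMod.isPrimitive_stdAddChar p), ZMod.card]
  split_ifs <;> simp

lemma char_sum {ι : Type} (s : Finset ι) (f : ι → ZMod p) :
    ZMod.stdAddChar (∑ i ∈ s, f i) = ∏ i ∈ s, ZMod.stdAddChar (f i) := by
  induction s using Finset.induction_on with
  | empty => simp
  | insert i s hi ih =>
    rw [Finset.sum_insert hi, Finset.prod_insert hi, AddChar.map_add_eq_mul, ih]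

/-- Fourier inversion: a linear form takes a given value with probability at most `rho`. -/
theorem Pr_linear_le (g : E → ZMod p) (c : ZMod p) :
    Pr Λ.w (fun z : E → Ω => ∑ e, g e * Λ.val (z e) + c = 0) ≤ rho Λ g := by
  have hp : (p : ℂ) ≠ 0 := by exact_mod_cast (Fact.out : p.Prime).ne_zero
  have key : (p : ℂ) * ((Pr Λ.w (fun z : E → Ω => ∑ e, g e * Λ.val (z e) + c = 0) : ℝ) : ℂ)
      = ∑ t : ZMod p, ZMod.stdAddChar (t * c) *
        ∏ e, ∑ a, (Λ.w a : ℂ) * ZMod.stdAddChar (t * g e * Λ.val a) := by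
    simp only [Finset.prod_univ_sum, Fintype.piFinset_univ, Finset.mul_sum]
    rw [Finset.sum_comm]
    simp only [Pr, Ex]
    push_cast
    rw [Finset.mul_sum]
    refine Finset.sum_congr rfl fun z _ => ?_
    have h1 : ∀ t : ZMod p, ZMod.stdAddChar (t * c) *
        ∏ e, ((Λ.w (z e) : ℂ) * ZMod.stdAddChar (t * g e * Λ.val (z e)))
        = (∏ e, (Λ.w (z e) : ℂ)) * ZMod.stdAddChar (t * (∑ e, g e * Λ.val (z e) + c)) := by
      intro t
      rw [Finset.prod_mul_distrib, mul_add, AddChar.map_add_eq_mul, Finset.mul_sum,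
        char_sum]
      simp only [mul_assoc]
      ring
    simp only [h1]
    rw [← Finset.mul_sum, sum_char]
    split_ifs <;> simp [mul_comm]
  have hn := congrArg norm key
  rw [norm_mul, Complex.norm_natCast, Complex.norm_real,
    Real.norm_of_nonneg (Pr_nonneg Λ.w_nonneg _)] at hn
  rw [rho, le_div_iff₀ p_pos, mul_comm, hn]
  refine (norm_sum_le _ _).trans (Finset.sum_le_sum fun t _ => ?_)
  rw [norm_mul, norm_char, one_mul, norm_prod]
  rfl

/-- Linear equations with disjointly supported coefficient vectors hold simultaneously with
probability at most the product of the individual bounds. -/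
theorem Pr_rows_const_le {R : Type} (s : Finset R) (g : R → E → ZMod p) (c : R → ZMod p)
    (hg : ∀ e i j, i ≠ j → g i e = 0 ∨ g j e = 0) :
    Pr Λ.w (fun z : E → Ω => ∀ i ∈ s, ∑ e, g i e * Λ.val (z e) + c i = 0)
      ≤ ∏ i ∈ s, rho Λ (g i) := by
  induction s using Finset.induction_on with
  | empty => simpa using Pr_le_one Λ.w_nonneg Λ.w_sum _
  | insert i s hi ih =>
    rw [Finset.prod_insert hi, Pr_resample Λ.w_sum (fun e => g i e ≠ 0)]
    have h1 : ∀ o z : E → Ω, ∑ e, g i e * Λ.val (mix (fun e => g i e ≠ 0) o z e)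
        = ∑ e, g i e * Λ.val (z e) := by
      intro o z
      refine Finset.sum_congr rfl fun e _ => ?_
      by_cases h : g i e = 0 <;> simp [mix, h]
    have h2 : ∀ o z : E → Ω, ∀ j ∈ s, ∑ e, g j e * Λ.val (mix (fun e => g i e ≠ 0) o z e)
        = ∑ e, g j e * Λ.val (o e) := by
      intro o z j hj
      refine Finset.sum_congr rfl fun e _ => ?_
      have hij : i ≠ j := by rintro rfl; exact hi hj
      rcases hg e i j hij with h | h <;> simp [mix, h]
    have h3 : ∀ o : E → Ω, (Pr Λ.w fun z : E → Ω => ∀ j ∈ insert i s,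
          ∑ e, g j e * Λ.val (mix (fun e => g i e ≠ 0) o z e) + c j = 0)
        ≤ rho Λ (g i) * if (∀ j ∈ s, ∑ e, g j e * Λ.val (o e) + c j = 0) then 1 else 0 := by
      intro o
      by_cases ho : ∀ j ∈ s, ∑ e, g j e * Λ.val (o e) + c j = 0
      · rw [if_pos ho, mul_one]
        refine (Pr_mono Λ.w_nonneg fun z hz => ?_).trans (Pr_linear_le Λ (g i) (c i))
        rw [← h1 o z]
        exact hz i (Finset.mem_insert_self _ _)
      · rw [if_neg ho, mul_zero]
        refine Ex_le_of_le Λ.w_nonneg Λ.w_sum fun z => ?_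
        rw [if_neg]
        intro hz
        refine ho fun j hj => ?_
        rw [← h2 o z j hj]
        exact hz j (Finset.mem_insert_of_mem hj)
    refine (Ex_mono Λ.w_nonneg h3).trans ?_
    rw [Ex_mul_left]
    refine mul_le_mul_of_nonneg_left (le_trans (le_of_eq ?_) ih) (rho_nonneg Λ _)
    unfold Pr
    congr!

/-- As `Pr_rows_const_le`, with constant terms that may depend on the coordinates not entering any
of the linear forms. -/
theorem Pr_rows_le {R : Type} (s : Finset R) (g : R → E → ZMod p) (c : R → (E → Ω) → ZMod p)
    (hg : ∀ e i j, i ≠ j → g i e = 0 ∨ g j e = 0) (P : E → Prop)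
    (hP : ∀ e i, g i e ≠ 0 → P e)
    (hc : ∀ i ∈ s, ∀ o z, c i (mix P o z) = c i o) :
    Pr Λ.w (fun z : E → Ω => ∀ i ∈ s, ∑ e, g i e * Λ.val (z e) + c i z = 0)
      ≤ ∏ i ∈ s, rho Λ (g i) := by
  rw [Pr_resample Λ.w_sum P]
  refine Ex_le_of_le Λ.w_nonneg Λ.w_sum fun o => ?_
  refine (Pr_mono Λ.w_nonneg fun z hz => ?_).trans (Pr_rows_const_le Λ s g (fun i => c i o) hg)
  intro i hi
  rw [← hz i hi, hc i hi]
  congr 1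
  refine Finset.sum_congr rfl fun e _ => ?_
  by_cases h : g i e = 0
  · simp [h]
  · simp [mix, hP e i h]

lemma sum_kap (m : ZMod p) (hm : m ≠ 0) {d : ZMod p} (hd : d ≠ 0) :
    ∑ t : ZMod p, kap m (t * d) = p := by
  have h := congrArg Complex.re (sum_char (p := p) (m * d))
  rw [if_neg (mul_ne_zero hm hd), Complex.re_sum] at h
  have h2 : ∀ t : ZMod p, kap m (t * d) = 1 - (ZMod.stdAddChar (t * (m * d))).re := by
    intro t; rw [kap]; congr 3; ring
  simp only [h2, Finset.sum_sub_distrib, h]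
  simp

lemma rho_le_of_ne_zero (g : E → ZMod p) {e₀ : E} (h : g e₀ ≠ 0) : rho Λ g ≤ 1 - b := by
  rw [rho, div_le_iff₀ p_pos]
  have hb := Λ.b_pos
  have h1 : ∀ t : ZMod p, ∏ e, phi Λ (t * g e) ≤ 1 - 4 * b * kap Λ.m (t * g e₀) := by
    intro t
    rw [← Finset.mul_prod_erase Finset.univ _ (Finset.mem_univ e₀)]
    refine (mul_le_of_le_one_right (phi_nonneg Λ _) ?_).trans (phi_le Λ _)
    exact Finset.prod_le_one (fun _ _ => phi_nonneg Λ _) (fun _ _ => phi_le_one Λ _)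
  refine (Finset.sum_le_sum fun t _ => h1 t).trans ?_
  rw [Finset.sum_sub_distrib, ← Finset.mul_sum, sum_kap _ Λ.m_ne h]
  simp
  have := p_pos (p := p)
  nlinarith

end Characters

/-! ### The comparison walk and its level sets -/

section Walk

variable {p : ℕ} [Fact p.Prime]

/-- `nu b L v` is the probability that the lazy symmetric random walk with steps `± d`, `d ∈ L`,
each taken with probability `b`, ends at `v`. -/
def nu (b : ℝ) : List (ZMod p) → ZMod p → ℝ
  | [], v => if v = 0 then 1 else 0
  | d :: L, v => (1 - b) * nu b L v + b / 2 * (nu b L (v + d) + nu b L (v - d))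

/-- The characteristic function of the walk `nu b L` at the frequency `m t`. -/
def wt (m : ZMod p) (b : ℝ) (L : List (ZMod p)) (t : ZMod p) : ℝ :=
  (L.map fun d => 1 - b * kap m (t * d)).prod

variable {b : ℝ} {m : ZMod p}

lemma nu_nonneg (h0 : 0 < b) (h1 : b ≤ 1 / 16) (L : List (ZMod p)) (v : ZMod p) :
    0 ≤ nu b L v := by
  induction L generalizing v with
  | nil => simp only [nu]; split_ifs <;> norm_num
  | cons d L ih =>
    simp only [nu]
    have := ih v
    have := ih (v + d)
    have := ih (v - d)
    have : 0 ≤ 1 - b := by linarith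
    positivity

lemma nu_sum (L : List (ZMod p)) : ∑ v, nu b L v = 1 := by
  induction L with
  | nil => simp [nu]
  | cons d L ih =>
    simp only [nu]
    rw [Finset.sum_add_distrib, ← Finset.mul_sum, ← Finset.mul_sum, Finset.sum_add_distrib, ih]
    have e1 : ∑ v, nu b L (v + d) = 1 := by
      rw [← ih]; exact Equiv.sum_comp (Equiv.addRight d) (nu b L)
    have e2 : ∑ v, nu b L (v - d) = 1 := by
      rw [← ih]; exact Equiv.sum_comp (Equiv.subRight d) (nu b L)
    rw [e1, e2]
    ring

lemma nu_fourier (hm : m ≠ 0) (L : List (ZMod p)) (v : ZMod p) :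
    p * nu b L v = ∑ t, wt m b L t * (1 - kap m (t * v)) := by
  induction L generalizing v with
  | nil =>
    simp only [nu, wt, List.map_nil, List.prod_nil, one_mul]
    by_cases hv : v = 0
    · simp [hv, kap_zero]
    · rw [Finset.sum_sub_distrib, sum_kap m hm hv]
      simp [hv]
  | cons d L ih =>
    have e : (p : ℝ) * nu b (d :: L) v = (1 - b) * (p * nu b L v)
        + b / 2 * (p * nu b L (v + d) + p * nu b L (v - d)) := by
      simp only [nu]; ring
    rw [e, ih, ih, ih, ← Finset.sum_add_distrib, Finset.mul_sum, Finset.mul_sum,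
      ← Finset.sum_add_distrib]
    refine Finset.sum_congr rfl fun t _ => ?_
    have hw : wt m b (d :: L) t = (1 - b * kap m (t * d)) * wt m b L t := by
      simp [wt]
    -- `cos (x + y) + cos (x - y) = 2 cos x cos y`
    have hc : (1 - kap m (t * (v + d))) + (1 - kap m (t * (v - d)))
        = 2 * (1 - kap m (t * v)) * (1 - kap m (t * d)) := by
      simp only [kap, mul_add, mul_sub, sub_eq_add_neg (m * (t * v)), AddChar.map_add_eq_mul,
        AddChar.map_neg_eq_conj, Complex.mul_re, Complex.conj_re, Complex.conj_im]
      ring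
    rw [hw]
    linear_combination (b / 2 * wt m b L t) * hc

lemma factor_nonneg (h0 : 0 < b) (h1 : b ≤ 1 / 16) (x : ZMod p) : 0 ≤ 1 - b * kap m x := by
  have := kap_le m x
  nlinarith

lemma factor_le_one (h0 : 0 < b) (x : ZMod p) : 1 - b * kap m x ≤ 1 := by
  have := mul_nonneg h0.le (kap_nonneg m x)
  linarith

lemma wt_nonneg (h0 : 0 < b) (h1 : b ≤ 1 / 16) (L : List (ZMod p)) (t : ZMod p) :
    0 ≤ wt m b L t := by
  refine List.prod_nonneg ?_
  intro x hx
  obtain ⟨d, -, rfl⟩ := List.mem_map.1 hx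
  exact factor_nonneg h0 h1 _

lemma nu_zero_eq (hm : m ≠ 0) (L : List (ZMod p)) : p * nu b L 0 = ∑ t, wt m b L t := by
  simp [nu_fourier hm, kap_zero]

lemma nu_zero_ge (hm : m ≠ 0) (h0 : 0 < b) (h1 : b ≤ 1 / 16) (L : List (ZMod p)) :
    1 / p ≤ nu b L 0 := by
  rw [div_le_iff₀ p_pos, mul_comm, nu_zero_eq hm]
  calc (1 : ℝ) = wt m b L 0 := by simp [wt, kap_zero]
    _ ≤ _ := Finset.single_le_sum (fun t _ => wt_nonneg h0 h1 L t) (Finset.mem_univ 0)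

lemma nu_sub_eq (hm : m ≠ 0) (L : List (ZMod p)) (v : ZMod p) :
    p * (nu b L 0 - nu b L v) = ∑ t, wt m b L t * kap m (t * v) := by
  rw [mul_sub, nu_zero_eq hm, nu_fourier hm, ← Finset.sum_sub_distrib]
  exact Finset.sum_congr rfl fun t _ => by ring

lemma nu_le_zero (hm : m ≠ 0) (h0 : 0 < b) (h1 : b ≤ 1 / 16) (L : List (ZMod p)) (v : ZMod p) :
    nu b L v ≤ nu b L 0 := by
  have h := nu_sub_eq (b := b) hm L v
  have h2 : 0 ≤ ∑ t, wt m b L t * kap m (t * v) :=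
    Finset.sum_nonneg fun t _ => mul_nonneg (wt_nonneg h0 h1 L t) (kap_nonneg _ _)
  rw [← h] at h2
  have := nonneg_of_mul_nonneg_right h2 p_pos
  linarith

/-- Near-maximality of the walk distribution is stable under addition. -/
lemma nu_triangle (hm : m ≠ 0) (h0 : 0 < b) (h1 : b ≤ 1 / 16) (L : List (ZMod p))
    (u v : ZMod p) :
    nu b L 0 - nu b L (u + v) ≤ 2 * (nu b L 0 - nu b L u) + 2 * (nu b L 0 - nu b L v) := by
  have hp := p_pos (p := p)
  refine le_of_mul_le_mul_left ?_ hp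
  have e : (p : ℝ) * (2 * (nu b L 0 - nu b L u) + 2 * (nu b L 0 - nu b L v))
      = 2 * (p * (nu b L 0 - nu b L u)) + 2 * (p * (nu b L 0 - nu b L v)) := by ring
  rw [e, nu_sub_eq hm, nu_sub_eq hm, nu_sub_eq hm, Finset.mul_sum, Finset.mul_sum,
    ← Finset.sum_add_distrib]
  refine Finset.sum_le_sum fun t _ => ?_
  have := mul_le_mul_of_nonneg_left (kap_add_le m (t * u) (t * v)) (wt_nonneg h0 h1 (m := m) L t)
  rw [mul_add t]
  linarith

lemma nu_neg (hm : m ≠ 0) (L : List (ZMod p)) (v : ZMod p) : nu b L (-v) = nu b L v := by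
  have hp := p_pos (p := p)
  refine mul_left_cancel₀ hp.ne' ?_
  rw [nu_fourier hm, nu_fourier hm]
  refine Finset.sum_congr rfl fun t _ => ?_
  rw [mul_neg, kap_neg]

lemma nu_cons_zero (hm : m ≠ 0) (d : ZMod p) (L : List (ZMod p)) :
    nu b (d :: L) 0 = (1 - b) * nu b L 0 + b * nu b L d := by
  simp only [nu, zero_add, zero_sub, nu_neg hm]
  ring

lemma nu_append_le (hm : m ≠ 0) (h0 : 0 < b) (h1 : b ≤ 1 / 16) (L' L : List (ZMod p)) :
    nu b (L' ++ L) 0 ≤ nu b L 0 := by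
  induction L' with
  | nil => simp
  | cons d L' ih =>
    rw [List.cons_append, nu_cons_zero hm]
    have := nu_le_zero hm h0 h1 (L' ++ L) d
    nlinarith

/-- The set of points where the walk distribution is within a factor `1 - η` of its maximum. -/
def lev (b η : ℝ) (L : List (ZMod p)) : Finset (ZMod p) :=
  Finset.univ.filter fun v => (1 - η) * nu b L 0 ≤ nu b L v

lemma lev_card_le (h0 : 0 < b) (h1 : b ≤ 1 / 16) (η : ℝ) (L : List (ZMod p)) :
    (lev b η L).card * ((1 - η) * nu b L 0) ≤ 1 := by
  have h := Finset.card_nsmul_le_sum (lev b η L) (nu b L) ((1 - η) * nu b L 0)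
    fun v hv => (Finset.mem_filter.1 hv).2
  have h2 := Finset.sum_le_sum_of_subset_of_nonneg (Finset.subset_univ (lev b η L))
    fun v _ _ => nu_nonneg h0 h1 L v
  rw [nu_sum] at h2
  rw [nsmul_eq_mul] at h
  exact h.trans h2

open Pointwise in
/-- By Cauchy–Davenport the level set is at most about half as large as the trivial bound allows,
unless the walk is almost uniformly distributed. -/
lemma lev_card_le' (hm : m ≠ 0) (h0 : 0 < b) (h1 : b ≤ 1 / 16) {η : ℝ} (hη0 : 0 ≤ η)
    (hη : η ≤ 1 / 16) (L : List (ZMod p)) (hL : 2 / p < nu b L 0) :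
    (2 * (lev b η L).card - 1 : ℝ) * ((1 - 4 * η) * nu b L 0) ≤ 1 := by
  have hp := p_pos (p := p)
  have hpos : 0 < nu b L 0 := lt_trans (by positivity) hL
  have hne : (lev b η L).Nonempty := ⟨0, by
    simp only [lev, Finset.mem_filter, Finset.mem_univ, true_and]
    nlinarith⟩
  have hcd := ZMod.cauchy_davenport (Fact.out : p.Prime) hne hne
  have hsub : lev b η L + lev b η L ⊆ lev b (4 * η) L := by
    intro x hx
    obtain ⟨u, hu, v, hv, rfl⟩ := Finset.mem_add.1 hx
    simp only [lev, Finset.mem_filter, Finset.mem_univ, true_and] at hu hv ⊢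
    have := nu_triangle hm h0 h1 L u v
    nlinarith
  have h4 := lev_card_le h0 h1 (4 * η) L
  have hlt : (lev b (4 * η) L).card < p := by
    by_contra hcon
    push Not at hcon
    have hcon' : (p : ℝ) ≤ (lev b (4 * η) L).card := by exact_mod_cast hcon
    rw [div_lt_iff₀ hp] at hL
    have : (p : ℝ) * ((1 - 4 * η) * nu b L 0) ≤ 1 :=
      (mul_le_mul_of_nonneg_right hcon' (mul_nonneg (by linarith) hpos.le)).trans h4
    nlinarith
  have h5 : (lev b η L).card + (lev b η L).card - 1 ≤ (lev b (4 * η) L).card := by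
    have := hcd.trans (Finset.card_le_card hsub)
    omega
  have h6 : 0 < (lev b η L).card := hne.card_pos
  have h7 : (2 * (lev b η L).card - 1 : ℝ) ≤ (lev b (4 * η) L).card := by
    have : 2 * (lev b η L).card ≤ (lev b (4 * η) L).card + 1 := by omega
    have : (2 * (lev b η L).card : ℝ) ≤ (lev b (4 * η) L).card + 1 := by exact_mod_cast this
    linarith
  exact (mul_le_mul_of_nonneg_right h7 (mul_nonneg (by linarith) hpos.le)).trans h4

end Walk

/-! ### Pairings of coordinates and the greedy construction -/

section Greedy

variable {p : ℕ} [Fact p.Prime] {V : Type}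

/-- The indices used by a list of pairs. -/
def idx (L : List (V × V)) : List V := L.flatMap fun q => [q.1, q.2]

/-- The differences of `u` along a list of pairs. -/
def diffs (u : V → ZMod p) (L : List (V × V)) : List (ZMod p) := L.map fun q => u q.1 - u q.2

lemma idx_cons (q : V × V) (L : List (V × V)) : idx (q :: L) = q.1 :: q.2 :: idx L := by
  simp [idx]

lemma idx_append (L L' : List (V × V)) : idx (L ++ L') = idx L ++ idx L' := by
  simp [idx]

lemma idx_length (L : List (V × V)) : (idx L).length = 2 * L.length := by
  induction L with
  | nil => simp [idx]
  | cons q L ih => simp [idx_cons, ih]; ring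

lemma mem_idx {L : List (V × V)} {q : V × V} (h : q ∈ L) : q.1 ∈ idx L ∧ q.2 ∈ idx L := by
  simp only [idx, List.mem_flatMap]
  exact ⟨⟨q, h, by simp⟩, ⟨q, h, by simp⟩⟩

variable {Ω : Type} [Fintype Ω] {b : ℝ} (Λ : Law p Ω b) {E : Type} [Fintype E]

lemma phi_neg (t : ZMod p) : phi Λ (-t) = phi Λ t := by
  unfold phi
  rw [← Complex.norm_conj, map_sum]
  congr 1
  refine Finset.sum_congr rfl fun a _ => ?_
  rw [map_mul, Complex.conj_ofReal, neg_mul, AddChar.map_neg_eq_conj, Complex.conj_conj]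

/-- Pairing up coordinates bounds the Fourier concentration bound by the return probability of the
walk along the differences of the coefficients. The common shift `c` drops out. -/
lemma rho_le_nu (g : E → ZMod p) (f : V → E) (u : V → ZMod p) (c γ : ZMod p) (hγ : γ ≠ 0)
    (L : List (V × V)) (hL : (idx L).Nodup) (hf : ∀ i ∈ idx L, ∀ j ∈ idx L, f i = f j → i = j)
    (hg : ∀ j ∈ idx L, g (f j) = γ * (u j - c) ∨ g (f j) = -(γ * (u j - c))) :
    rho Λ g ≤ nu b (diffs u L) 0 := by
  have h1 : ∀ t : ZMod p, ∏ e, phi Λ (t * g e) ≤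
      ((idx L).map fun j => phi Λ (t * g (f j))).prod := by
    intro t
    have hnd : ((idx L).map f).Nodup := List.Nodup.map_on (fun i hi j hj h => hf i hi j hj h) hL
    have h2 := List.prod_toFinset (fun e => phi Λ (t * g e)) hnd
    rw [List.map_map] at h2
    have h3 : ((idx L).map fun j => phi Λ (t * g (f j)))
        = (idx L).map ((fun e => phi Λ (t * g e)) ∘ f) := rfl
    rw [h3, ← h2]
    rw [← Finset.prod_mul_prod_compl ((idx L).map f).toFinset]
    exact mul_le_of_le_one_right (Finset.prod_nonneg fun _ _ => phi_nonneg Λ _)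
      (Finset.prod_le_one (fun _ _ => phi_nonneg Λ _) fun _ _ => phi_le_one Λ _)
  have h2 : ∀ t : ZMod p, ((idx L).map fun j => phi Λ (t * g (f j))).prod
      ≤ wt Λ.m b (diffs u L) (t * γ) := by
    intro t
    have h3 : ((idx L).map fun j => phi Λ (t * g (f j)))
        = (idx L).map fun j => phi Λ (t * γ * (u j - c)) := by
      refine List.map_congr_left fun j hj => ?_
      rcases hg j hj with h | h
      · rw [h, mul_assoc]
      · rw [h, mul_neg, phi_neg, mul_assoc]
    rw [h3]
    clear h3 hg hf hL h1
    induction L with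
    | nil => simp [idx, wt, diffs]
    | cons q L ih =>
      have e : wt Λ.m b (diffs u (q :: L)) (t * γ)
          = (1 - b * kap Λ.m (t * γ * (u q.1 - u q.2))) * wt Λ.m b (diffs u L) (t * γ) := by
        simp [wt, diffs]
      rw [idx_cons, List.map_cons, List.map_cons, List.prod_cons, List.prod_cons, ← mul_assoc, e]
      have h4 := phi_mul_phi_le Λ (t * γ * (u q.1 - c)) (t * γ * (u q.2 - c))
      have h5 : t * γ * (u q.1 - c) - t * γ * (u q.2 - c) = t * γ * (u q.1 - u q.2) := by ring
      rw [h5] at h4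
      refine mul_le_mul h4 ih ?_ (factor_nonneg Λ.b_pos Λ.b_le _)
      refine List.prod_nonneg ?_
      intro x hx
      obtain ⟨d, -, rfl⟩ := List.mem_map.1 hx
      exact phi_nonneg Λ _
  rw [rho, div_le_iff₀ p_pos, mul_comm, nu_zero_eq Λ.m_ne]
  calc _ ≤ ∑ t : ZMod p, wt Λ.m b (diffs u L) (t * γ) :=
        Finset.sum_le_sum fun t _ => (h1 t).trans (h2 t)
    _ = _ := Equiv.sum_comp (Equiv.mulRight₀ γ hγ) (wt Λ.m b (diffs u L))

/-- `u` is unstructured on `T` if some pairing inside `T` has an almost uniform walk. -/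
def Unstr (b : ℝ) (T : Finset V) (u : V → ZMod p) : Prop :=
  ∃ L : List (V × V), (idx L).Nodup ∧ (∀ j ∈ idx L, j ∈ T) ∧ nu b (diffs u L) 0 ≤ 2 / p

/-- Starting from a pairing `L0`, pairs inside `T` can be added until all unused coordinates in `T`
differ by elements of the level set of the resulting walk. Each added pair lowers the return
probability by a factor `1 - b η`, so fewer than `s` pairs are added. -/
lemma greedy {b η : ℝ} {m : ZMod p} (hm : m ≠ 0) (h0 : 0 < b) (h1 : b ≤ 1 / 16) (hη : 0 ≤ η)
    (hη1 : η ≤ 1) (u : V → ZMod p) (T : Finset V) (L0 : List (V × V)) (hL0 : (idx L0).Nodup)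
    (s : ℕ) (hs : (1 - b * η) ^ s < 1 / p) :
    ∃ L2 : List (V × V), (∀ j ∈ idx L2, j ∈ T) ∧ (idx (L2 ++ L0)).Nodup ∧ L2.length < s ∧
      ∀ j ∈ T, ∀ j' ∈ T, j ∉ idx (L2 ++ L0) → j' ∉ idx (L2 ++ L0) →
        u j - u j' ∈ lev b η (diffs u (L2 ++ L0)) := by
  have hnn : ∀ L, 0 < nu b L (0 : ZMod p) := fun L =>
    lt_of_lt_of_le (by have := p_pos (p := p); positivity) (nu_zero_ge hm h0 h1 L)
  have hle1 : nu b (diffs u L0) 0 ≤ 1 := by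
    have := nu_append_le hm h0 h1 (diffs u L0) []
    simpa [nu] using this
  have hf0 : 0 ≤ 1 - b * η := by nlinarith
  have key : ∀ k : ℕ, (∃ L2 : List (V × V), (∀ j ∈ idx L2, j ∈ T) ∧ (idx (L2 ++ L0)).Nodup ∧
        L2.length < k ∧ ∀ j ∈ T, ∀ j' ∈ T, j ∉ idx (L2 ++ L0) → j' ∉ idx (L2 ++ L0) →
        u j - u j' ∈ lev b η (diffs u (L2 ++ L0))) ∨
      (∃ L2 : List (V × V), (∀ j ∈ idx L2, j ∈ T) ∧ (idx (L2 ++ L0)).Nodup ∧ L2.length = k ∧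
        nu b (diffs u (L2 ++ L0)) 0 ≤ (1 - b * η) ^ k) := by
    intro k
    induction k with
    | zero => exact Or.inr ⟨[], by simp [idx], by simpa using hL0, rfl, by simpa using hle1⟩
    | succ k ih =>
      rcases ih with ⟨L2, h2, h3, h4, h5⟩ | ⟨L2, h2, h3, h4, h5⟩
      · exact Or.inl ⟨L2, h2, h3, by omega, h5⟩
      · by_cases hterm : ∀ j ∈ T, ∀ j' ∈ T, j ∉ idx (L2 ++ L0) → j' ∉ idx (L2 ++ L0) →
            u j - u j' ∈ lev b η (diffs u (L2 ++ L0))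
        · exact Or.inl ⟨L2, h2, h3, by omega, hterm⟩
        · push Not at hterm
          obtain ⟨j, hj, j', hj', hn, hn', hlev⟩ := hterm
          have hlt : nu b (diffs u (L2 ++ L0)) (u j - u j')
              < (1 - η) * nu b (diffs u (L2 ++ L0)) 0 := by
            simpa [lev] using hlev
          have hne : j ≠ j' := by
            rintro rfl
            have := hnn (diffs u (L2 ++ L0))
            rw [sub_self] at hlt
            nlinarith
          refine Or.inr ⟨(j, j') :: L2, ?_, ?_, by simp [h4], ?_⟩
          · intro i hi
            rw [idx_cons] at hi
            simp only [List.mem_cons] at hi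
            rcases hi with rfl | rfl | hi
            · exact hj
            · exact hj'
            · exact h2 i hi
          · rw [List.cons_append, idx_cons, List.nodup_cons, List.nodup_cons]
            refine ⟨?_, hn', h3⟩
            simp only [List.mem_cons, not_or]
            exact ⟨hne, hn⟩
          · have e : diffs u ((j, j') :: L2 ++ L0) = (u j - u j') :: diffs u (L2 ++ L0) := by
              simp [diffs]
            rw [e, nu_cons_zero hm, pow_succ]
            nlinarith
  rcases key s with h | ⟨L2, -, -, -, h⟩
  · exact h
  · exfalso
    have := nu_zero_ge hm h0 h1 (diffs u (L2 ++ L0))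
    linarith

/-- Anticoncentration of a random linear form with unstructured coefficient vector. -/
lemma Pr_unstr_le (T : Finset V) (u δ : V → ZMod p) (γ : ZMod p) (hγ : γ ≠ 0)
    (hδ : ∀ j ∈ T, δ j = 1 ∨ δ j = -1) (ι : V → E) (hι : Function.Injective ι)
    (hu : Unstr b T u) (C : ZMod p) :
    Pr Λ.w (fun y : E → Ω => ∑ j ∈ T, γ * u j * δ j * Λ.val (y (ι j)) + C = 0) ≤ 2 / p := by
  obtain ⟨L, hnd, hT, hnu⟩ := hu
  let g : E → ZMod p := fun e => ∑ j ∈ T.filter (fun j => ι j = e), γ * u j * δ j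
  have hgι : ∀ j ∈ T, g (ι j) = γ * u j * δ j := by
    intro j hj
    have : T.filter (fun i => ι i = ι j) = {j} := by
      ext i
      simp only [Finset.mem_filter, Finset.mem_singleton]
      exact ⟨fun h => hι h.2, by rintro rfl; exact ⟨hj, rfl⟩⟩
    simp only [g]
    rw [this, Finset.sum_singleton]
  have hsum : ∀ y : E → Ω, ∑ j ∈ T, γ * u j * δ j * Λ.val (y (ι j)) = ∑ e, g e * Λ.val (y e) := by
    intro y
    rw [← Finset.sum_fiberwise T ι]
    refine Finset.sum_congr rfl fun e _ => ?_
    rw [Finset.sum_mul]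
    refine Finset.sum_congr rfl fun j hj => ?_
    rw [(Finset.mem_filter.1 hj).2]
  simp only [hsum]
  refine (Pr_linear_le Λ g C).trans ((rho_le_nu Λ g ι u 0 γ hγ L hnd (fun i _ j _ h => hι h)
    fun j hj => ?_).trans hnu)
  rw [hgι j (hT j hj)]
  rcases hδ j (hT j hj) with h | h <;> simp [h]

end Greedy

/-! ### Random matrix ensembles and structured preimages -/

section Ensemble

variable {p : ℕ} [Fact p.Prime] {Ω : Type} [Fintype Ω] {b : ℝ}

/-- A random (skew-)symmetric matrix over `ZMod p` whose off-diagonal entries are, up to sign, the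
independent variables attached to the unordered pairs `ed i j`. The diagonal is either deterministic
(`θ = 0`) or, as for a Laplacian, the deterministic `κ i` minus the sum of the off-diagonal entries
of the row (`θ = 1`). -/
structure Ens (Λ : Law p Ω b) (V : Type) [Fintype V] (E : Type) where
  /-- the variable attached to a pair -/
  ed : V → V → E
  ed_symm : ∀ i j, ed i j = ed j i
  ed_inj : ∀ i j k l, i ≠ j → k ≠ l → ed i j = ed k l → (i = k ∧ j = l) ∨ (i = l ∧ j = k)
  /-- the signs -/
  sgn : V → V → ZMod p
  sgn_eq : ∀ i j, sgn i j = 1 ∨ sgn i j = -1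
  /-- the type of diagonal -/
  θ : ZMod p
  θ_eq : θ = 0 ∨ θ = 1
  /-- the deterministic part of the diagonal -/
  κ : V → ZMod p
  /-- the matrix -/
  N : (E → Ω) → Matrix V V (ZMod p)
  mulVec_eq : ∀ z u i, (N z *ᵥ u) i =
    ∑ j ∈ Finset.univ.erase i, Λ.val (z (ed i j)) * sgn i j * (u j - θ * u i) + κ i * u i
  /-- `1` for symmetric and `-1` for skew-symmetric matrices -/
  σ : ZMod p
  σ_eq : σ = 1 ∨ σ = -1
  transpose_eq : ∀ z, (N z)ᵀ = σ • N z

variable {Λ : Law p Ω b} {V : Type} [Fintype V] {E : Type} [Fintype E]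

/-- The rows outside `U`, restricted to the columns in `U`, are independent, and each equation has
small probability. -/
lemma row_prob (S : Ens Λ V E) (u v : V → ZMod p) (U : Finset V) (L : List (V × V))
    (hnd : (idx L).Nodup) (hU : ∀ j ∈ idx L, j ∈ U)
    (hne : ∀ i ∉ U, ∃ j ∈ U, u j ≠ S.θ * u i) :
    Pr Λ.w (fun z : E → Ω => S.N z *ᵥ u = v) ≤ (min (nu b (diffs u L) 0) (1 - b)) ^ Uᶜ.card := by
  let g : V → E → ZMod p := fun i e => if i ∈ U then 0 else
    ∑ j ∈ U.filter (fun j => S.ed i j = e), S.sgn i j * (u j - S.θ * u i)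
  let P : E → Prop := fun e => ∃ i j, i ∉ U ∧ j ∈ U ∧ S.ed i j = e
  let c : V → (E → Ω) → ZMod p := fun i z =>
    ∑ j ∈ (Finset.univ.erase i).filter (fun j => j ∉ U),
      Λ.val (z (S.ed i j)) * S.sgn i j * (u j - S.θ * u i) + S.κ i * u i - v i
  have hgne : ∀ i e, g i e ≠ 0 → i ∉ U ∧ ∃ j ∈ U, S.ed i j = e := by
    intro i e h
    by_cases hi : i ∈ U
    · simp [g, hi] at h
    refine ⟨hi, ?_⟩
    by_contra hcon
    push Not at hcon
    apply h
    simp only [g, if_neg hi]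
    rw [Finset.filter_eq_empty_iff.2 fun j hj => hcon j hj, Finset.sum_empty]
  have hgval : ∀ i ∉ U, ∀ j ∈ U, g i (S.ed i j) = S.sgn i j * (u j - S.θ * u i) := by
    intro i hi j hj
    have hij : i ≠ j := by rintro rfl; exact hi hj
    have : U.filter (fun k => S.ed i k = S.ed i j) = {j} := by
      ext k
      simp only [Finset.mem_filter, Finset.mem_singleton]
      refine ⟨fun h => ?_, by rintro rfl; exact ⟨hj, rfl⟩⟩
      have hik : i ≠ k := by rintro rfl; exact hi h.1
      rcases S.ed_inj _ _ _ _ hik hij h.2 with h' | h'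
      · exact h'.2
      · exact absurd h'.1 hij
    simp only [g, if_neg hi]
    rw [this, Finset.sum_singleton]
  have hdisj : ∀ e i j, i ≠ j → g i e = 0 ∨ g j e = 0 := by
    intro e i j hij
    by_contra hcon
    push Not at hcon
    obtain ⟨hi, k, hk, h1⟩ := hgne i e hcon.1
    obtain ⟨hj, l, hl, h2⟩ := hgne j e hcon.2
    have hik : i ≠ k := by rintro rfl; exact hi hk
    have hjl : j ≠ l := by rintro rfl; exact hj hl
    rcases S.ed_inj _ _ _ _ hik hjl (h1.trans h2.symm) with h | h
    · exact hij h.1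
    · exact hi (h.1 ▸ hl)
  have hP : ∀ e i, g i e ≠ 0 → P e := by
    intro e i h
    obtain ⟨hi, j, hj, h1⟩ := hgne i e h
    exact ⟨i, j, hi, hj, h1⟩
  have hc : ∀ i ∈ Uᶜ, ∀ o z, c i (mix P o z) = c i o := by
    intro i hi o z
    have hi := Finset.mem_compl.1 hi
    simp only [c]
    congr 2
    refine Finset.sum_congr rfl fun j hj => ?_
    simp only [Finset.mem_filter, Finset.mem_erase] at hj
    have : ¬ P (S.ed i j) := by
      rintro ⟨k, l, hk, hl, h⟩
      have hkl : k ≠ l := by rintro rfl; exact hk hl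
      rcases S.ed_inj _ _ _ _ hkl hj.1.1.symm h with h | h
      · exact hj.2 (h.2 ▸ hl)
      · exact hi (h.2 ▸ hl)
    simp [mix, this]
  have hsum : ∀ i ∉ U, ∀ z : E → Ω, ∑ e, g i e * Λ.val (z e) =
      ∑ j ∈ U, Λ.val (z (S.ed i j)) * S.sgn i j * (u j - S.θ * u i) := by
    intro i hi z
    rw [← Finset.sum_fiberwise U (S.ed i)]
    refine Finset.sum_congr rfl fun e _ => ?_
    simp only [g, if_neg hi]
    rw [Finset.sum_mul]
    refine Finset.sum_congr rfl fun j hj => ?_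
    rw [(Finset.mem_filter.1 hj).2]
    ring
  have h := Pr_rows_le Λ Uᶜ g c hdisj P hP hc
  refine le_trans (Pr_mono Λ.w_nonneg ?_) (h.trans ?_)
  · intro z hz i hi
    have hi := Finset.mem_compl.1 hi
    rw [hsum i hi]
    have h1 := S.mulVec_eq z u i
    rw [hz] at h1
    have h2 : (Finset.univ.erase i).filter (fun j => j ∈ U) = U := by
      ext j
      simp only [Finset.mem_filter, Finset.mem_erase, Finset.mem_univ, and_true]
      exact ⟨fun h => h.2, fun h => ⟨by rintro rfl; exact hi h, h⟩⟩
    have h3 := Finset.sum_filter_add_sum_filter_not (Finset.univ.erase i) (fun j => j ∈ U)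
      (fun j => Λ.val (z (S.ed i j)) * S.sgn i j * (u j - S.θ * u i))
    rw [h2] at h3
    simp only [c]
    linear_combination h3 - h1
  · rw [← Finset.prod_const]
    refine Finset.prod_le_prod (fun i _ => rho_nonneg Λ _) fun i hi => ?_
    have hi := Finset.mem_compl.1 hi
    refine le_min ?_ ?_
    · refine rho_le_nu Λ (g i) (S.ed i) u (S.θ * u i) 1 one_ne_zero L hnd ?_ ?_
      · intro j hj k hk h
        have hij : i ≠ j := by rintro rfl; exact hi (hU _ hj)
        have hik : i ≠ k := by rintro rfl; exact hi (hU _ hk)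
        rcases S.ed_inj _ _ _ _ hij hik h with h' | h'
        · exact h'.2
        · exact absurd h'.1 hik
      · intro j hj
        rw [hgval i hi j (hU j hj)]
        rcases S.sgn_eq i j with h | h <;> simp [h]
    · obtain ⟨j, hj, hjne⟩ := hne i hi
      refine rho_le_of_ne_zero Λ (g i) (e₀ := S.ed i j) ?_
      rw [hgval i hi j hj]
      refine mul_ne_zero ?_ (sub_ne_zero.2 hjne)
      rcases S.sgn_eq i j with h | h <;> simp [h]

end Ensemble

/-! ### Counting structured vectors -/

section Bad

variable {p : ℕ} [Fact p.Prime] {Ω : Type} [Fintype Ω] {b : ℝ}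
  {Λ : Law p Ω b} {V : Type} [Fintype V] {E : Type} [Fintype E]

/-- Padding of a list to a tuple of length `s`. -/
def enc {α : Type} (s : ℕ) (l : List α) : Fin s → Option α := fun i => l[(i : ℕ)]?

lemma enc_inj {α : Type} {s : ℕ} {l l' : List α} (hl : l.length < s) (hl' : l'.length < s)
    (h : enc s l = enc s l') : l = l' := by
  refine List.ext_getElem? fun i => ?_
  by_cases hi : i < s
  · exact congrFun h ⟨i, hi⟩
  · rw [List.getElem?_eq_none (by omega), List.getElem?_eq_none (by omega)]

/-- A list of pairs together with the values of `u` at the indices. -/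
def tag (u : V → ZMod p) (L : List (V × V)) : List ((V × ZMod p) × (V × ZMod p)) :=
  L.map fun q => ((q.1, u q.1), (q.2, u q.2))

lemma tag_inj {u u' : V → ZMod p} {L L' : List (V × V)} (h : tag u L = tag u' L') :
    L = L' ∧ ∀ j ∈ idx L, u j = u' j := by
  have h1 : L = L' := by
    have := congrArg (List.map fun q : (V × ZMod p) × (V × ZMod p) => (q.1.1, q.2.1)) h
    simpa [tag, Function.comp_def] using this
  subst h1
  refine ⟨rfl, fun j hj => ?_⟩
  have h2 := List.map_inj_left.1 h
  simp only [idx, List.mem_flatMap, List.mem_cons, List.not_mem_nil, or_false] at hj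
  obtain ⟨q, hq, hj⟩ := hj
  have h3 := h2 q hq
  simp only [Prod.mk.injEq, true_and] at h3
  rcases hj with rfl | rfl
  · exact h3.1
  · exact h3.2

/-- Certificates for structured vectors: two tagged pairings, two reference values and two tagged
witnesses of nondegeneracy. -/
abbrev Cert (p : ℕ) (V : Type) (s : ℕ) : Type :=
  ((Fin s → Option ((V × ZMod p) × (V × ZMod p))) ×
    (Fin s → Option ((V × ZMod p) × (V × ZMod p)))) ×
  (ZMod p × ZMod p) × ((V × ZMod p) × (V × ZMod p))

lemma cert_card (s : ℕ) : Fintype.card (Cert p V s) =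
    ((((Fintype.card V * p) * (Fintype.card V * p) + 1) ^ s)
      * (((Fintype.card V * p) * (Fintype.card V * p) + 1) ^ s)) *
    ((p * p) * ((Fintype.card V * p) * (Fintype.card V * p))) := by
  simp [Cert, ZMod.card]

/-- The data attached to a structured vector `u`: a greedy pairing `L1` inside `T`, its greedy extension
by `L2` to all coordinates, and reference values `a1`, `a2` such that the remaining coordinates differ
from them by elements of the level sets of the two walks. The values at `j0` and `j1` ensure that no
row sees only vanishing coefficients `u j - θ * u i`. -/
structure Data (b η : ℝ) (θ : ZMod p) (T : Finset V) (s : ℕ) (u : V → ZMod p) where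
  L1 : List (V × V)
  L2 : List (V × V)
  a1 : ZMod p
  a2 : ZMod p
  j0 : V
  j1 : V
  nodup : (idx (L2 ++ L1)).Nodup
  len1 : L1.length < s
  len2 : L2.length < s
  lev1 : ∀ j ∈ T, j ∉ idx L1 → u j - a1 ∈ lev b η (diffs u L1)
  lev2 : ∀ j, j ∉ idx (L2 ++ L1) → u j - a2 ∈ lev b η (diffs u (L2 ++ L1))
  big : 2 / p < nu b (diffs u L1) 0
  nondeg : ∀ i, u j0 ≠ θ * u i ∨ u j1 ≠ θ * u i

lemma exists_ref (W : Finset V) (u : V → ZMod p) (A : Finset (ZMod p))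
    (h : ∀ j ∈ W, ∀ j' ∈ W, u j - u j' ∈ A) : ∃ a, ∀ j ∈ W, u j - a ∈ A := by
  rcases W.eq_empty_or_nonempty with rfl | ⟨k, hk⟩
  · exact ⟨0, by simp⟩
  · exact ⟨u k, fun j hj => h j hj k hk⟩

/-- A structured nonzero preimage has data. Hypothesis `hc` excludes constant vectors in the Laplacian
case. -/
lemma exists_data (S : Ens Λ V E) {η : ℝ} (hη : 0 ≤ η) (hη1 : η ≤ 1) (T : Finset V) {s : ℕ}
    (hs : (1 - b * η) ^ s < 1 / p) (v : V → ZMod p)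
    (hc : S.θ = 1 → ∀ c : ZMod p, c ≠ 0 → ∃ i, S.κ i * c ≠ v i)
    {u : V → ZMod p} (hu : u ≠ 0) (hT : ¬ Unstr b T u) {z : E → Ω} (hz : S.N z *ᵥ u = v) :
    Nonempty (Data b η S.θ T s u) := by
  have hm := Λ.m_ne
  have h0 := Λ.b_pos
  have h1 := Λ.b_le
  obtain ⟨L1, hL1T, hL1n, hL1s, hL1⟩ := greedy hm h0 h1 hη hη1 u T [] (by simp [idx]) s hs
  simp only [List.append_nil] at hL1n hL1
  obtain ⟨L2, -, hL2n, hL2s, hL2⟩ := greedy hm h0 h1 hη hη1 u Finset.univ L1 hL1n s hs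
  obtain ⟨a1, ha1⟩ := exists_ref (T.filter fun j => j ∉ idx L1) u _ (fun j hj j' hj' =>
    hL1 j (Finset.mem_filter.1 hj).1 j' (Finset.mem_filter.1 hj').1
      (Finset.mem_filter.1 hj).2 (Finset.mem_filter.1 hj').2)
  obtain ⟨a2, ha2⟩ := exists_ref (Finset.univ.filter fun j => j ∉ idx (L2 ++ L1)) u _
    (fun j hj j' hj' => hL2 j (Finset.mem_univ _) j' (Finset.mem_univ _)
      (Finset.mem_filter.1 hj).2 (Finset.mem_filter.1 hj').2)
  have hbig : 2 / p < nu b (diffs u L1) 0 := by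
    by_contra hcon
    exact hT ⟨L1, hL1n, hL1T, not_lt.1 hcon⟩
  obtain ⟨k, hk⟩ := Function.ne_iff.1 hu
  have hnd : ∃ j0 j1, ∀ i, u j0 ≠ S.θ * u i ∨ u j1 ≠ S.θ * u i := by
    rcases S.θ_eq with h | h
    · exact ⟨k, k, fun i => Or.inl (by simpa [h] using hk)⟩
    · by_cases hconst : ∀ j, u j = u k
      · -- a constant vector is mapped to a multiple of `κ`
        exfalso
        obtain ⟨i, hi⟩ := hc h (u k) hk
        apply hi
        have h2 := S.mulVec_eq z u i
        rw [hz, h, Finset.sum_eq_zero, zero_add, hconst i] at h2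
        · exact h2.symm
        · intro j _
          rw [hconst j, hconst i]
          ring
      · push Not at hconst
        obtain ⟨j, hj⟩ := hconst
        refine ⟨j, k, fun i => ?_⟩
        rw [h, one_mul]
        by_contra hcon
        push Not at hcon
        exact hj (hcon.1.trans hcon.2.symm)
  obtain ⟨j0, j1, hj⟩ := hnd
  exact ⟨⟨L1, L2, a1, a2, j0, j1, hL2n, hL1s, hL2s,
    fun j hj hj' => ha1 j (Finset.mem_filter.2 ⟨hj, hj'⟩),
    fun j hj' => ha2 j (Finset.mem_filter.2 ⟨Finset.mem_univ _, hj'⟩), hbig, hj⟩⟩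

/-- The certificate of a structured vector. -/
def Data.cert {b η : ℝ} {θ : ZMod p} {T : Finset V} {s : ℕ} {u : V → ZMod p}
    (D : Data b η θ T s u) : Cert p V s :=
  ((enc s (tag u D.L1), enc s (tag u D.L2)), (D.a1, D.a2), ((D.j0, u D.j0), (D.j1, u D.j1)))

/-- The coordinates on which the certificate fixes `u`. -/
def Data.supp {b η : ℝ} {θ : ZMod p} {T : Finset V} {s : ℕ} {u : V → ZMod p}
    (D : Data b η θ T s u) : Finset V :=
  insert D.j0 (insert D.j1 (idx (D.L2 ++ D.L1)).toFinset)

lemma Data.supp_card {b η : ℝ} {θ : ZMod p} {T : Finset V} {s : ℕ} {u : V → ZMod p}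
    (D : Data b η θ T s u) : D.supp.card ≤ 4 * s + 2 := by
  refine (Finset.card_insert_le _ _).trans ?_
  have h1 := Finset.card_insert_le D.j1 (idx (D.L2 ++ D.L1)).toFinset
  have h2 := List.toFinset_card_le (idx (D.L2 ++ D.L1))
  rw [idx_length, List.length_append] at h2
  have := D.len1
  have := D.len2
  omega

/-- Vectors with the same certificate share their pairings and agree on the coordinates it fixes. -/
lemma Data.cert_eq {b η : ℝ} {θ : ZMod p} {T : Finset V} {s : ℕ} {u u' : V → ZMod p}
    (D : Data b η θ T s u) (D' : Data b η θ T s u') (h : D.cert = D'.cert) :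
    D'.L1 = D.L1 ∧ D'.L2 = D.L2 ∧ D'.a1 = D.a1 ∧ D'.a2 = D.a2 ∧ D'.supp = D.supp ∧
      ∀ j ∈ D.supp, u' j = u j := by
  simp only [Data.cert, Prod.mk.injEq] at h
  obtain ⟨⟨h1, h2⟩, ⟨h3, h4⟩, ⟨h5, h5'⟩, h6, h6'⟩ := h
  have len : ∀ (u : V → ZMod p) L, (tag u L).length = L.length := by intro u L; simp [tag]
  obtain ⟨e1, f1⟩ := tag_inj (enc_inj (by rw [len]; exact D.len1) (by rw [len]; exact D'.len1) h1)
  obtain ⟨e2, f2⟩ := tag_inj (enc_inj (by rw [len]; exact D.len2) (by rw [len]; exact D'.len2) h2)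
  refine ⟨e1.symm, e2.symm, h3.symm, h4.symm, ?_, ?_⟩
  · simp only [Data.supp, e1, e2, h5, h6]
  · intro j hj
    simp only [Data.supp, Finset.mem_insert, List.mem_toFinset, idx_append, List.mem_append] at hj
    rcases hj with rfl | rfl | hj | hj
    · rw [h5', h5]
    · rw [h6', h6]
    · exact (f2 j hj).symm
    · exact (f1 j hj).symm

lemma diffs_congr {u u' : V → ZMod p} {L : List (V × V)} (h : ∀ j ∈ idx L, u' j = u j) :
    diffs u' L = diffs u L := by
  refine List.map_congr_left fun q hq => ?_
  rw [h _ (mem_idx hq).1, h _ (mem_idx hq).2]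

/-- The total contribution of the structured vectors sharing one certificate. Each unfixed coordinate has
at most about `1 / ν` possible values while each row equation has probability at most `ν`, so the two
almost cancel; the coordinates in `T` gain a constant factor through `lev_card_le'`. -/
lemma fiber_bound {η : ℝ} (hm : Λ.m ≠ 0) (hη0 : 0 ≤ η) (hη : 16 * η ≤ b) {θ : ZMod p}
    {T : Finset V} {s : ℕ} {u : V → ZMod p} (D : Data b η θ T s u) (F : Finset (V → ZMod p))
    (hF : ∀ u' ∈ F, ∃ D' : Data b η θ T s u', D.cert = D'.cert) :
    (F.card : ℝ) * (min (nu b (diffs u (D.L2 ++ D.L1)) 0) (1 - b)) ^ D.suppᶜ.card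
      ≤ (1 - b / 4) ^ (T.card - (4 * s + 2)) * (1 + 2 * η) ^ Fintype.card V := by
  have h0 := Λ.b_pos
  have h1 := Λ.b_le
  set ν := nu b (diffs u (D.L2 ++ D.L1)) 0 with hν
  set r := min ν (1 - b) with hr
  have hνpos : 0 < ν := lt_of_lt_of_le (by have := p_pos (p := p); positivity)
    (nu_zero_ge hm h0 h1 _)
  have hr0 : 0 ≤ r := le_min hνpos.le (by linarith)
  have hν1 : ν ≤ nu b (diffs u D.L1) 0 := by
    have := nu_append_le hm h0 h1 (diffs u D.L2) (diffs u D.L1)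
    simpa [hν, diffs] using this
  let A : V → Finset (ZMod p) := fun k =>
    if k ∈ D.supp then {u k}
    else if k ∈ T then (lev b η (diffs u D.L1)).map (Equiv.addRight D.a1).toEmbedding
    else (lev b η (diffs u (D.L2 ++ D.L1))).map (Equiv.addRight D.a2).toEmbedding
  have hsub : F ⊆ Fintype.piFinset A := by
    intro u' hu'
    obtain ⟨D', hD'⟩ := hF u' hu'
    obtain ⟨e1, e2, e3, e4, e5, e6⟩ := D.cert_eq D' hD'
    have hidx : ∀ j, j ∈ idx (D.L2 ++ D.L1) → j ∈ D.supp := by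
      intro j hj
      simp [Data.supp, hj]
    have hidx1 : ∀ j, j ∈ idx D.L1 → j ∈ D.supp := by
      intro j hj
      exact hidx j (by simp [idx_append, hj])
    have d1 : diffs u' D.L1 = diffs u D.L1 := diffs_congr fun j hj => e6 j (hidx1 j hj)
    have d2 : diffs u' (D.L2 ++ D.L1) = diffs u (D.L2 ++ D.L1) :=
      diffs_congr fun j hj => e6 j (hidx j hj)
    rw [Fintype.mem_piFinset]
    intro k
    simp only [A]
    split_ifs with hk hkT
    · rw [e6 k hk]; simp
    · refine Finset.mem_map.2 ⟨u' k - D.a1, ?_, by simp⟩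
      have := D'.lev1 k hkT (by rw [e1]; exact fun h => hk (hidx1 k h))
      rwa [e1, e3, d1] at this
    · refine Finset.mem_map.2 ⟨u' k - D.a2, ?_, by simp⟩
      have := D'.lev2 k (by rw [e1, e2]; exact fun h => hk (hidx k h))
      rwa [e1, e2, e4, d2] at this
  have hcard : (F.card : ℝ) ≤ ∏ k ∈ D.suppᶜ, ((A k).card : ℝ) := by
    have h2 := Finset.card_le_card hsub
    rw [Fintype.card_piFinset, ← Finset.prod_mul_prod_compl D.supp] at h2
    have h3 : ∏ k ∈ D.supp, (A k).card = 1 := Finset.prod_eq_one fun k hk => by simp [A, hk]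
    rw [h3, one_mul] at h2
    exact_mod_cast h2
  have hT : ∀ k ∈ D.suppᶜ, ((A k).card : ℝ) * r ≤ if k ∈ T then 1 - b / 4 else 1 + 2 * η := by
    intro k hk
    have hk := Finset.mem_compl.1 hk
    split_ifs with hkT
    · simp only [A, if_neg hk, if_pos hkT, Finset.card_map]
      have h2 := lev_card_le' hm h0 h1 hη0 (by linarith) _ D.big
      set c : ℝ := ((lev b η (diffs u D.L1)).card : ℝ)
      set ν1 := nu b (diffs u D.L1) 0
      have hrν : r ≤ ν1 := (min_le_left _ _).trans hν1
      have hrb : r ≤ 1 - b := min_le_right _ _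
      have hc1 : 0 ≤ c := Nat.cast_nonneg _
      by_cases hc : 2 * c - 1 ≤ 0
      · nlinarith
      · push Not at hc
        have h3 : (2 * c - 1) * ((1 - 4 * η) * r) ≤ 1 :=
          (mul_le_mul_of_nonneg_left (mul_le_mul_of_nonneg_left hrν (by linarith)) hc.le).trans h2
        have h4 : (2 * c - 1) * r ≤ 1 + b / 2 := by
          by_contra hcon
          push Not at hcon
          have : (1 + b / 2) * (1 - 4 * η) < (2 * c - 1) * r * (1 - 4 * η) :=
            mul_lt_mul_of_pos_right hcon (by linarith)
          nlinarith
        nlinarith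
    · simp only [A, if_neg hk, if_neg hkT, Finset.card_map]
      have h2 := lev_card_le h0 h1 η (diffs u (D.L2 ++ D.L1))
      rw [← hν] at h2
      set c : ℝ := ((lev b η (diffs u (D.L2 ++ D.L1))).card : ℝ)
      have hc1 : 0 ≤ c := Nat.cast_nonneg _
      have hrν : r ≤ ν := min_le_left _ _
      have h3 : c * ((1 - η) * r) ≤ 1 :=
        (mul_le_mul_of_nonneg_left (mul_le_mul_of_nonneg_left hrν (by linarith)) hc1).trans h2
      by_contra hcon
      push Not at hcon
      have : (1 + 2 * η) * (1 - η) < c * r * (1 - η) :=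
        mul_lt_mul_of_pos_right hcon (by linarith)
      nlinarith
  calc (F.card : ℝ) * r ^ D.suppᶜ.card
      ≤ (∏ k ∈ D.suppᶜ, ((A k).card : ℝ)) * ∏ k ∈ D.suppᶜ, r := by
        rw [Finset.prod_const]
        exact mul_le_mul_of_nonneg_right hcard (pow_nonneg hr0 _)
    _ = ∏ k ∈ D.suppᶜ, ((A k).card : ℝ) * r := by rw [Finset.prod_mul_distrib]
    _ ≤ ∏ k ∈ D.suppᶜ, if k ∈ T then 1 - b / 4 else 1 + 2 * η :=
        Finset.prod_le_prod (fun k _ => mul_nonneg (Nat.cast_nonneg _) hr0) hT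
    _ = (1 - b / 4) ^ (D.suppᶜ.filter (· ∈ T)).card
        * (1 + 2 * η) ^ (D.suppᶜ.filter (· ∉ T)).card := by
        rw [Finset.prod_ite, Finset.prod_const, Finset.prod_const]
    _ ≤ _ := by
        refine mul_le_mul ?_ ?_ (by positivity) (pow_nonneg (by linarith) _)
        · refine pow_le_pow_of_le_one (by linarith) (by linarith) ?_
          have h2 : T ⊆ D.supp ∪ D.suppᶜ.filter (· ∈ T) := by
            intro k hk
            by_cases h : k ∈ D.supp <;> simp [h, hk]
          have h3 := (Finset.card_le_card h2).trans (Finset.card_union_le _ _)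
          have := D.supp_card
          omega
        · exact pow_le_pow_right₀ (by linarith) (Finset.card_le_univ _)

/-- The bound for the probability that some preimage of a fixed vector is structured: the number of
certificates times the bound of `fiber_bound`. -/
def Bnd (p : ℕ) (b η : ℝ) (n s t : ℕ) : ℝ :=
  (((((n * p) * (n * p) + 1) ^ s) * (((n * p) * (n * p) + 1) ^ s)) *
    ((p * p) * ((n * p) * (n * p))) : ℕ) *
    ((1 - b / 4) ^ (t - (4 * s + 2)) * (1 + 2 * η) ^ n)

/-- Preimages of a fixed vector under the random matrix are unlikely to be structured. -/
theorem bad_bound (S : Ens Λ V E) {η : ℝ} (hη0 : 0 ≤ η) (hη : 16 * η ≤ b) (T : Finset V) {s : ℕ}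
    (hs : (1 - b * η) ^ s < 1 / p) (v : V → ZMod p)
    (hc : S.θ = 1 → ∀ c : ZMod p, c ≠ 0 → ∃ i, S.κ i * c ≠ v i) :
    Pr Λ.w (fun z : E → Ω => ∃ u : V → ZMod p, u ≠ 0 ∧ S.N z *ᵥ u = v ∧ ¬ Unstr b T u)
      ≤ Bnd p b η (Fintype.card V) s T.card := by
  have h0 := Λ.b_pos
  have h1 := Λ.b_le
  let B : Finset (V → ZMod p) := Finset.univ.filter fun u =>
    u ≠ 0 ∧ ¬ Unstr b T u ∧ ∃ z : E → Ω, S.N z *ᵥ u = v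
  have hD : ∀ u : V → ZMod p, u ∈ B → Nonempty (Data b η S.θ T s u) := by
    intro u hu
    obtain ⟨-, h2, h3, z, hz⟩ := Finset.mem_filter.1 hu
    exact exists_data S hη0 (by linarith) T hs v hc h2 h3 hz
  by_cases hB : B = ∅
  · have hzero : Pr Λ.w (fun z : E → Ω => ∃ u : V → ZMod p, u ≠ 0 ∧ S.N z *ᵥ u = v ∧
        ¬ Unstr b T u) ≤ 0 := by
      refine (Pr_mono Λ.w_nonneg (B := fun _ => False) ?_).trans (by simp [Pr, Ex])
      rintro z ⟨u, h2, h3, h4⟩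
      have : u ∈ B := Finset.mem_filter.2 ⟨Finset.mem_univ _, h2, h4, z, h3⟩
      simp [hB] at this
    refine hzero.trans ?_
    unfold Bnd
    have : 0 ≤ 1 - b / 4 := by linarith
    positivity
  obtain ⟨u₀, hu₀⟩ := Finset.nonempty_iff_ne_empty.2 hB
  let D₀ := (hD u₀ hu₀).some
  -- the certificate of each structured vector, extended arbitrarily
  let ct : (V → ZMod p) → Cert p V s := fun u =>
    if h : u ∈ B then (hD u h).some.cert else D₀.cert
  have hct : ∀ u (h : u ∈ B), ct u = (hD u h).some.cert := fun u h => by simp [ct, h]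
  calc Pr Λ.w (fun z : E → Ω => ∃ u : V → ZMod p, u ≠ 0 ∧ S.N z *ᵥ u = v ∧ ¬ Unstr b T u)
      ≤ Pr Λ.w (fun z : E → Ω => ∃ u ∈ B, S.N z *ᵥ u = v) := by
        refine Pr_mono Λ.w_nonneg ?_
        rintro z ⟨u, h2, h3, h4⟩
        exact ⟨u, Finset.mem_filter.2 ⟨Finset.mem_univ _, h2, h4, z, h3⟩, h3⟩
    _ ≤ ∑ u ∈ B, Pr Λ.w (fun z : E → Ω => S.N z *ᵥ u = v) := Pr_exists_le Λ.w_nonneg _ _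
    _ = ∑ k : Cert p V s, ∑ u ∈ B.filter (fun u => ct u = k),
          Pr Λ.w (fun z : E → Ω => S.N z *ᵥ u = v) := (Finset.sum_fiberwise B ct _).symm
    _ ≤ ∑ _k : Cert p V s,
          ((1 - b / 4) ^ (T.card - (4 * s + 2)) * (1 + 2 * η) ^ Fintype.card V) := by
        refine Finset.sum_le_sum fun k _ => ?_
        rcases (B.filter (fun u => ct u = k)).eq_empty_or_nonempty with hE | ⟨u, hu⟩
        · rw [hE, Finset.sum_empty]
          have : 0 ≤ 1 - b / 4 := by linarith
          positivity
        · obtain ⟨huB, huk⟩ := Finset.mem_filter.1 hu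
          let D := (hD u huB).some
          have hF : ∀ u' ∈ B.filter (fun u => ct u = k),
              ∃ D' : Data b η S.θ T s u', D.cert = D'.cert := by
            intro u' hu'
            obtain ⟨hmemB, hmemk⟩ := Finset.mem_filter.1 hu'
            refine ⟨(hD u' hmemB).some, ?_⟩
            rw [← hct u' hmemB, hmemk, ← huk, hct u huB]
          refine le_trans ?_ (fiber_bound Λ.m_ne hη0 hη D _ hF)
          rw [← nsmul_eq_mul]
          refine Finset.sum_le_card_nsmul _ _ _ fun u' hu' => ?_
          obtain ⟨D', hD'⟩ := hF u' hu'
          obtain ⟨e1, e2, -, -, e5, e6⟩ := D.cert_eq D' hD'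
          have hidx : ∀ j, j ∈ idx (D.L2 ++ D.L1) → j ∈ D.supp := by
            intro j hj
            simp [Data.supp, hj]
          have h2 := row_prob S u' v D.supp (D.L2 ++ D.L1) D.nodup hidx ?_
          · rwa [diffs_congr fun j hj => e6 j (hidx j hj)] at h2
          · intro i _
            rcases D'.nondeg i with h | h
            · exact ⟨D'.j0, by rw [← e5]; simp [Data.supp], h⟩
            · exact ⟨D'.j1, by rw [← e5]; simp [Data.supp], h⟩
    _ = _ := by
        rw [Finset.sum_const, nsmul_eq_mul, Finset.card_univ, cert_card]
        rfl

end Bad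

/-! ### Exposing one further row and column -/

section Step

variable {p : ℕ} [Fact p.Prime] {Ω : Type} [Fintype Ω] {b : ℝ}
  {Λ : Law p Ω b} {V : Type} [Fintype V] {E : Type} [Fintype E] {Y : Type} [Fintype Y]

/-- The random column `c + δ · y`. -/
def xv (Λ : Law p Ω b) (ι : V → Y) (c δ : V → ZMod p) (y : Y → Ω) : V → ZMod p :=
  fun j => c j + δ j * Λ.val (y (ι j))

/-- The coordinates of `Y` attached to the index set `I`. -/
def onI (ι : V → Y) (I : Finset V) : Y → Prop := fun e => ∃ j ∈ I, ι j = e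

lemma mix_onI {ι : V → Y} (hι : Function.Injective ι) (I : Finset V) (o y : Y → Ω) (j : V) :
    mix (onI ι I) o y (ι j) = if j ∈ I then y (ι j) else o (ι j) := by
  have : onI ι I (ι j) ↔ j ∈ I := ⟨fun ⟨k, hk, h⟩ => hι h ▸ hk, fun h => ⟨j, h, rfl⟩⟩
  by_cases h : j ∈ I <;> simp [mix, this, h]

lemma dot_mix {ι : V → Y} (hι : Function.Injective ι) (I : Finset V) (c δ u : V → ZMod p)
    (o y : Y → Ω) : u ⬝ᵥ xv Λ ι c δ (mix (onI ι I) o y) =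
      ∑ j ∈ I, u j * δ j * Λ.val (y (ι j)) +
        (u ⬝ᵥ c + ∑ j ∈ Iᶜ, u j * δ j * Λ.val (o (ι j))) := by
  have h1 : u ⬝ᵥ xv Λ ι c δ (mix (onI ι I) o y) =
      u ⬝ᵥ c + ∑ j, u j * δ j * Λ.val (if j ∈ I then y (ι j) else o (ι j)) := by
    simp only [dotProduct, xv, ← Finset.sum_add_distrib]
    refine Finset.sum_congr rfl fun j _ => ?_
    rw [mix_onI hι]
    ring
  rw [h1, ← Finset.sum_add_sum_compl I]
  have h2 : ∑ j ∈ I, u j * δ j * Λ.val (if j ∈ I then y (ι j) else o (ι j))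
      = ∑ j ∈ I, u j * δ j * Λ.val (y (ι j)) :=
    Finset.sum_congr rfl fun j hj => by rw [if_pos hj]
  have h3 : ∑ j ∈ Iᶜ, u j * δ j * Λ.val (if j ∈ I then y (ι j) else o (ι j))
      = ∑ j ∈ Iᶜ, u j * δ j * Λ.val (o (ι j)) :=
    Finset.sum_congr rfl fun j hj => by rw [if_neg (Finset.mem_compl.1 hj)]
  rw [h2, h3]
  ring

lemma dot_adjoint (S : Ens Λ V E) (z : E → Ω) (u w : V → ZMod p) :
    u ⬝ᵥ (S.N z *ᵥ w) = S.σ * ((S.N z *ᵥ u) ⬝ᵥ w) := by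
  rw [Matrix.dotProduct_mulVec, ← Matrix.mulVec_transpose, S.transpose_eq, Matrix.smul_mulVec,
    smul_dotProduct, smul_eq_mul]

/-- If the inner matrix is singular, the new column is unlikely to lie in its range. -/
theorem step_sing (S : Ens Λ V E) {η : ℝ} (hη0 : 0 ≤ η) (hη : 16 * η ≤ b) (I : Finset V) {s : ℕ}
    (hs : (1 - b * η) ^ s < 1 / p) (hκ : S.θ = 1 → ∃ i, S.κ i ≠ 0)
    {ι : V → Y} (hι : Function.Injective ι) (c δ : V → ZMod p)
    (hδ : ∀ j ∈ I, δ j = 1 ∨ δ j = -1) :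
    Ex Λ.w (fun z : E → Ω => Pr Λ.w (fun y : Y → Ω => (∃ u, u ≠ 0 ∧ S.N z *ᵥ u = 0) ∧
      ∃ w', S.N z *ᵥ w' = - xv Λ ι c δ y)) ≤ Bnd p b η (Fintype.card V) s I.card + 2 / p := by
  have hbad := bad_bound S hη0 hη I hs 0 (by
    intro h c hc
    obtain ⟨i, hi⟩ := hκ h
    exact ⟨i, mul_ne_zero hi hc⟩)
  have hp := p_pos (p := p)
  have hz : ∀ z : E → Ω, Pr Λ.w (fun y : Y → Ω => (∃ u, u ≠ 0 ∧ S.N z *ᵥ u = 0) ∧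
      ∃ w', S.N z *ᵥ w' = - xv Λ ι c δ y) ≤
      (if ∃ u : V → ZMod p, u ≠ 0 ∧ S.N z *ᵥ u = 0 ∧ ¬ Unstr b I u then 1 else 0) + 2 / p := by
    intro z
    split_ifs with hb
    · exact (Pr_le_one Λ.w_nonneg Λ.w_sum _).trans (by have : 0 ≤ 2 / (p : ℝ) := by positivity
                                                       linarith)
    rw [zero_add]
    by_cases hu : ∃ u, u ≠ 0 ∧ S.N z *ᵥ u = 0
    · obtain ⟨u, hu0, hu⟩ := hu
      have hUn : Unstr b I u := by
        by_contra hcon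
        exact hb ⟨u, hu0, hu, hcon⟩
      rw [Pr_resample Λ.w_sum (onI ι I)]
      refine Ex_le_of_le Λ.w_nonneg Λ.w_sum fun o => ?_
      refine le_trans (Pr_mono Λ.w_nonneg ?_) (Pr_unstr_le Λ I u δ 1 one_ne_zero hδ ι hι hUn
        (u ⬝ᵥ c + ∑ j ∈ Iᶜ, u j * δ j * Λ.val (o (ι j))))
      rintro y ⟨-, w', hw'⟩
      have h1 := dot_adjoint S z u w'
      rw [hu, hw', zero_dotProduct, mul_zero, dotProduct_neg, neg_eq_zero, dot_mix hι] at h1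
      simpa using h1
    · refine (Pr_mono Λ.w_nonneg (B := fun _ => False) ?_).trans ?_
      · rintro y ⟨h, -⟩
        exact hu h
      · simp only [Pr, Ex]
        simp only [if_false, mul_zero, Finset.sum_const_zero]
        positivity
  refine (Ex_mono Λ.w_nonneg hz).trans ?_
  rw [Ex_add, Ex_const Λ.w_sum]
  have : Pr Λ.w (fun z : E → Ω => ∃ u : V → ZMod p, u ≠ 0 ∧ S.N z *ᵥ u = 0 ∧ ¬ Unstr b I u)
    = Ex Λ.w (fun z : E → Ω =>
      if ∃ u : V → ZMod p, u ≠ 0 ∧ S.N z *ᵥ u = 0 ∧ ¬ Unstr b I u then (1 : ℝ) else 0) := by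
    unfold Pr; congr!
  linarith

/-- The resampled coordinates in `J` all agree with prescribed values only with small probability. -/
lemma Pr_agree_le (J : Finset V) {ι : V → Y} (hι : Function.Injective ι) (δ a : V → ZMod p)
    (hδ : ∀ j ∈ J, δ j ≠ 0) :
    Pr Λ.w (fun y' : Y → Ω => ∀ j ∈ J, δ j * Λ.val (y' (ι j)) + a j = 0) ≤ (1 - b) ^ J.card := by
  have h := Pr_rows_const_le Λ J (fun j e => if e = ι j then δ j else 0) a (by
    intro e i j hij
    by_cases h : e = ι i
    · right
      rw [if_neg]
      rintro h'
      exact hij (hι (h.symm.trans h'))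
    · left; exact if_neg h)
  simp only [ite_mul, zero_mul, Finset.sum_ite_eq', Finset.mem_univ, if_true] at h
  refine h.trans ?_
  rw [← Finset.prod_const]
  refine Finset.prod_le_prod (fun j _ => rho_nonneg Λ _) fun j hj => ?_
  exact rho_le_of_ne_zero Λ _ (e₀ := ι j) (by simpa using hδ j hj)

/-- If the inner symmetric matrix is invertible, the quadratic form that decides singularity of the
bordered matrix is unlikely to take the required value. The quadratic form is decoupled into a
linear one by resampling the coordinates in `J`. -/
theorem step_inv (S : Ens Λ V E) (hσ : S.σ = 1) (h2 : (2 : ZMod p) ≠ 0) {η : ℝ} (hη0 : 0 ≤ η)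
    (hη : 16 * η ≤ b) (I J : Finset V) (hIJ : Disjoint I J) {s : ℕ}
    (hs : (1 - b * η) ^ s < 1 / p) (hκ : S.θ = 1 → ∃ i ∈ I, S.κ i ≠ 0)
    {ι : V → Y} (hι : Function.Injective ι) (c δ : V → ZMod p)
    (hδI : ∀ j ∈ I, δ j = 1 ∨ δ j = -1) (hδJ : ∀ j ∈ J, δ j ≠ 0)
    (d0 : ZMod p) (d1 : V → ZMod p) :
    (Ex Λ.w (fun z : E → Ω => Pr Λ.w (fun y : Y → Ω => (∀ u, S.N z *ᵥ u = 0 → u = 0) ∧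
      ∃ w', S.N z *ᵥ w' = - xv Λ ι c δ y ∧
        xv Λ ι c δ y ⬝ᵥ w' = -(d0 + ∑ j, d1 j * Λ.val (y (ι j)))))) ^ 2
      ≤ Bnd p b η (Fintype.card V) s I.card + 2 / p + (1 - b) ^ J.card := by
  have hp := p_pos (p := p)
  have hw := Λ.w_nonneg
  have hws := Λ.w_sum
  set A : (E → Ω) → (Y → Ω) → Prop := fun z y => (∀ u, S.N z *ᵥ u = 0 → u = 0) ∧
      ∃ w', S.N z *ᵥ w' = - xv Λ ι c δ y ∧
        xv Λ ι c δ y ⬝ᵥ w' = -(d0 + ∑ j, d1 j * Λ.val (y (ι j))) with hA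
  let P := onI ι J
  let Q := onI ι I
  let G : (Y → Ω) → (Y → Ω) → (E → Ω) → (Y → Ω) → Prop := fun y y' z y'' =>
    A z (mix Q y y'') ∧ A z (mix P (mix Q y y'') y')
  have hstep : (Ex Λ.w (fun z : E → Ω => Pr Λ.w (A z))) ^ 2 ≤
      Ex Λ.w fun y : Y → Ω => Ex Λ.w fun y' : Y → Ω => Ex Λ.w fun z : E → Ω =>
        Pr Λ.w fun y'' : Y → Ω => G y y' z y'' := by
    refine (Ex_sq_le hw hws _).trans ?_
    have h3 : ∀ z : E → Ω, (Pr Λ.w (A z)) ^ 2 ≤ Ex Λ.w fun y : Y → Ω => Ex Λ.w fun y' : Y → Ω =>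
        Pr Λ.w fun y'' : Y → Ω => G y y' z y'' := by
      intro z
      refine (Pr_sq_le hw hws P (A z)).trans ?_
      rw [Ex_resample hws Q]
      refine Ex_mono hw fun y => le_of_eq ?_
      exact Ex_comm _
    refine (Ex_mono hw h3).trans (le_of_eq ?_)
    rw [Ex_comm]
    congr 1
    funext y
    exact Ex_comm _
  refine hstep.trans ?_
  let ζ : (Y → Ω) → (Y → Ω) → V → ZMod p := fun y y' j =>
    if j ∈ J then δ j * Λ.val (y' (ι j)) + -(δ j * Λ.val (y (ι j))) else 0
  have hζ0 : ∀ y : Y → Ω, Pr Λ.w (fun y' : Y → Ω => ζ y y' = 0) ≤ (1 - b) ^ J.card := by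
    intro y
    refine le_trans (Pr_mono hw ?_) (Pr_agree_le J hι δ (fun j => -(δ j * Λ.val (y (ι j)))) hδJ)
    intro y' h j hj
    have := congrFun h j
    simpa only [ζ, if_pos hj, Pi.zero_apply] using this
  have hxζ : ∀ y y' y'' : Y → Ω, xv Λ ι c δ (mix P (mix Q y y'') y') =
      xv Λ ι c δ (mix Q y y'') + ζ y y' := by
    intro y y' y''
    funext j
    simp only [xv, Pi.add_apply, P, Q, mix_onI hι, ζ]
    by_cases hj : j ∈ J
    · have hjI : j ∉ I := fun h => Finset.disjoint_left.1 hIJ h hj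
      simp only [if_pos hj, if_neg hjI]
      ring
    · simp only [if_neg hj, add_zero]
  have hmain : ∀ y y' : Y → Ω, ζ y y' ≠ 0 → (Ex Λ.w fun z : E → Ω =>
      Pr Λ.w fun y'' : Y → Ω => G y y' z y'')
        ≤ Bnd p b η (Fintype.card V) s I.card + 2 / p := by
    intro y y' hne
    have hbad := bad_bound S hη0 hη I hs (ζ y y') (by
      intro h c hc
      obtain ⟨i, hi, hi'⟩ := hκ h
      refine ⟨i, ?_⟩
      have : i ∉ J := fun h' => Finset.disjoint_left.1 hIJ hi h'
      simp only [ζ, if_neg this]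
      exact mul_ne_zero hi' hc)
    have hz : ∀ z : E → Ω, Pr Λ.w (fun y'' : Y → Ω => G y y' z y'') ≤
        (if ∃ u : V → ZMod p, u ≠ 0 ∧ S.N z *ᵥ u = ζ y y' ∧ ¬ Unstr b I u then 1 else 0)
          + 2 / p := by
      intro z
      split_ifs with hb
      · exact (Pr_le_one hw hws _).trans (by have : 0 ≤ 2 / (p : ℝ) := by positivity
                                             linarith)
      rw [zero_add]
      by_cases hu : (∀ u, S.N z *ᵥ u = 0 → u = 0) ∧ ∃ u, S.N z *ᵥ u = ζ y y'
      · obtain ⟨hinj, u, hu⟩ := hu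
        have hu0 : u ≠ 0 := by
          rintro rfl
          exact hne (by rw [← hu, Matrix.mulVec_zero])
        have hUn : Unstr b I u := by
          by_contra hcon
          exact hb ⟨u, hu0, hu, hcon⟩
        refine le_trans (Pr_mono hw ?_) (Pr_unstr_le Λ I u δ 2 h2 hδI ι hι hUn
          (2 * (u ⬝ᵥ c + ∑ j ∈ Iᶜ, u j * δ j * Λ.val (y (ι j))) + ζ y y' ⬝ᵥ u
            - ∑ j ∈ J, d1 j * (Λ.val (y' (ι j)) - Λ.val (y (ι j)))))
        rintro y'' ⟨⟨-, w1, hw1, hd1⟩, -, w2, hw2, hd2⟩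
        rw [hxζ] at hw2 hd2
        have hdd : ∑ j, d1 j * Λ.val (mix P (mix Q y y'') y' (ι j)) =
            ∑ j, d1 j * Λ.val (mix Q y y'' (ι j))
              + ∑ j ∈ J, d1 j * (Λ.val (y' (ι j)) - Λ.val (y (ι j))) := by
          rw [← Finset.sum_add_sum_compl J, ← Finset.sum_add_sum_compl J
            (fun j => d1 j * Λ.val (mix Q y y'' (ι j)))]
          have e1 : ∑ j ∈ Jᶜ, d1 j * Λ.val (mix P (mix Q y y'') y' (ι j))
              = ∑ j ∈ Jᶜ, d1 j * Λ.val (mix Q y y'' (ι j)) := by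
            refine Finset.sum_congr rfl fun j hj => ?_
            simp only [P]
            rw [mix_onI hι, if_neg (Finset.mem_compl.1 hj)]
          have e2 : ∑ j ∈ J, d1 j * Λ.val (mix P (mix Q y y'') y' (ι j))
              = ∑ j ∈ J, d1 j * Λ.val (mix Q y y'' (ι j))
                + ∑ j ∈ J, d1 j * (Λ.val (y' (ι j)) - Λ.val (y (ι j))) := by
            rw [← Finset.sum_add_distrib]
            refine Finset.sum_congr rfl fun j hj => ?_
            have hjI : j ∉ I := fun h => Finset.disjoint_left.1 hIJ h hj
            simp only [P, Q]
            rw [mix_onI hι, if_pos hj, mix_onI hι, if_neg hjI]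
            ring
          rw [e1, e2]
          ring
        rw [hdd] at hd2
        have hx := dot_mix (Λ := Λ) hι I c δ u y y''
        set x := xv Λ ι c δ (mix Q y y'') with hxdef
        have hw12 : w2 = w1 - u := by
          have : S.N z *ᵥ (w2 - (w1 - u)) = 0 := by
            rw [Matrix.mulVec_sub, Matrix.mulVec_sub, hw1, hw2, hu]
            abel
          exact sub_eq_zero.1 (hinj _ this)
        have hsym := dot_adjoint S z u w1
        rw [hσ, one_mul, hu, hw1, dotProduct_neg] at hsym
        rw [hw12, dotProduct_sub, add_dotProduct, add_dotProduct, dotProduct_comm x u] at hd2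
        have e3 : ∑ j ∈ I, 2 * u j * δ j * Λ.val (y'' (ι j))
            = 2 * ∑ j ∈ I, u j * δ j * Λ.val (y'' (ι j)) := by
          rw [Finset.mul_sum]
          exact Finset.sum_congr rfl fun j _ => by ring
        rw [e3]
        have hx' : u ⬝ᵥ x = ∑ j ∈ I, u j * δ j * Λ.val (y'' (ι j)) +
          (u ⬝ᵥ c + ∑ j ∈ Iᶜ, u j * δ j * Λ.val (y (ι j))) := hx
        linear_combination hd1 - hd2 - hsym - 2 * hx'
      · refine (Pr_mono hw (B := fun _ => False) ?_).trans ?_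
        · rintro y'' ⟨⟨hinj, w1, hw1, -⟩, -, w2, hw2, -⟩
          refine hu ⟨hinj, w1 - w2, ?_⟩
          rw [hxζ] at hw2
          rw [Matrix.mulVec_sub, hw1, hw2]
          abel
        · simp only [Pr, Ex]
          simp only [if_false, mul_zero, Finset.sum_const_zero]
          positivity
    refine (Ex_mono hw hz).trans ?_
    rw [Ex_add, Ex_const hws]
    have : Pr Λ.w (fun z : E → Ω =>
        ∃ u : V → ZMod p, u ≠ 0 ∧ S.N z *ᵥ u = ζ y y' ∧ ¬ Unstr b I u)
      = Ex Λ.w (fun z : E → Ω => if ∃ u : V → ZMod p, u ≠ 0 ∧ S.N z *ᵥ u = ζ y y' ∧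
        ¬ Unstr b I u then (1 : ℝ) else 0) := by
      unfold Pr; congr!
    linarith
  have hB0 : 0 ≤ Bnd p b η (Fintype.card V) s I.card := by
    have h0 := Λ.b_pos
    have h1 := Λ.b_le
    unfold Bnd
    have : 0 ≤ 1 - b / 4 := by linarith
    positivity
  refine Ex_le_of_le hw hws fun y => ?_
  have h3 : ∀ y' : Y → Ω, (Ex Λ.w fun z : E → Ω => Pr Λ.w fun y'' : Y → Ω => G y y' z y'')
      ≤ (Bnd p b η (Fintype.card V) s I.card + 2 / p) + if ζ y y' = 0 then 1 else 0 := by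
    intro y'
    split_ifs with h
    · refine (Ex_le_of_le hw hws fun z => Pr_le_one hw hws _).trans ?_
      have : 0 ≤ 2 / (p : ℝ) := by positivity
      linarith
    · rw [add_zero]
      exact hmain y y' h
  refine (Ex_mono hw h3).trans ?_
  rw [Ex_add, Ex_const hws]
  have h4 : Pr Λ.w (fun y' : Y → Ω => ζ y y' = 0)
    = Ex Λ.w (fun y' : Y → Ω => if ζ y y' = 0 then (1 : ℝ) else 0) := by
    unfold Pr; congr!
  have := hζ0 y
  linarith

end Step

/-! ### The two bordering steps combined -/

section Both

variable {p : ℕ} [Fact p.Prime] {Ω : Type} [Fintype Ω] {b : ℝ}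
  {Λ : Law p Ω b} {V : Type} [Fintype V] {E : Type} [Fintype E] {Y : Type} [Fintype Y]

/-- The total error of one bordering step. -/
def Rer (p : ℕ) (b : ℝ) (n s t : ℕ) : ℝ := Bnd p b (b / 512) n s t + 2 / p + (1 - b) ^ t

lemma Bnd_anti {p : ℕ} {b η : ℝ} (h0 : 0 < b) (h1 : b ≤ 1 / 16) (hη : 0 ≤ η) {n s t t' : ℕ}
    (h : t ≤ t') : Bnd p b η n s t' ≤ Bnd p b η n s t := by
  unfold Bnd
  exact mul_le_mul_of_nonneg_left (mul_le_mul_of_nonneg_right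
    (pow_le_pow_of_le_one (by linarith) (by linarith) (by omega)) (by positivity))
    (Nat.cast_nonneg _)

lemma Bnd_nonneg {p : ℕ} {b η : ℝ} (h1 : b ≤ 1 / 16) (hη : 0 ≤ η) (n s t : ℕ) :
    0 ≤ Bnd p b η n s t := by
  unfold Bnd
  have : 0 ≤ 1 - b / 4 := by linarith
  positivity

lemma Rer_nonneg {p : ℕ} {b : ℝ} (h0 : 0 < b) (h1 : b ≤ 1 / 16) (n s t : ℕ) :
    0 ≤ Rer p b n s t := by
  unfold Rer
  have := Bnd_nonneg (p := p) h1 (by linarith : 0 ≤ b / 512) n s t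
  have : 0 ≤ 1 - b := by linarith
  positivity

/-- Probability that a symmetric bordered matrix has a kernel vector not vanishing at the new
coordinate. -/
theorem step_both (S : Ens Λ V E) (hσ : S.σ = 1) (h2 : (2 : ZMod p) ≠ 0)
    (I J : Finset V) (hIJ : Disjoint I J) {s t : ℕ} (hI : t ≤ I.card) (hJ : t ≤ J.card)
    (hs : (1 - b * (b / 512)) ^ s < 1 / p) (hκ : S.θ = 1 → ∃ i ∈ I, S.κ i ≠ 0)
    {ι : V → Y} (hι : Function.Injective ι) (c δ : V → ZMod p)
    (hδI : ∀ j ∈ I, δ j = 1 ∨ δ j = -1) (hδJ : ∀ j ∈ J, δ j ≠ 0)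
    (d0 : ZMod p) (d1 : V → ZMod p) :
    Ex Λ.w (fun z : E → Ω => Pr Λ.w (fun y : Y → Ω =>
      ∃ w', S.N z *ᵥ w' = - xv Λ ι c δ y ∧
        xv Λ ι c δ y ⬝ᵥ w' = -(d0 + ∑ j, d1 j * Λ.val (y (ι j)))))
      ≤ Rer p b (Fintype.card V) s t + √(Rer p b (Fintype.card V) s t) := by
  have h0 := Λ.b_pos
  have h1 := Λ.b_le
  have hp := p_pos (p := p)
  have hB : Bnd p b (b / 512) (Fintype.card V) s I.card + 2 / p + (1 - b) ^ J.card
      ≤ Rer p b (Fintype.card V) s t := by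
    unfold Rer
    have := Bnd_anti (p := p) (n := Fintype.card V) (s := s) h0 h1
      (by linarith : 0 ≤ b / 512) hI
    have := pow_le_pow_of_le_one (by linarith : 0 ≤ 1 - b) (by linarith) hJ
    linarith
  have hA := step_sing (Y := Y) S (η := b / 512) (by linarith) (by linarith) I hs
    (fun h => by obtain ⟨i, -, hi⟩ := hκ h; exact ⟨i, hi⟩) hι c δ hδI
  have hC := step_inv (Y := Y) S hσ h2 (η := b / 512) (by linarith) (by linarith) I J hIJ hs hκ hι
    c δ hδI hδJ d0 d1
  have hC' := Real.le_sqrt_of_sq_le (hC.trans hB)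
  have h3 : (0 : ℝ) ≤ (1 - b) ^ J.card := pow_nonneg (by linarith) _
  have hA' := hA.trans (by linarith :
    Bnd p b (b / 512) (Fintype.card V) s I.card + 2 / p ≤ Rer p b (Fintype.card V) s t)
  refine le_trans ?_ (add_le_add hA' hC')
  rw [← Ex_add]
  refine Ex_mono Λ.w_nonneg fun z => ?_
  refine le_trans (Pr_mono Λ.w_nonneg ?_) (Pr_or_le Λ.w_nonneg _ _)
  rintro y ⟨w', hw', hd⟩
  by_cases hinj : ∀ u, S.N z *ᵥ u = 0 → u = 0
  · exact Or.inr ⟨hinj, w', hw', hd⟩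
  · push Not at hinj
    obtain ⟨u, hu, hu0⟩ := hinj
    exact Or.inl ⟨⟨u, hu0, hu⟩, w', hw'⟩

end Both

/-! ### Choice of the prime and numerical estimates -/

section Numerics

lemma one_sub_pow_le {x : ℝ} (hx : x ≤ 1) (k : ℕ) : (1 - x) ^ k ≤ Real.exp (-(x * k)) := by
  have h := Real.add_one_le_exp (-x)
  calc (1 - x) ^ k ≤ (Real.exp (-x)) ^ k := pow_le_pow_left₀ (by linarith) (by linarith) k
    _ = _ := by rw [← Real.exp_nat_mul]; congr 1; ring

lemma two_pow_le_exp (k : ℕ) : (2 : ℝ) ^ k ≤ Real.exp k := by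
  have h := Real.add_one_le_exp (1 : ℝ)
  calc (2 : ℝ) ^ k ≤ (Real.exp 1) ^ k := pow_le_pow_left₀ (by norm_num) (by linarith) k
    _ = _ := by rw [← Real.exp_nat_mul]; congr 1; ring

/-- A crude bound for the number of certificates. -/
lemma count_le {n p s k : ℕ} (hk : 1 ≤ k) (hn : n ≤ (k + 1) ^ 4) (hp : p ≤ 2 ^ (k + 1)) :
    (((((n * p) * (n * p) + 1) ^ s) * (((n * p) * (n * p) + 1) ^ s)) *
    ((p * p) * ((n * p) * (n * p))) : ℕ) ≤ 2 ^ (7 * k * (4 * s + 4)) := by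
  have h1 : k + 1 ≤ 2 ^ k := Nat.lt_two_pow_self
  have hn2 : n ≤ 2 ^ (4 * k) := hn.trans (by
    calc (k + 1) ^ 4 ≤ (2 ^ k) ^ 4 := Nat.pow_le_pow_left h1 4
      _ = _ := by rw [← pow_mul]; congr 1; ring)
  have hnp : n * p ≤ 2 ^ (5 * k + 1) := by
    calc n * p ≤ 2 ^ (4 * k) * 2 ^ (k + 1) := Nat.mul_le_mul hn2 hp
      _ = _ := by rw [← pow_add]; congr 1; ring
  have hnp2 : n * p ≤ 2 ^ (7 * k) := hnp.trans (Nat.pow_le_pow_right (by norm_num) (by omega))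
  have hp2 : p ≤ 2 ^ (7 * k) := hp.trans (Nat.pow_le_pow_right (by norm_num) (by omega))
  have hq : (n * p) * (n * p) + 1 ≤ 2 ^ (7 * k) * 2 ^ (7 * k) := by
    have h3 : 2 ^ (5 * k + 1) < 2 ^ (7 * k) := Nat.pow_lt_pow_right (by norm_num) (by omega)
    have : (n * p) * (n * p) < 2 ^ (7 * k) * 2 ^ (7 * k) := by
      have : n * p < 2 ^ (7 * k) := lt_of_le_of_lt hnp h3
      exact Nat.mul_lt_mul'' this this
    omega
  calc _ ≤ ((2 ^ (7 * k) * 2 ^ (7 * k)) ^ s * (2 ^ (7 * k) * 2 ^ (7 * k)) ^ s) *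
        ((2 ^ (7 * k) * 2 ^ (7 * k)) * (2 ^ (7 * k) * 2 ^ (7 * k))) := by gcongr
    _ = _ := by
      simp only [← pow_add, ← pow_mul]
      congr 1
      ring

lemma numerics_eventually : ∃ k0 : ℕ, ∀ k : ℕ, k0 ≤ k →
      ((k + 1 : ℝ) ^ 4) * (4 * Real.exp (-(2 * k / 3)) + 2 * Real.exp (-(k / 3))
        + Real.exp (-((k : ℝ) ^ 4 - 1) / 4)) ≤ Real.exp (-√(k + 1)) := by
  have h1 := (Real.tendsto_pow_mul_exp_neg_atTop_nhds_zero 4).eventually_le_const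
    (show (0 : ℝ) < Real.exp (-4) / (7 * 256) by positivity)
  obtain ⟨x0, hx0⟩ := Filter.eventually_atTop.1 h1
  refine ⟨max 2 ⌈4 * x0⌉₊, fun k hk => ?_⟩
  have hk2 : (2 : ℝ) ≤ k := by exact_mod_cast (le_max_left _ _).trans hk
  have hkx : 4 * x0 ≤ k := (Nat.le_ceil _).trans (by exact_mod_cast (le_max_right _ _).trans hk)
  have h2 := hx0 ((k + 1) / 4) (by linarith)
  have e1 : Real.exp (-(2 * k / 3)) ≤ Real.exp (-((k : ℝ) / 3)) :=
    Real.exp_le_exp.2 (by linarith)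
  have e2 : Real.exp (-((k : ℝ) ^ 4 - 1) / 4) ≤ Real.exp (-((k : ℝ) / 3)) := by
    refine Real.exp_le_exp.2 ?_
    have h4 : (4 : ℝ) ≤ k ^ 2 := by nlinarith
    have h5 : (k : ℝ) ^ 4 = k ^ 2 * k ^ 2 := by ring
    have h6 : 4 * (k : ℝ) ^ 2 ≤ k ^ 2 * k ^ 2 := by gcongr
    nlinarith
  have e3 : Real.exp (-((k : ℝ) / 3)) = Real.exp (-((k + 1) / 4)) *
      (Real.exp 4 * Real.exp (-((k + 1) / 12 + 3))) * Real.exp (-(2 / 3)) := by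
    rw [← Real.exp_add, ← Real.exp_add, ← Real.exp_add]
    congr 1
    ring
  have e4 : Real.exp (-((k + 1 : ℝ) / 12 + 3)) ≤ Real.exp (-√(k + 1)) := by
    refine Real.exp_le_exp.2 ?_
    have hs := Real.sq_sqrt (by linarith : (0 : ℝ) ≤ k + 1)
    nlinarith [sq_nonneg (√((k : ℝ) + 1) - 6)]
  have e5 : Real.exp (-(2 / 3)) ≤ 1 := Real.exp_le_one_iff.2 (by norm_num)
  have e6 : Real.exp (-4) * Real.exp 4 = 1 := by rw [← Real.exp_add]; simp
  calc ((k + 1 : ℝ) ^ 4) * (4 * Real.exp (-(2 * k / 3)) + 2 * Real.exp (-(k / 3))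
        + Real.exp (-((k : ℝ) ^ 4 - 1) / 4))
      ≤ ((k + 1 : ℝ) ^ 4) * (7 * Real.exp (-(k / 3))) := by gcongr; linarith
    _ ≤ ((k + 1 : ℝ) ^ 4) * (7 * (Real.exp (-((k + 1) / 4)) *
      (Real.exp 4 * Real.exp (-√(k + 1))) * 1)) := by rw [e3]; gcongr
    _ = (7 * 256) * (((k + 1) / 4) ^ 4 * Real.exp (-((k + 1) / 4))) *
      (Real.exp 4 * Real.exp (-√(k + 1))) := by ring
    _ ≤ (7 * 256) * (Real.exp (-4) / (7 * 256)) * (Real.exp 4 * Real.exp (-√(k + 1))) := by gcongr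
    _ = (Real.exp (-4) * Real.exp 4) * Real.exp (-√(k + 1)) := by ring
    _ = _ := by rw [e6, one_mul]

/-- The main error term is exponentially small in `k` once `n ≥ k ^ 4` is large. -/
lemma Bnd_le {p k s t n n' C : ℕ} {b : ℝ} (h0 : 0 < b) (h1 : b ≤ 1 / 16) (hkone : 1 ≤ k)
    (hn' : n' ≤ n) (hnk : n < (k + 1) ^ 4) (hp2' : p ≤ 2 ^ (k + 1)) (hkR : (1 : ℝ) ≤ k)
    (hC1 : (1 : ℝ) ≤ C) (hsR : (s : ℝ) = C * (k + 1)) (htR : (n : ℝ) ≤ 32 * t)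
    (hn'R : (n' : ℝ) ≤ n) (hk2 : (k : ℝ) ≤ C * k ^ 2)
    (hbk : 97 * C * (k : ℝ) ^ 2 ≤ b * n / 256) :
    Bnd p b (b / 512) n' s t ≤ Real.exp (-(2 * k / 3)) := by
  have c1 : ((((((n' * p) * (n' * p) + 1) ^ s) * (((n' * p) * (n' * p) + 1) ^ s)) *
      ((p * p) * ((n' * p) * (n' * p))) : ℕ) : ℝ) ≤ Real.exp ((7 * k * (4 * s + 4) : ℕ)) := by
    refine le_trans ?_ (two_pow_le_exp _)
    exact_mod_cast count_le hkone (hn'.trans hnk.le) hp2'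
  have c2 : (1 - b / 4) ^ (t - (4 * s + 2)) ≤ Real.exp (-(b / 4 * (t - (4 * s + 2)))) := by
    refine (one_sub_pow_le (by linarith) _).trans (Real.exp_le_exp.2 ?_)
    have : (t : ℝ) - (4 * s + 2) ≤ (t - (4 * s + 2) : ℕ) := by
      rw [sub_le_iff_le_add]
      exact_mod_cast (by omega : t ≤ (t - (4 * s + 2)) + (4 * s + 2))
    have := mul_le_mul_of_nonneg_left this (by linarith : 0 ≤ b / 4)
    linarith
  have c3 : (1 + 2 * (b / 512)) ^ n' ≤ Real.exp (b / 256 * n) := by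
    have := Real.add_one_le_exp (b / 256)
    calc (1 + 2 * (b / 512)) ^ n' ≤ (Real.exp (b / 256)) ^ n' :=
          pow_le_pow_left₀ (by linarith) (by linarith) _
      _ = Real.exp (n' * (b / 256)) := by rw [Real.exp_nat_mul]
      _ ≤ _ := Real.exp_le_exp.2 (by nlinarith)
  unfold Bnd
  calc _ ≤ Real.exp ((7 * k * (4 * s + 4) : ℕ)) *
        (Real.exp (-(b / 4 * (t - (4 * s + 2)))) * Real.exp (b / 256 * n)) := by
        have : 0 ≤ 1 - b / 4 := by linarith
        exact mul_le_mul c1 (mul_le_mul c2 c3 (by positivity) (Real.exp_pos _).le)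
          (mul_nonneg (pow_nonneg this _) (by positivity)) (Real.exp_pos _).le
    _ = Real.exp ((7 * k * (4 * s + 4) : ℕ) + (-(b / 4 * (t - (4 * s + 2))) + b / 256 * n)) := by
        rw [Real.exp_add, Real.exp_add]
    _ ≤ _ := by
        refine Real.exp_le_exp.2 ?_
        push_cast
        have hCk : (1 : ℝ) ≤ C * k := by nlinarith
        have hs4 : (s : ℝ) ≤ 2 * (C * k) := by rw [hsR]; nlinarith
        have d1 : 7 * (k : ℝ) * (4 * s + 4) ≤ 7 * k * (12 * (C * k)) := by
          gcongr; linarith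
        have d2 : b / 4 * (4 * s + 2) ≤ 12 * (C * k) := by nlinarith
        have d3 : (C : ℝ) * k ≤ C * k ^ 2 := by
          have : (k : ℝ) ≤ k ^ 2 := by nlinarith
          gcongr
        have d4 : b / 4 * (n / 32) ≤ b / 4 * t := by gcongr; linarith
        nlinarith

set_option maxHeartbeats 1000000 in
/-- For every large `n` there are a prime `p` with `log p` of order `n ^ (1 / 4)` and a number of pairs `s` for which
the error summed over the `n` bordering steps is small. -/
theorem numerics (b : ℝ) (h0 : 0 < b) (h1 : b ≤ 1 / 16) (m0 : ℕ) :
    ∃ n0 : ℕ, ∀ n : ℕ, n0 ≤ n → ∃ p s : ℕ, p.Prime ∧ m0 < p ∧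
      (1 - b * (b / 512)) ^ s < 1 / (p : ℝ) ∧ ∀ n' t : ℕ, n' ≤ n → n ≤ 32 * t →
      (n : ℝ) * (Rer p b n' s t + √(Rer p b n' s t) + Real.exp (-((n : ℝ) - 1) / 4))
        ≤ Real.exp (-(n : ℝ) ^ (1 / 8 : ℝ)) := by
  obtain ⟨k0, hk0⟩ := numerics_eventually
  set C : ℕ := ⌈1 / (b * (b / 512))⌉₊ with hC
  have hCpos : 0 < 1 / (b * (b / 512)) := by positivity
  have hC1 : (1 : ℝ) ≤ C := by exact_mod_cast Nat.ceil_pos.2 hCpos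
  have hCb : 1 ≤ b * (b / 512) * C := by
    have := Nat.le_ceil (1 / (b * (b / 512)))
    rw [div_le_iff₀ (by positivity)] at this
    linarith
  set k1 : ℕ := max (max k0 (max 1 m0)) ⌈256 * 97 * C / b⌉₊ with hk1
  refine ⟨k1 ^ 4, fun n hn => ?_⟩
  set k := Nat.sqrt (Nat.sqrt n) with hk
  have hkn : k ^ 4 ≤ n := by
    have a1 := Nat.sqrt_le' (Nat.sqrt n)
    have a2 := Nat.sqrt_le' n
    calc k ^ 4 = (k ^ 2) ^ 2 := by ring
      _ ≤ (Nat.sqrt n) ^ 2 := Nat.pow_le_pow_left a1 2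
      _ ≤ n := a2
  have hnk : n < (k + 1) ^ 4 := by
    have a1 := Nat.lt_succ_sqrt' (Nat.sqrt n)
    have a2 := Nat.lt_succ_sqrt' n
    calc n < (Nat.sqrt n + 1) ^ 2 := a2
      _ ≤ ((k + 1) ^ 2) ^ 2 := Nat.pow_le_pow_left a1 2
      _ = _ := by ring
  have hkk : k1 ≤ k := by
    by_contra hcon
    push Not at hcon
    have : (k + 1) ^ 4 ≤ k1 ^ 4 := Nat.pow_le_pow_left hcon 4
    omega
  have hkk0 : k0 ≤ k := le_trans (by simp [hk1]) hkk
  have hkone : 1 ≤ k := le_trans (by simp [hk1]) hkk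
  have hkm : m0 ≤ k := le_trans (by simp [hk1]) hkk
  have hkC : 256 * 97 * C / b ≤ k :=
    (Nat.le_ceil _).trans (by exact_mod_cast (le_max_right _ _).trans hkk)
  obtain ⟨p, hp, hp1, hp2⟩ := Nat.exists_prime_lt_and_le_two_mul (2 ^ k) (by positivity)
  have hp2' : p ≤ 2 ^ (k + 1) := by rw [pow_succ]; omega
  have hkR : (1 : ℝ) ≤ k := by exact_mod_cast hkone
  have hppos : (0 : ℝ) < p := by exact_mod_cast hp.pos
  set s := C * (k + 1) with hsdef
  have hsR : (s : ℝ) = C * (k + 1) := by simp [hsdef]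
  have hlog : (2 / 3 : ℝ) ≤ Real.log 2 := by have := Real.log_two_gt_d9; linarith
  have hlog' : Real.log 2 < 1 := by have := Real.log_two_lt_d9; linarith
  have hexp2 : ∀ j : ℕ, (2 : ℝ) ^ j = Real.exp (j * Real.log 2) := by
    intro j
    rw [Real.exp_nat_mul, Real.exp_log (by norm_num)]
  refine ⟨p, s, hp, lt_of_le_of_lt (hkm.trans Nat.lt_two_pow_self.le) hp1, ?_, ?_⟩
  · refine lt_of_le_of_lt (one_sub_pow_le (by nlinarith) s) ?_
    rw [lt_div_iff₀ hppos]
    have a1 : (p : ℝ) ≤ Real.exp ((k + 1 : ℕ) * Real.log 2) := by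
      rw [← hexp2]; exact_mod_cast hp2'
    calc Real.exp (-(b * (b / 512) * s)) * p
        ≤ Real.exp (-(b * (b / 512) * s)) * Real.exp ((k + 1 : ℕ) * Real.log 2) := by gcongr
      _ = Real.exp (-(b * (b / 512) * s) + (k + 1 : ℕ) * Real.log 2) := by rw [Real.exp_add]
      _ < 1 := by
        rw [Real.exp_lt_one_iff, hsR]
        push_cast
        nlinarith
  intro n' t hn' ht
  have htR : (n : ℝ) ≤ 32 * t := by exact_mod_cast ht
  have hn'R : (n' : ℝ) ≤ n := by exact_mod_cast hn'
  have hk4 : (k : ℝ) ^ 4 ≤ n := by exact_mod_cast hkn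
  have hnk4 : (n : ℝ) ≤ (k + 1) ^ 4 := by exact_mod_cast hnk.le
  -- the quartic growth of `n` beats the quadratic exponents
  have hbk : 97 * C * (k : ℝ) ^ 2 ≤ b * n / 256 := by
    rw [div_le_iff₀ h0] at hkC
    have a1 : (k : ℝ) ≤ k ^ 2 := by nlinarith
    have a2 : 256 * 97 * (C : ℝ) ≤ k ^ 2 * b := hkC.trans (by gcongr)
    have a3 : 256 * 97 * (C : ℝ) * k ^ 2 ≤ k ^ 2 * b * k ^ 2 := by gcongr
    have a4 : (k : ℝ) ^ 2 * b * k ^ 2 = b * k ^ 4 := by ring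
    have a5 : b * (k : ℝ) ^ 4 ≤ b * n := by gcongr
    linarith
  have hk2 : (k : ℝ) ≤ C * k ^ 2 := by nlinarith
  have hBnd : Bnd p b (b / 512) n' s t ≤ Real.exp (-(2 * k / 3)) :=
    Bnd_le h0 h1 hkone hn' hnk hp2' hkR hC1 hsR htR hn'R hk2 hbk
  have hpow : (1 - b) ^ t ≤ Real.exp (-(2 * k / 3)) := by
    refine (one_sub_pow_le (by linarith) _).trans (Real.exp_le_exp.2 ?_)
    have d4 : b * (n / 32) ≤ b * t := by gcongr; linarith
    nlinarith
  have h2p : 2 / (p : ℝ) ≤ 2 * Real.exp (-(2 * k / 3)) := by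
    rw [Real.exp_neg, ← div_eq_mul_inv]
    refine div_le_div_of_nonneg_left (by norm_num) (Real.exp_pos _) ?_
    calc Real.exp (2 * k / 3) ≤ Real.exp (k * Real.log 2) := Real.exp_le_exp.2 (by nlinarith)
      _ = (2 : ℝ) ^ k := (hexp2 k).symm
      _ ≤ p := by exact_mod_cast hp1.le
  have hR : Rer p b n' s t ≤ 4 * Real.exp (-(2 * k / 3)) := by
    unfold Rer; linarith
  have hsq : √(Rer p b n' s t) ≤ 2 * Real.exp (-(k / 3)) := by
    rw [Real.sqrt_le_iff]
    refine ⟨by positivity, hR.trans (le_of_eq ?_)⟩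
    rw [mul_pow, ← Real.exp_nat_mul]
    norm_num
    ring
  have htail : Real.exp (-((n : ℝ) - 1) / 4) ≤ Real.exp (-((k : ℝ) ^ 4 - 1) / 4) :=
    Real.exp_le_exp.2 (by linarith)
  have hfin : Real.exp (-√(k + 1)) ≤ Real.exp (-(n : ℝ) ^ (1 / 8 : ℝ)) := by
    refine Real.exp_le_exp.2 (neg_le_neg ?_)
    calc (n : ℝ) ^ (1 / 8 : ℝ) ≤ (((k : ℝ) + 1) ^ 4) ^ (1 / 8 : ℝ) := by gcongr
      _ = √(k + 1) := by
        rw [Real.sqrt_eq_rpow, ← Real.rpow_natCast, ← Real.rpow_mul (by positivity)]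
        norm_num
  refine le_trans ?_ ((hk0 k hkk0).trans hfin)
  have := Rer_nonneg (p := p) h0 h1 n' s t
  gcongr

end Numerics

/-! ### Laws with two atoms, bordering, and resampling -/

section Tools

variable {p : ℕ} [Fact p.Prime] {Ω : Type} [Fintype Ω]

/-- A pair of values, each taken with probability at least `q`, makes the characteristic function
decay: the two corresponding terms add up to modulus at most `2 - kap / 2`. -/
lemma char_two_atoms {w : Ω → ℝ} {val : Ω → ZMod p} (hw : ∀ a, 0 ≤ w a) (hs : ∑ a, w a = 1)
    {a₁ a₂ : Ω} (hne : a₁ ≠ a₂) {q : ℝ} (hq0 : 0 ≤ q) (h₁ : q ≤ w a₁) (h₂ : q ≤ w a₂)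
    (t : ZMod p) : ‖∑ a, (w a : ℂ) * ZMod.stdAddChar (t * val a)‖
      ≤ 1 - 4 * (q / 8) * kap (val a₁ - val a₂) t := by
  have hsplit : ∀ f : Ω → ℂ, ∑ a, (w a : ℂ) * f a =
      ∑ a, ((w a - (if a = a₁ then q else 0) - (if a = a₂ then q else 0) : ℝ) : ℂ) * f a
        + q * (f a₁ + f a₂) := by
    intro f
    push_cast
    simp only [sub_mul, Finset.sum_sub_distrib]
    have : ∀ c : Ω, ∑ a, (((if a = c then q else 0 : ℝ) : ℝ) : ℂ) * f a = q * f c := by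
      intro c
      rw [Finset.sum_eq_single c (fun b _ h => by simp [h]) (by simp)]
      simp
    rw [this, this]
    ring
  have hnn : ∀ a, 0 ≤ w a - (if a = a₁ then q else 0) - (if a = a₂ then q else 0) := by
    intro a
    by_cases e1 : a = a₁
    · subst e1; simp [hne, h₁]
    · by_cases e2 : a = a₂
      · subst e2; simp [e1, h₂]
      · simp [e1, e2, hw]
  have hA : ‖∑ a, ((w a - (if a = a₁ then q else 0) - (if a = a₂ then q else 0) : ℝ) : ℂ)
      * ZMod.stdAddChar (t * val a)‖ ≤ 1 - 2 * q := by
    refine (norm_sum_le _ _).trans (le_of_eq ?_)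
    have : ∀ a, ‖((w a - (if a = a₁ then q else 0) - (if a = a₂ then q else 0) : ℝ) : ℂ)
      * ZMod.stdAddChar (t * val a)‖ =
        w a - (if a = a₁ then q else 0) - (if a = a₂ then q else 0) := by
      intro a
      rw [norm_mul, norm_char, mul_one, Complex.norm_real, Real.norm_of_nonneg (hnn a)]
    simp only [this, Finset.sum_sub_distrib, hs, Finset.sum_ite_eq', Finset.mem_univ, if_true]
    ring
  have hB : ‖ZMod.stdAddChar (t * val a₁) + ZMod.stdAddChar (t * val a₂)‖
      ≤ 2 - kap (val a₁ - val a₂) t / 2 := by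
    have e : ZMod.stdAddChar (t * val a₁) + ZMod.stdAddChar (t * val a₂) =
        ZMod.stdAddChar (t * val a₂) * (1 + ZMod.stdAddChar ((val a₁ - val a₂) * t)) := by
      rw [mul_add, mul_one, ← AddChar.map_add_eq_mul, add_comm]
      congr 2
      ring
    rw [e, norm_mul, norm_char, one_mul]
    have hk := kap_le (val a₁ - val a₂) t
    have hc := char_sq ((val a₁ - val a₂) * t)
    refine le_of_sq_le_sq ?_ (by linarith)
    rw [Complex.sq_norm, Complex.normSq_apply]
    simp only [Complex.add_re, Complex.one_re, Complex.add_im, Complex.one_im, zero_add]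
    have hk' : kap (val a₁ - val a₂) t = 1 - (ZMod.stdAddChar ((val a₁ - val a₂) * t)).re := rfl
    set r := (ZMod.stdAddChar ((val a₁ - val a₂) * t)).re
    nlinarith [sq_nonneg (1 - r)]
  rw [hsplit]
  refine (norm_add_le _ _).trans ?_
  rw [norm_mul, Complex.norm_real, Real.norm_of_nonneg hq0]
  have := mul_le_mul_of_nonneg_left hB hq0
  nlinarith

/-- The law with the given weights and values; its walk steps by the difference of the values at two
atoms of weight at least `q`. -/
def twoAtomLaw (w : Ω → ℝ) (val : Ω → ZMod p) (hw : ∀ a, 0 ≤ w a) (hs : ∑ a, w a = 1)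
    (a₁ a₂ : Ω) (q : ℝ) (hq0 : 0 < q) (h₁ : q ≤ w a₁) (h₂ : q ≤ w a₂)
    (hv : val a₁ ≠ val a₂) : Law p Ω (q / 8) where
  w := w
  val := val
  w_nonneg := hw
  w_sum := hs
  m := val a₁ - val a₂
  m_ne := sub_ne_zero.2 hv
  b_pos := by linarith
  b_le := by
    have hne : a₁ ≠ a₂ := fun h => hv (by rw [h])
    have : w a₁ + w a₂ ≤ 1 := by
      rw [← hs, ← Finset.sum_pair hne]
      exact Finset.sum_le_sum_of_subset_of_nonneg (Finset.subset_univ _) fun _ _ _ => hw _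
    linarith
  char_le := fun t => char_two_atoms hw hs (fun h => hv (by rw [h])) hq0.le h₁ h₂ t

/-- A singular matrix has a column that depends on the others. Deleting this column and the row with
the same index leaves a bordered system. -/
lemma border {n : ℕ} {F : Type} [Field F] (M : Matrix (Fin n) (Fin n) F) (h : M.det = 0) :
    ∃ a, ∃ w' : {j // j ≠ a} → F, ∀ i, ∑ j : {j // j ≠ a}, M i j * w' j = - M i a := by
  obtain ⟨v, hv, hMv⟩ := Matrix.exists_mulVec_eq_zero_iff.2 h
  obtain ⟨a, ha⟩ := Function.ne_iff.1 hv
  simp only [Pi.zero_apply] at ha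
  refine ⟨a, fun j => v j / v a, fun i => ?_⟩
  have h1 : ∑ j, M i j * v j = 0 := congr_fun hMv i
  rw [Fintype.sum_eq_add_sum_subtype_ne _ a] at h1
  have h2 : ∑ j : {j // j ≠ a}, M i j * (v j / v a) = (∑ j : {j // j ≠ a}, M i j * v j) / v a := by
    rw [Finset.sum_div]
    exact Finset.sum_congr rfl fun j _ => by ring
  rw [h2, div_eq_iff ha]
  linear_combination h1

lemma halves {V : Type} (S : Finset V) {t : ℕ} (h : 2 * t ≤ S.card) :
    ∃ I J : Finset V, I ⊆ S ∧ J ⊆ S ∧ Disjoint I J ∧ I.card = t ∧ J.card = t := by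
  obtain ⟨I, hI, hIc⟩ := Finset.exists_subset_card_eq (by omega : t ≤ S.card)
  obtain ⟨J, hJ, hJc⟩ := Finset.exists_subset_card_eq
    (by rw [Finset.card_sdiff_of_subset hI]; omega : t ≤ (S \ I).card)
  exact ⟨I, J, hI, hJ.trans Finset.sdiff_subset,
    Finset.disjoint_of_subset_right hJ Finset.disjoint_sdiff, hIc, hJc⟩

/-- Conditioning on the variables outside `P` and `Q`: it suffices to bound the probability over
independent copies `z` of the variables in `P` and `y` of those in `Q`. -/
lemma two_resample {E : Type} [Fintype E] {w : Ω → ℝ} (hw : ∀ a, 0 ≤ w a) (hs : ∑ a, w a = 1)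
    (P Q : E → Prop) (A : (E → Ω) → Prop) {R : ℝ}
    (h : ∀ o, Ex w (fun z : E → Ω => Pr w fun y : E → Ω => A (mix P (mix Q o y) z)) ≤ R) :
    Pr w A ≤ R := by
  rw [Pr_resample hs P, Ex_resample hs Q]
  refine Ex_le_of_le hw hs fun o => ?_
  refine le_trans (le_of_eq ?_) (h o)
  unfold Pr
  exact Ex_comm _

end Tools

/-! ### Symmetric and skew-symmetric matrices modulo a prime -/

section SymSkew

variable {p : ℕ} [Fact p.Prime] {Ω : Type} [Fintype Ω] {b : ℝ} {n : ℕ}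

/-- The ordered pair that carries the variable of the unordered pair `{i, j}`. -/
def pr (i j : Fin n) : Fin n × Fin n := (min i j, max i j)

lemma pr_symm (i j : Fin n) : pr i j = pr j i := by
  simp [pr, min_comm, max_comm]

lemma pr_inj {i j k l : Fin n} (h : pr i j = pr k l) : (i = k ∧ j = l) ∨ (i = l ∧ j = k) := by
  simp only [pr, Prod.mk.injEq] at h
  obtain ⟨h1, h2⟩ := h
  rcases le_total i j with a | a <;> rcases le_total k l with c | c <;>
    simp only [a, c, min_eq_left, min_eq_right, max_eq_left, max_eq_right] at h1 h2 <;> tauto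

/-- The (skew-)symmetric matrix with signs `sg` off the diagonal and factor `D` on the diagonal. -/
def sgnMat (Λ : Law p Ω b) (sg : Fin n → Fin n → ZMod p) (D : ZMod p) (x : Fin n × Fin n → Ω) :
    Matrix (Fin n) (Fin n) (ZMod p) :=
  Matrix.of fun i j => if i = j then D * Λ.val (x (i, i)) else sg i j * Λ.val (x (pr i j))

/-- The principal submatrix of `sgnMat` avoiding `a`, as a function of its off-diagonal variables;
the diagonal is read off from `o`. -/
def innerEns (Λ : Law p Ω b) (sg : Fin n → Fin n → ZMod p) (D σ : ZMod p)
    (hsg : ∀ i j, sg i j = 1 ∨ sg i j = -1) (hσ : σ = 1 ∨ σ = -1)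
    (hsym : ∀ i j, i ≠ j → sg j i = σ * sg i j) (hD : D = σ * D)
    (a : Fin n) (o : Fin n × Fin n → Ω) : Ens Λ {j : Fin n // j ≠ a} (Fin n × Fin n) where
  ed i j := pr i.1 j.1
  ed_symm i j := pr_symm _ _
  ed_inj i j k l _ _ h := by
    rcases pr_inj h with ⟨h1, h2⟩ | ⟨h1, h2⟩
    · exact Or.inl ⟨Subtype.ext h1, Subtype.ext h2⟩
    · exact Or.inr ⟨Subtype.ext h1, Subtype.ext h2⟩
  sgn i j := sg i j
  sgn_eq i j := hsg _ _
  θ := 0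
  θ_eq := Or.inl rfl
  κ i := D * Λ.val (o (i, i))
  N z := Matrix.of fun i j =>
    if i = j then D * Λ.val (o (i, i)) else sg i j * Λ.val (z (pr i.1 j.1))
  mulVec_eq z u i := by
    simp only [Matrix.mulVec, dotProduct, Matrix.of_apply]
    rw [← Finset.add_sum_erase _ _ (Finset.mem_univ i), if_pos rfl, add_comm]
    congr 1
    refine Finset.sum_congr (by ext; simp) fun j hj => ?_
    have hne : j ≠ i := by simpa using hj
    rw [if_neg hne.symm]
    ring
  σ := σ
  σ_eq := hσ
  transpose_eq z := by
    ext i j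
    simp only [Matrix.transpose_apply, Matrix.smul_apply, Matrix.of_apply, smul_eq_mul]
    by_cases h : i = j
    · subst h
      simp only [if_true]
      rw [← mul_assoc, ← hD]
    · rw [if_neg h, if_neg (Ne.symm h), pr_symm, hsym i j (fun e => h (Subtype.ext e)), mul_assoc]

variable (Λ : Law p Ω b) (sg : Fin n → Fin n → ZMod p) (D σ : ZMod p)
  (hsg : ∀ i j, sg i j = 1 ∨ sg i j = -1) (hσ : σ = 1 ∨ σ = -1)
  (hsym : ∀ i j, i ≠ j → sg j i = σ * sg i j) (hD : D = σ * D)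

/-- The pairs avoiding `a`. -/
def innerP (a : Fin n) : Fin n × Fin n → Prop := fun e => e.1 ≠ e.2 ∧ e.1 ≠ a ∧ e.2 ≠ a

/-- The pairs of distinct indices that contain `a`. -/
def starP (a : Fin n) : Fin n × Fin n → Prop := fun e => e.1 ≠ e.2 ∧ (e.1 = a ∨ e.2 = a)

lemma pr_ne {i j : Fin n} (h : i ≠ j) : (pr i j).1 ≠ (pr i j).2 := by
  simp only [pr]
  rcases le_total i j with a | a <;> simp [a, h, h.symm]

lemma innerP_pr {a i j : Fin n} (hij : i ≠ j) (hi : i ≠ a) (hj : j ≠ a) : innerP a (pr i j) := by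
  refine ⟨pr_ne hij, ?_⟩
  simp only [pr]
  rcases le_total i j with c | c <;> simp [c, hi, hj]

lemma not_innerP_pr {a i : Fin n} : ¬ innerP a (pr i a) := by
  rintro ⟨-, h⟩
  simp only [pr] at h
  rcases le_total i a with c | c <;> simp [c] at h

lemma starP_pr {a i : Fin n} (hi : i ≠ a) : starP a (pr i a) := by
  refine ⟨pr_ne hi, ?_⟩
  simp only [pr]
  rcases le_total i a with c | c <;> simp [c]

variable {Λ sg D σ}

lemma sgnMat_inner (a : Fin n) (o y z : Fin n × Fin n → Ω) (i j : {j : Fin n // j ≠ a}) :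
    sgnMat Λ sg D (mix (innerP a) (mix (starP a) o y) z) i j =
      (innerEns Λ sg D σ hsg hσ hsym hD a o).N z i j := by
  simp only [sgnMat, innerEns, Matrix.of_apply]
  by_cases h : i = j
  · subst h
    simp [mix, innerP, starP]
  · have h' : i.1 ≠ j.1 := fun e => h (Subtype.ext e)
    rw [if_neg h, if_neg h']
    simp only [mix]
    rw [if_pos (innerP_pr h' i.2 j.2)]

lemma sgnMat_col (a : Fin n) (o y z : Fin n × Fin n → Ω) (i : {j : Fin n // j ≠ a}) :
    sgnMat Λ sg D (mix (innerP a) (mix (starP a) o y) z) i a =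
      xv Λ (fun j : {j : Fin n // j ≠ a} => pr j.1 a) (fun _ => 0) (fun j => sg j a) y i := by
  simp only [sgnMat, xv, Matrix.of_apply, zero_add]
  rw [if_neg i.2]
  simp only [mix]
  rw [if_neg not_innerP_pr, if_pos (starP_pr i.2)]

lemma sgnMat_diag (a : Fin n) (o y z : Fin n × Fin n → Ω) :
    sgnMat Λ sg D (mix (innerP a) (mix (starP a) o y) z) a a = D * Λ.val (o (a, a)) := by
  simp [sgnMat, mix, innerP, starP]

include hsym in
lemma sgnMat_row (hσ1 : σ = 1) (a : Fin n) (x : Fin n × Fin n → Ω) (i : {j : Fin n // j ≠ a}) :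
    sgnMat Λ sg D x a i = sgnMat Λ sg D x i a := by
  simp only [sgnMat, Matrix.of_apply]
  rw [if_neg i.2, if_neg i.2.symm, pr_symm, hsym i a i.2, hσ1, one_mul]

lemma star_inj (a : Fin n) : Function.Injective fun j : {j : Fin n // j ≠ a} => pr j.1 a := by
  intro i j h
  rcases pr_inj h with ⟨h1, -⟩ | ⟨h1, -⟩
  · exact Subtype.ext h1
  · exact absurd h1 i.2

/-- Union bound over the column that depends on the others. -/
lemma union_border {E : Type} [Fintype E] (M : (E → Ω) → Matrix (Fin n) (Fin n) (ZMod p)) {R : ℝ}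
    (h : ∀ a, Pr Λ.w (fun x => ∃ w' : {j // j ≠ a} → ZMod p,
      ∀ i, ∑ j : {j // j ≠ a}, M x i j * w' j = - M x i a) ≤ R) :
    Pr Λ.w (fun x => (M x).det = 0) ≤ n * R := by
  refine (Pr_mono Λ.w_nonneg fun x hx => ?_).trans ((Pr_exists_le Λ.w_nonneg Finset.univ
    (fun a x => ∃ w' : {j // j ≠ a} → ZMod p,
      ∀ i, ∑ j : {j // j ≠ a}, M x i j * w' j = - M x i a)).trans ?_)
  · obtain ⟨a, ha⟩ := border _ hx
    exact ⟨a, Finset.mem_univ _, ha⟩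
  · refine (Finset.sum_le_sum fun a _ => h a).trans ?_
    simp

lemma card_ne (a : Fin n) : Fintype.card {j : Fin n // j ≠ a} = n - 1 := by
  simp

include hsg hsym in
/-- Singularity of a symmetric matrix modulo `p`: one bordering step for each of the `n` columns. -/
theorem sym_bound (hσ1 : σ = 1) (h2 : (2 : ZMod p) ≠ 0) {s t : ℕ}
    (hs : (1 - b * (b / 512)) ^ s < 1 / p) (ht : 2 * t ≤ n - 1) :
    Pr Λ.w (fun x => (sgnMat Λ sg D x).det = 0) ≤
      n * (Rer p b (n - 1) s t + √(Rer p b (n - 1) s t)) := by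
  refine union_border _ fun a => two_resample Λ.w_nonneg Λ.w_sum (innerP a) (starP a) _ fun o => ?_
  have hD : D = σ * D := by rw [hσ1, one_mul]
  obtain ⟨I, J, -, -, hIJ, hI, hJ⟩ := halves (Finset.univ : Finset {j : Fin n // j ≠ a})
    (t := t) (by rw [Finset.card_univ, card_ne]; exact ht)
  have key := step_both (innerEns Λ sg D σ hsg (Or.inl hσ1) hsym hD a o) hσ1 h2 I J hIJ
    hI.ge hJ.ge hs (fun h => absurd h (by simp [innerEns])) (star_inj a) (fun _ => 0)
    (fun j => sg j a) (fun j _ => hsg _ _)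
    (fun j _ => by rcases hsg j a with h | h <;> rw [h] <;> simp)
    (D * Λ.val (o (a, a))) (fun _ => 0)
  rw [card_ne] at key
  refine le_trans (Ex_mono Λ.w_nonneg fun z => Pr_mono Λ.w_nonneg fun y => ?_) key
  rintro ⟨w', hw'⟩
  refine ⟨w', ?_, ?_⟩
  · funext i
    have := hw' i
    simp only [sgnMat_inner hsg (Or.inl hσ1) hsym hD, sgnMat_col] at this
    exact this
  · have := hw' a
    simp only [sgnMat_row hsym hσ1, sgnMat_diag, sgnMat_col] at this
    simp only [zero_mul, Finset.sum_const_zero, add_zero]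
    exact this

include hsg hsym in
/-- For skew-symmetric matrices of even size, the principal submatrices of odd size are always
singular, so only the singular case of the bordering step occurs. -/
theorem skew_bound (hσ1 : σ = -1) (hD0 : D = 0) (h2 : (2 : ZMod p) ≠ 0) (hn : Even n) {s t : ℕ}
    (hs : (1 - b * (b / 512)) ^ s < 1 / p) (ht : 2 * t ≤ n - 1) :
    Pr Λ.w (fun x => (sgnMat Λ sg D x).det = 0) ≤ n * Rer p b (n - 1) s t := by
  refine union_border _ fun a => two_resample Λ.w_nonneg Λ.w_sum (innerP a) (starP a) _ fun o => ?_
  have hD : D = σ * D := by rw [hD0, mul_zero]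
  have h0 := Λ.b_pos
  have h1 := Λ.b_le
  obtain ⟨I, hI⟩ := Finset.exists_subset_card_eq
    (by rw [Finset.card_univ, card_ne]; omega :
      t ≤ (Finset.univ : Finset {j : Fin n // j ≠ a}).card)
  have key := step_sing (innerEns Λ sg D σ hsg (Or.inr hσ1) hsym hD a o) (η := b / 512)
    (by linarith) (by linarith) I hs
    (fun h => absurd h (by simp [innerEns])) (star_inj a) (fun _ => 0)
    (fun j => sg j a) (fun j _ => hsg _ _)
  rw [card_ne, hI.2] at key
  have hR : Bnd p b (b / 512) (n - 1) s t + 2 / p ≤ Rer p b (n - 1) s t := by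
    have : (0 : ℝ) ≤ (1 - b) ^ t := pow_nonneg (by linarith) _
    unfold Rer
    linarith
  refine le_trans (Ex_mono Λ.w_nonneg fun z => Pr_mono Λ.w_nonneg fun y => ?_) (key.trans hR)
  rintro ⟨w', hw'⟩
  refine ⟨?_, w', ?_⟩
  · refine Matrix.exists_mulVec_eq_zero_iff.2 ?_
    have ht := (innerEns Λ sg D σ hsg (Or.inr hσ1) hsym hD a o).transpose_eq z
    have hd := congr_arg Matrix.det ht
    have hodd : Odd (n - 1) := Nat.Even.sub_odd a.pos hn odd_one
    have hσ' : (innerEns Λ sg D σ hsg (Or.inr hσ1) hsym hD a o).σ = -1 := hσ1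
    rw [Matrix.det_transpose, Matrix.det_smul, card_ne, hσ', hodd.neg_one_pow] at hd
    have h3 : (2 : ZMod p) * ((innerEns Λ sg D σ hsg (Or.inr hσ1) hsym hD a o).N z).det = 0 := by
      linear_combination hd
    exact (mul_eq_zero.1 h3).resolve_left h2
  · funext i
    have := hw' i
    simp only [sgnMat_inner hsg (Or.inr hσ1) hsym hD, sgnMat_col] at this
    exact this

end SymSkew

/-! ### The reduced Laplacian modulo a prime -/

section Tail

lemma Ex_prod {Ω E V : Type} [Fintype Ω] [Fintype E] [Fintype V] {w : Ω → ℝ} (hs : ∑ a, w a = 1)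
    {ι : V → E} (hι : Function.Injective ι) (h : V → Ω → ℝ) :
    Ex w (fun x : E → Ω => ∏ j, h j (x (ι j))) = ∏ j, ∑ a, w a * h j a := by
  have e1 : ∀ x : E → Ω, (∏ e, w (x e)) * ∏ j, h j (x (ι j)) =
      ∏ e, (w (x e) * ∏ j with ι j = e, h j (x e)) := by
    intro x
    rw [Finset.prod_mul_distrib]
    congr 1
    rw [← Finset.prod_fiberwise Finset.univ ι]
    refine Finset.prod_congr rfl fun e _ => Finset.prod_congr rfl fun j hj => ?_
    rw [(Finset.mem_filter.1 hj).2]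
  unfold Ex
  simp only [e1]
  have e2 := Finset.prod_univ_sum (fun _ : E => (Finset.univ : Finset Ω))
    (fun e a => w a * ∏ j with ι j = e, h j a)
  rw [Fintype.piFinset_univ] at e2
  rw [← e2, ← Finset.prod_fiberwise Finset.univ ι]
  refine Finset.prod_congr rfl fun e _ => ?_
  by_cases he : ∃ j, ι j = e
  · obtain ⟨j, rfl⟩ := he
    have : (Finset.univ.filter fun i => ι i = ι j) = {j} := by
      ext i
      simp [hι.eq_iff]
    simp [this]
  · have : (Finset.univ.filter fun i => ι i = e) = ∅ := by
      ext i
      simp only [Finset.mem_filter, Finset.mem_univ, true_and, Finset.notMem_empty, iff_false]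
      exact fun h => he ⟨i, h⟩
    simp [this, hs]

lemma exp_numeric : (1 + Real.exp (-2)) / 2 ≤ Real.exp (-(1 / 2)) := by
  have h1 := Real.exp_one_gt_d9
  have h2 := Real.exp_one_lt_d9
  have e1 : Real.exp (-1) * Real.exp 1 = 1 := by rw [← Real.exp_add]; simp
  have e2 : Real.exp (-2) = Real.exp (-1) * Real.exp (-1) := by rw [← Real.exp_add]; norm_num
  have e3 : Real.exp (-(1 / 2)) * Real.exp (-(1 / 2)) = Real.exp (-1) := by
    rw [← Real.exp_add]; norm_num
  have p1 := Real.exp_pos (-1)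
  have p2 := Real.exp_pos (-(1 / 2))
  have l1 : Real.exp (-1) ≤ 0.37 := by nlinarith
  have l2 : 0.36 ≤ Real.exp (-1) := by nlinarith
  have l3 : 0.6 ≤ Real.exp (-(1 / 2)) := by nlinarith
  nlinarith

/-- Chernoff bound for the number of pairs of distinct fair coins. -/
lemma tail_bound {E V : Type} [Fintype E] [Fintype V] {w : Bool → ℝ} (hw : ∀ a, w a = 1 / 2)
    {ι ι' : V → E} (hι : Function.Injective ι) (hne : ∀ i j, ι i ≠ ι' j) {t : ℕ}
    (ht : 16 * t ≤ Fintype.card V) :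
    Pr w (fun o : E → Bool => (Finset.univ.filter fun j => o (ι' j) ≠ o (ι j)).card < 2 * t)
      ≤ Real.exp (-(Fintype.card V : ℝ) / 4) := by
  have hw0 : ∀ a, 0 ≤ w a := fun a => by rw [hw]; norm_num
  have hs : ∑ a, w a = 1 := by simp [hw]
  let g : (E → Bool) → ℝ := fun o => ∏ j : V, if o (ι' j) ≠ o (ι j) then Real.exp (-2) else 1
  have hg : Ex w g ≤ Real.exp (-(Fintype.card V : ℝ) / 2) := by
    rw [Ex_resample hs (fun e => ∃ j, ι j = e)]
    refine Ex_le_of_le hw0 hs fun o => ?_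
    let h : V → Bool → ℝ := fun j v => if o (ι' j) ≠ v then Real.exp (-2) else 1
    have e1 : ∀ z : E → Bool, g (mix (fun e => ∃ j, ι j = e) o z) = ∏ j : V, h j (z (ι j)) := by
      intro z
      refine Finset.prod_congr rfl fun j _ => ?_
      have : ¬ ∃ i, ι i = ι' j := fun ⟨i, h⟩ => hne i j h
      simp [h, mix, this]
    rw [funext e1, Ex_prod hs hι]
    have e2 : ∀ j : V, ∑ a, w a * h j a =
        (1 + Real.exp (-2)) / 2 := by
      intro j
      rw [Fintype.sum_bool, hw, hw]
      cases hj : o (ι' j) <;> simp [h, hj] <;> ring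
    simp only [e2, Finset.prod_const, Finset.card_univ]
    calc _ ≤ (Real.exp (-(1 / 2))) ^ Fintype.card V :=
          pow_le_pow_left₀ (by positivity) exp_numeric _
      _ = _ := by rw [← Real.exp_nat_mul]; congr 1; ring
  have hM : ∀ o : E → Bool,
      (if (Finset.univ.filter fun j => o (ι' j) ≠ o (ι j)).card < 2 * t then (1 : ℝ) else 0)
        ≤ Real.exp (4 * t) * g o := by
    intro o
    have hgo : g o =
        Real.exp (-2) ^ (Finset.univ.filter fun j => o (ι' j) ≠ o (ι j)).card := by
      simp only [g]
      rw [Finset.prod_ite]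
      simp
    rw [hgo, ← Real.exp_nat_mul, ← Real.exp_add]
    split_ifs with h
    · refine Real.one_le_exp ?_
      have : ((Finset.univ.filter fun j => o (ι' j) ≠ o (ι j)).card : ℝ) ≤ 2 * t := by
        exact_mod_cast h.le
      linarith
    · exact (Real.exp_pos _).le
  have hfin : Ex w (fun o => Real.exp (4 * t) * g o) ≤ Real.exp (-(Fintype.card V : ℝ) / 4) := by
    calc Ex w (fun o => Real.exp (4 * t) * g o) = Real.exp (4 * t) * Ex w g := Ex_mul_left _ _
      _ ≤ Real.exp ((Fintype.card V : ℝ) / 4) * Real.exp (-(Fintype.card V : ℝ) / 2) := by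
        have : (16 : ℝ) * t ≤ Fintype.card V := by exact_mod_cast ht
        have h4 : Real.exp (4 * t) ≤ Real.exp ((Fintype.card V : ℝ) / 4) :=
          Real.exp_le_exp.2 (by linarith)
        exact mul_le_mul h4 hg (Ex_nonneg hw0 fun o => Finset.prod_nonneg fun j _ => by
          split_ifs <;> positivity) (Real.exp_pos _).le
      _ = Real.exp ((Fintype.card V : ℝ) / 4 + -(Fintype.card V : ℝ) / 2) :=
        (Real.exp_add _ _).symm
      _ = Real.exp (-(Fintype.card V : ℝ) / 4) := by ring_nf
  unfold Pr
  refine (Ex_mono hw0 fun o => ?_).trans hfin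
  convert hM o

end Tail

section Laplacian

variable {p : ℕ} [Fact p.Prime] {b : ℝ} {n : ℕ} (Λ : Law p Bool b)

/-- The edge indicator modulo `p`. -/
def ev (x : Fin (n + 1) × Fin (n + 1) → Bool) (i j : Fin (n + 1)) : ZMod p :=
  if i = j then 0 else Λ.val (x (pr i j))

/-- The reduced Laplacian modulo `p`. -/
def lapMat (x : Fin (n + 1) × Fin (n + 1) → Bool) : Matrix (Fin n) (Fin n) (ZMod p) :=
  Matrix.of fun i j => if i = j then -∑ k, ev Λ x k i.castSucc else ev Λ x i.castSucc j.castSucc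

/-- The pairs avoiding `a` and the root. -/
def innerL (a : Fin n) : Fin (n + 1) × Fin (n + 1) → Prop := fun e =>
  (e.1 ≠ a.castSucc ∧ e.1 ≠ Fin.last n) ∧ (e.2 ≠ a.castSucc ∧ e.2 ≠ Fin.last n)

variable {Λ}

lemma innerL_pr (a : Fin n) (i j : {j : Fin n // j ≠ a}) :
    innerL a (pr i.1.castSucc j.1.castSucc) := by
  have h : ∀ k : {j : Fin n // j ≠ a}, k.1.castSucc ≠ a.castSucc ∧ k.1.castSucc ≠ Fin.last n :=
    fun k => ⟨fun e => k.2 (Fin.castSucc_injective n e), (Fin.castSucc_lt_last _).ne⟩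
  unfold innerL pr
  rcases le_total i.1.castSucc j.1.castSucc with c | c
  · rw [min_eq_left c, max_eq_right c]; exact ⟨h i, h j⟩
  · rw [min_eq_right c, max_eq_left c]; exact ⟨h j, h i⟩

lemma not_innerL_of {a : Fin n} {u v : Fin (n + 1)} (h : u = a.castSucc ∨ u = Fin.last n) :
    ¬ innerL a (pr u v) := by
  unfold innerL pr
  rintro ⟨⟨h1, h2⟩, h3, h4⟩
  rcases le_total u v with c | c
  · rw [min_eq_left c] at h1 h2; tauto
  · rw [max_eq_left c] at h3 h4; tauto

/-- Exchanges the pairs `{a, j}` and `{root, j}` for every `j` with `y j = true`. -/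
def swp (a : Fin n) (y : {j : Fin n // j ≠ a} → Bool) (e : Fin (n + 1) × Fin (n + 1)) :
    Fin (n + 1) × Fin (n + 1) :=
  if ∃ j, y j = true ∧ (e = pr a.castSucc j.1.castSucc ∨ e = pr (Fin.last n) j.1.castSucc) then
    pr (Equiv.swap a.castSucc (Fin.last n) e.1) (Equiv.swap a.castSucc (Fin.last n) e.2)
  else e

lemma pr_map (τ : Fin (n + 1) → Fin (n + 1)) (u v : Fin (n + 1)) :
    pr (τ (pr u v).1) (τ (pr u v).2) = pr (τ u) (τ v) := by
  have : ∀ u v : Fin (n + 1), pr u v = (u, v) ∨ pr u v = (v, u) := by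
    intro u v
    unfold pr
    rcases le_total u v with c | c
    · left; rw [min_eq_left c, max_eq_right c]
    · right; rw [min_eq_right c, max_eq_left c]
  rcases this u v with h | h <;> rw [h]
  exact pr_symm _ _

lemma swap_fix (a : Fin n) (j : {j : Fin n // j ≠ a}) :
    Equiv.swap a.castSucc (Fin.last n) j.1.castSucc = j.1.castSucc :=
  Equiv.swap_apply_of_ne_of_ne (fun e => j.2 (Fin.castSucc_injective n e))
    (Fin.castSucc_lt_last _).ne

lemma pr_left_inj {n : ℕ} {u i j : Fin n} (h : pr u i = pr u j) : i = j := by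
  rcases pr_inj h with ⟨-, h⟩ | ⟨h1, h2⟩
  · exact h
  · rw [h2, ← h1]

lemma pr_a_ne_r (a : Fin n) (i j : {j : Fin n // j ≠ a}) :
    pr a.castSucc i.1.castSucc ≠ pr (Fin.last n) j.1.castSucc := by
  intro h
  rcases pr_inj h with ⟨h, -⟩ | ⟨-, h⟩
  · exact (Fin.castSucc_lt_last _).ne h
  · exact (Fin.castSucc_lt_last _).ne h

lemma swp_a (a : Fin n) (y : {j : Fin n // j ≠ a} → Bool) (j : {j : Fin n // j ≠ a}) :
    swp a y (pr a.castSucc j.1.castSucc) =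
      if y j then pr (Fin.last n) j.1.castSucc else pr a.castSucc j.1.castSucc := by
  unfold swp
  by_cases h : y j = true
  · rw [if_pos ⟨j, h, Or.inl rfl⟩, pr_map, swap_fix, Equiv.swap_apply_left, if_pos h]
  · rw [if_neg h, if_neg]
    rintro ⟨k, hk, e | e⟩
    · have : j = k := Subtype.ext (Fin.castSucc_injective n (pr_left_inj e))
      exact h (this ▸ hk)
    · exact pr_a_ne_r a j k e

lemma swp_r (a : Fin n) (y : {j : Fin n // j ≠ a} → Bool) (j : {j : Fin n // j ≠ a}) :
    swp a y (pr (Fin.last n) j.1.castSucc) =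
      if y j then pr a.castSucc j.1.castSucc else pr (Fin.last n) j.1.castSucc := by
  unfold swp
  by_cases h : y j = true
  · rw [if_pos ⟨j, h, Or.inr rfl⟩, pr_map, swap_fix, Equiv.swap_apply_right, if_pos h]
  · rw [if_neg h, if_neg]
    rintro ⟨k, hk, e | e⟩
    · exact pr_a_ne_r a k j e.symm
    · have : j = k := Subtype.ext (Fin.castSucc_injective n (pr_left_inj e))
      exact h (this ▸ hk)

lemma swp_inner (a : Fin n) (y : {j : Fin n // j ≠ a} → Bool) (i j : {j : Fin n // j ≠ a}) :
    swp a y (pr i.1.castSucc j.1.castSucc) = pr i.1.castSucc j.1.castSucc := by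
  unfold swp
  rw [if_neg]
  rintro ⟨k, -, e | e⟩
  · exact not_innerL_of (Or.inl rfl) (e ▸ innerL_pr a i j)
  · exact not_innerL_of (Or.inr rfl) (e ▸ innerL_pr a i j)

lemma swp_ra (a : Fin n) (y : {j : Fin n // j ≠ a} → Bool) :
    swp a y (pr (Fin.last n) a.castSucc) = pr (Fin.last n) a.castSucc := by
  unfold swp
  rw [if_neg]
  have h : ∀ k : {j : Fin n // j ≠ a}, k.1.castSucc ≠ a.castSucc ∧ k.1.castSucc ≠ Fin.last n :=
    fun k => ⟨fun e => k.2 (Fin.castSucc_injective n e), (Fin.castSucc_lt_last _).ne⟩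
  rintro ⟨k, -, e | e⟩
  · rcases pr_inj e with ⟨-, e⟩ | ⟨e, -⟩
    · exact (h k).1 e.symm
    · exact (h k).2 e.symm
  · exact (h k).1 (pr_left_inj e).symm

lemma swp_invol (a : Fin n) (y : {j : Fin n // j ≠ a} → Bool) :
    Function.Involutive (swp a y) := by
  intro e
  by_cases h : ∃ j, y j = true ∧
      (e = pr a.castSucc j.1.castSucc ∨ e = pr (Fin.last n) j.1.castSucc)
  · obtain ⟨j, hj, rfl | rfl⟩ := h
    · rw [swp_a, if_pos hj, swp_r, if_pos hj]
    · rw [swp_r, if_pos hj, swp_a, if_pos hj]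
  · have : swp a y e = e := by unfold swp; rw [if_neg h]
    rw [this, this]

lemma Pr_comp {Ω E : Type} [Fintype Ω] [Fintype E] {w : Ω → ℝ} {f : E → E}
    (hf : Function.Involutive f) (A : (E → Ω) → Prop) : Pr w (fun x => A (x ∘ f)) = Pr w A := by
  unfold Pr Ex
  let T : (E → Ω) ≃ (E → Ω) := Equiv.arrowCongr hf.toPerm (Equiv.refl Ω)
  rw [← Equiv.sum_comp T]
  refine Finset.sum_congr rfl fun x _ => ?_
  have hT : T x = x ∘ f := rfl
  have hp : ∏ e, w ((x ∘ f) e) = ∏ e, w (x e) := Equiv.prod_comp hf.toPerm fun e => w (x e)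
  have hff : (x ∘ f) ∘ f = x := by
    funext e
    simp [hf e]
  rw [hT, hp]
  simp only [hff]

/-- Permuting the independent coordinates by the involution `swp` changes nothing; the
switches `y` provide fresh randomness while the inner graph is resampled independently. -/
lemma swap_resample {w : Bool → ℝ} (hs : ∑ a, w a = 1) (a : Fin n)
    (A : (Fin (n + 1) × Fin (n + 1) → Bool) → Prop) :
    Pr w A = Ex w fun o : Fin (n + 1) × Fin (n + 1) → Bool =>
      Ex w fun z : Fin (n + 1) × Fin (n + 1) → Bool =>
      Pr w fun y : {j : Fin n // j ≠ a} → Bool => A (mix (innerL a) o z ∘ swp a y) := by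
  have h1 : ∀ y : {j : Fin n // j ≠ a} → Bool, Pr w (fun x => A (x ∘ swp a y)) = Pr w A :=
    fun y => Pr_comp (swp_invol a y) A
  have h2 : Pr w A = Ex w fun y : {j : Fin n // j ≠ a} → Bool =>
      Ex w fun o : Fin (n + 1) × Fin (n + 1) → Bool => Pr w
        fun z : Fin (n + 1) × Fin (n + 1) → Bool => A (mix (innerL a) o z ∘ swp a y) := by
    rw [← Ex_const (E := {j : Fin n // j ≠ a}) hs (Pr w A)]
    congr 1
    funext y
    rw [← h1 y, Pr_resample hs (innerL a)]
  rw [h2, Ex_comm]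
  congr 1
  funext o
  unfold Pr
  exact Ex_comm _

end Laplacian

/-! ### One bordering step for the Laplacian -/

section LapBound

variable {p : ℕ} [Fact p.Prime] {b : ℝ} {n : ℕ} (Λ : Law p Bool b)

lemma sum_split {F : Type} [AddCommMonoid F] (a : Fin n) (f : Fin (n + 1) → F) :
    ∑ k, f k = f a.castSucc + ∑ k : {j : Fin n // j ≠ a}, f k.1.castSucc + f (Fin.last n) := by
  rw [Fin.sum_univ_castSucc, Fintype.sum_eq_add_sum_subtype_ne _ a]

lemma lap_mulVec {V F : Type} [Fintype V] [CommRing F] (f : V → V → F) (k u : V → F) (i : V) :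
    ((Matrix.of fun i j => if i = j then k i - ∑ l ∈ Finset.univ.erase i, f i l else f i j) *ᵥ u) i
      = ∑ j ∈ Finset.univ.erase i, f i j * 1 * (u j - 1 * u i) + k i * u i := by
  have h1 : ∑ j ∈ Finset.univ.erase i, f i j * 1 * (u j - 1 * u i) =
      ∑ j ∈ Finset.univ.erase i, f i j * u j - (∑ j ∈ Finset.univ.erase i, f i j) * u i := by
    rw [Finset.sum_mul, ← Finset.sum_sub_distrib]
    exact Finset.sum_congr rfl fun j _ => by ring
  have h3 : ∀ d : F, ∑ j ∈ Finset.univ.erase i, (if i = j then d else f i j) * u j =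
      ∑ j ∈ Finset.univ.erase i, f i j * u j := by
    intro d
    refine Finset.sum_congr rfl fun j hj => ?_
    rw [if_neg (Finset.ne_of_mem_erase hj).symm]
  simp only [Matrix.mulVec, dotProduct, Matrix.of_apply]
  rw [← Finset.add_sum_erase _ _ (Finset.mem_univ i), h3, if_pos rfl, h1]
  ring

/-- The inner part of the reduced Laplacian, given the edges `o` to `a` and to the root. -/
def lapEns (a : Fin n) (o : Fin (n + 1) × Fin (n + 1) → Bool) :
    Ens Λ {j : Fin n // j ≠ a} (Fin (n + 1) × Fin (n + 1)) where
  ed i j := pr i.1.castSucc j.1.castSucc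
  ed_symm i j := pr_symm _ _
  ed_inj i j k l _ _ h := by
    have hi : ∀ u v : {j : Fin n // j ≠ a}, u.1.castSucc = v.1.castSucc → u = v :=
      fun u v h => Subtype.ext (Fin.castSucc_injective n h)
    rcases pr_inj h with ⟨h1, h2⟩ | ⟨h1, h2⟩
    · exact Or.inl ⟨hi _ _ h1, hi _ _ h2⟩
    · exact Or.inr ⟨hi _ _ h1, hi _ _ h2⟩
  sgn i j := 1
  sgn_eq i j := Or.inl rfl
  θ := 1
  θ_eq := Or.inr rfl
  κ i := -(Λ.val (o (pr a.castSucc i.1.castSucc)) + Λ.val (o (pr (Fin.last n) i.1.castSucc)))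
  N z := Matrix.of fun i j => if i = j then
      -(Λ.val (o (pr a.castSucc i.1.castSucc)) + Λ.val (o (pr (Fin.last n) i.1.castSucc)))
        - ∑ k ∈ Finset.univ.erase i, Λ.val (z (pr i.1.castSucc k.1.castSucc))
    else Λ.val (z (pr i.1.castSucc j.1.castSucc))
  mulVec_eq z u i := by
    convert lap_mulVec (fun i j : {j : Fin n // j ≠ a} => Λ.val (z (pr i.1.castSucc j.1.castSucc)))
      (fun i => -(Λ.val (o (pr a.castSucc i.1.castSucc)) +
        Λ.val (o (pr (Fin.last n) i.1.castSucc)))) u i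
  σ := 1
  σ_eq := Or.inl rfl
  transpose_eq z := by
    ext i j
    simp only [Matrix.transpose_apply, Matrix.of_apply, one_smul]
    by_cases h : i = j
    · subst h; rfl
    · rw [if_neg h, if_neg (Ne.symm h), pr_symm]

variable {Λ}

lemma x_inner (a : Fin n) (o z : Fin (n + 1) × Fin (n + 1) → Bool)
    (y : {j : Fin n // j ≠ a} → Bool) (i j : {j : Fin n // j ≠ a}) :
    (mix (innerL a) o z ∘ swp a y) (pr i.1.castSucc j.1.castSucc) =
      z (pr i.1.castSucc j.1.castSucc) := by
  rw [Function.comp_apply, swp_inner, mix, if_pos (innerL_pr a i j)]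

lemma x_a (hv1 : Λ.val true = 1) (hv0 : Λ.val false = 0) (a : Fin n)
    (o z : Fin (n + 1) × Fin (n + 1) → Bool)
    (y : {j : Fin n // j ≠ a} → Bool) (j : {j : Fin n // j ≠ a}) :
    Λ.val ((mix (innerL a) o z ∘ swp a y) (pr a.castSucc j.1.castSucc)) =
      Λ.val (o (pr a.castSucc j.1.castSucc)) + (Λ.val (o (pr (Fin.last n) j.1.castSucc)) -
        Λ.val (o (pr a.castSucc j.1.castSucc))) * Λ.val (y j) := by
  rw [Function.comp_apply, swp_a]
  cases h : y j
  · simp only [Bool.false_eq_true, if_false, mix, hv0]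
    rw [if_neg (not_innerL_of (Or.inl rfl))]
    ring
  · simp only [if_true, mix, hv1]
    rw [if_neg (not_innerL_of (Or.inr rfl))]
    ring

lemma x_r (hv1 : Λ.val true = 1) (hv0 : Λ.val false = 0) (a : Fin n)
    (o z : Fin (n + 1) × Fin (n + 1) → Bool)
    (y : {j : Fin n // j ≠ a} → Bool) (j : {j : Fin n // j ≠ a}) :
    Λ.val ((mix (innerL a) o z ∘ swp a y) (pr (Fin.last n) j.1.castSucc)) =
      Λ.val (o (pr (Fin.last n) j.1.castSucc)) - (Λ.val (o (pr (Fin.last n) j.1.castSucc)) -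
        Λ.val (o (pr a.castSucc j.1.castSucc))) * Λ.val (y j) := by
  rw [Function.comp_apply, swp_r]
  cases h : y j
  · simp only [Bool.false_eq_true, if_false, mix, hv0]
    rw [if_neg (not_innerL_of (Or.inr rfl))]
    ring
  · simp only [if_true, mix, hv1]
    rw [if_neg (not_innerL_of (Or.inl rfl))]
    ring

lemma x_ra (a : Fin n) (o z : Fin (n + 1) × Fin (n + 1) → Bool)
    (y : {j : Fin n // j ≠ a} → Bool) :
    (mix (innerL a) o z ∘ swp a y) (pr (Fin.last n) a.castSucc) =
      o (pr (Fin.last n) a.castSucc) := by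
  rw [Function.comp_apply, swp_ra, mix, if_neg (not_innerL_of (Or.inr rfl))]

lemma lap_inner (hv1 : Λ.val true = 1) (hv0 : Λ.val false = 0) (a : Fin n)
    (o z : Fin (n + 1) × Fin (n + 1) → Bool)
    (y : {j : Fin n // j ≠ a} → Bool) (i j : {j : Fin n // j ≠ a}) :
    lapMat Λ (mix (innerL a) o z ∘ swp a y) i j = (lapEns Λ a o).N z i j := by
  have hci : ∀ u v : Fin n, u.castSucc = v.castSucc ↔ u = v :=
    fun u v => (Fin.castSucc_injective n).eq_iff
  simp only [lapMat, lapEns, Matrix.of_apply]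
  by_cases h : i = j
  · subst h
    rw [if_pos rfl, if_pos rfl, sum_split a]
    have h1 : ∑ k : {j : Fin n // j ≠ a},
        ev Λ (mix (innerL a) o z ∘ swp a y) k.1.castSucc i.1.castSucc =
        ∑ k ∈ Finset.univ.erase i, Λ.val (z (pr i.1.castSucc k.1.castSucc)) := by
      rw [← Finset.add_sum_erase _ _ (Finset.mem_univ i)]
      have : ev Λ (mix (innerL a) o z ∘ swp a y) i.1.castSucc i.1.castSucc = 0 := by simp [ev]
      rw [this, zero_add]
      refine Finset.sum_congr (by ext; simp) fun k hk => ?_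
      have hne : k ≠ i := by simpa using hk
      unfold ev
      rw [if_neg (fun e => hne (Subtype.ext ((hci _ _).1 e))), x_inner, pr_symm]
    have h2 : ev Λ (mix (innerL a) o z ∘ swp a y) a.castSucc i.1.castSucc +
        ev Λ (mix (innerL a) o z ∘ swp a y) (Fin.last n) i.1.castSucc =
        Λ.val (o (pr a.castSucc i.1.castSucc)) +
          Λ.val (o (pr (Fin.last n) i.1.castSucc)) := by
      unfold ev
      rw [if_neg (fun e => i.2 ((hci _ _).1 e).symm), if_neg (Fin.castSucc_lt_last _).ne',
        x_a hv1 hv0, x_r hv1 hv0]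
      ring
    rw [h1, ← h2]
    ring
  · have h' : i.1 ≠ j.1 := fun e => h (Subtype.ext e)
    rw [if_neg h, if_neg h', ev, if_neg (fun e => h' ((hci _ _).1 e)), x_inner]

lemma lap_col (hv1 : Λ.val true = 1) (hv0 : Λ.val false = 0) (a : Fin n)
    (o z : Fin (n + 1) × Fin (n + 1) → Bool)
    (y : {j : Fin n // j ≠ a} → Bool) (i : {j : Fin n // j ≠ a}) :
    lapMat Λ (mix (innerL a) o z ∘ swp a y) i a =
      xv Λ id (fun j => Λ.val (o (pr a.castSucc j.1.castSucc)))
        (fun j => Λ.val (o (pr (Fin.last n) j.1.castSucc)) -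
          Λ.val (o (pr a.castSucc j.1.castSucc))) y i := by
  have hne : i.1.castSucc ≠ a.castSucc := fun e => i.2 (Fin.castSucc_injective n e)
  simp only [lapMat, Matrix.of_apply, xv, id]
  rw [if_neg i.2, ev, if_neg hne, pr_symm, x_a hv1 hv0]

lemma lap_row (a : Fin n) (x : Fin (n + 1) × Fin (n + 1) → Bool) (i : {j : Fin n // j ≠ a}) :
    lapMat Λ x a i = lapMat Λ x i a := by
  have hne : i.1.castSucc ≠ a.castSucc := fun e => i.2 (Fin.castSucc_injective n e)
  simp only [lapMat, Matrix.of_apply]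
  rw [if_neg i.2, if_neg i.2.symm, ev, ev, if_neg hne, if_neg hne.symm, pr_symm]

lemma lap_diag (hv1 : Λ.val true = 1) (hv0 : Λ.val false = 0) (a : Fin n)
    (o z : Fin (n + 1) × Fin (n + 1) → Bool) (y : {j : Fin n // j ≠ a} → Bool) :
    lapMat Λ (mix (innerL a) o z ∘ swp a y) a a =
      -(Λ.val (o (pr (Fin.last n) a.castSucc)) +
        ∑ j : {j : Fin n // j ≠ a}, Λ.val (o (pr a.castSucc j.1.castSucc))) +
      ∑ j : {j : Fin n // j ≠ a}, (-(Λ.val (o (pr (Fin.last n) j.1.castSucc)) -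
          Λ.val (o (pr a.castSucc j.1.castSucc)))) * Λ.val (y (id j)) := by
  simp only [lapMat, Matrix.of_apply, if_true, id]
  rw [sum_split a]
  have h0 : ev Λ (mix (innerL a) o z ∘ swp a y) a.castSucc a.castSucc = 0 := by simp [ev]
  have h1 : ∀ j : {j : Fin n // j ≠ a},
      ev Λ (mix (innerL a) o z ∘ swp a y) j.1.castSucc a.castSucc =
      Λ.val (o (pr a.castSucc j.1.castSucc)) + (Λ.val (o (pr (Fin.last n) j.1.castSucc)) -
        Λ.val (o (pr a.castSucc j.1.castSucc))) * Λ.val (y j) := by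
    intro j
    rw [ev, if_neg (fun e => j.2 (Fin.castSucc_injective n e)), pr_symm, x_a hv1 hv0]
  have h2 : ev Λ (mix (innerL a) o z ∘ swp a y) (Fin.last n) a.castSucc =
      Λ.val (o (pr (Fin.last n) a.castSucc)) := by
    rw [ev, if_neg (Fin.castSucc_lt_last _).ne', x_ra]
  simp only [h0, h1, h2, Finset.sum_add_distrib, neg_mul, Finset.sum_neg_distrib]
  ring

/-- Indices `j` whose edges to `a` and to the root differ, so that the switch `y j` is effective. -/
def diffSet (a : Fin n) (o : Fin (n + 1) × Fin (n + 1) → Bool) : Finset {j : Fin n // j ≠ a} :=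
  Finset.univ.filter fun j =>
    o (pr (Fin.last n) j.1.castSucc) ≠ o (pr a.castSucc j.1.castSucc)

/-- The bordering step for the Laplacian, when enough switches `y j` are effective. Flipping `y j` changes
the new column at `j` by `± 1` and leaves the inner matrix unchanged. -/
lemma lap_step (hv1 : Λ.val true = 1) (hv0 : Λ.val false = 0) (h2 : (2 : ZMod p) ≠ 0) {s t : ℕ}
    (hs : (1 - b * (b / 512)) ^ s < 1 / p) (ht0 : 0 < t) (a : Fin n)
    (o : Fin (n + 1) × Fin (n + 1) → Bool) (ht : 2 * t ≤ (diffSet a o).card) :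
    Ex Λ.w (fun z : Fin (n + 1) × Fin (n + 1) → Bool =>
      Pr Λ.w fun y : {j : Fin n // j ≠ a} → Bool => ∃ w' : {j // j ≠ a} → ZMod p,
        ∀ i, ∑ j : {j // j ≠ a}, lapMat Λ (mix (innerL a) o z ∘ swp a y) i j * w' j =
          - lapMat Λ (mix (innerL a) o z ∘ swp a y) i a) ≤
      Rer p b (n - 1) s t + √(Rer p b (n - 1) s t) := by
  obtain ⟨I, J, hIs, hJs, hIJ, hI, hJ⟩ := halves (diffSet a o) ht
  have hδ : ∀ j ∈ diffSet a o, (Λ.val (o (pr (Fin.last n) j.1.castSucc)) -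
          Λ.val (o (pr a.castSucc j.1.castSucc)) = 1 ∨
      Λ.val (o (pr (Fin.last n) j.1.castSucc)) -
          Λ.val (o (pr a.castSucc j.1.castSucc)) = -1) ∧ (lapEns Λ a o).κ j ≠ 0 := by
    intro j hj
    have hj' := (Finset.mem_filter.1 hj).2
    simp only [lapEns]
    cases e1 : o (pr (Fin.last n) j.1.castSucc) <;>
      cases e2 : o (pr a.castSucc j.1.castSucc) <;>
      simp [e1, e2, hv0, hv1] at hj' ⊢
  have hIne : I.Nonempty := Finset.card_pos.1 (by omega)
  have key := step_both (lapEns Λ a o) rfl h2 I J hIJ hI.ge hJ.ge hs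
    (fun _ => ⟨hIne.choose, hIne.choose_spec, (hδ _ (hIs hIne.choose_spec)).2⟩)
    Function.injective_id (fun j => Λ.val (o (pr a.castSucc j.1.castSucc)))
    (fun j => Λ.val (o (pr (Fin.last n) j.1.castSucc)) - Λ.val (o (pr a.castSucc j.1.castSucc)))
    (fun j hj => (hδ j (hIs hj)).1)
    (fun j hj => by rcases (hδ j (hJs hj)).1 with h | h <;> rw [h] <;> simp)
    (-(Λ.val (o (pr (Fin.last n) a.castSucc)) +
        ∑ j : {j : Fin n // j ≠ a}, Λ.val (o (pr a.castSucc j.1.castSucc))))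
    (fun j => -(Λ.val (o (pr (Fin.last n) j.1.castSucc)) -
          Λ.val (o (pr a.castSucc j.1.castSucc))))
  rw [card_ne] at key
  refine le_trans (Ex_mono Λ.w_nonneg fun z => Pr_mono Λ.w_nonneg fun y => ?_) key
  rintro ⟨w', hw'⟩
  refine ⟨w', ?_, ?_⟩
  · funext i
    have := hw' i
    simp only [lap_inner hv1 hv0, lap_col hv1 hv0] at this
    exact this
  · have := hw' a
    simp only [lap_row] at this
    rw [lap_diag hv1 hv0] at this
    simp only [lap_col hv1 hv0] at this
    exact this

/-- Singularity of the reduced Laplacian modulo `p`; the exponential term is the probability that too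
few switches are effective. -/
theorem lap_bound (hw : ∀ a, Λ.w a = 1 / 2) (hv1 : Λ.val true = 1) (hv0 : Λ.val false = 0)
    (h2 : (2 : ZMod p) ≠ 0) {s t : ℕ}
    (hs : (1 - b * (b / 512)) ^ s < 1 / p) (ht0 : 0 < t) (ht : 16 * t ≤ n - 1) :
    Pr Λ.w (fun x => (lapMat (n := n) Λ x).det = 0) ≤
      n * (Rer p b (n - 1) s t + √(Rer p b (n - 1) s t) + Real.exp (-((n : ℝ) - 1) / 4)) := by
  refine union_border _ fun a => ?_
  rw [swap_resample Λ.w_sum a]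
  have hR : 0 ≤ Rer p b (n - 1) s t + √(Rer p b (n - 1) s t) :=
    add_nonneg (Rer_nonneg Λ.b_pos Λ.b_le _ _ _) (Real.sqrt_nonneg _)
  have htail : Pr Λ.w (fun o : Fin (n + 1) × Fin (n + 1) → Bool => (diffSet a o).card < 2 * t)
      ≤ Real.exp (-((n : ℝ) - 1) / 4) := by
    have hinj : Function.Injective
        fun j : {j : Fin n // j ≠ a} => pr a.castSucc j.1.castSucc := fun i j h =>
      Subtype.ext (Fin.castSucc_injective n (pr_left_inj h))
    have := tail_bound (w := Λ.w) hw hinj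
      (ι' := fun j : {j : Fin n // j ≠ a} => pr (Fin.last n) j.1.castSucc)
      (fun i j => pr_a_ne_r a i j) (t := t) (by rw [card_ne]; exact ht)
    rw [card_ne, Nat.cast_sub a.pos, Nat.cast_one] at this
    exact this
  calc _ ≤ Ex Λ.w (fun o : Fin (n + 1) × Fin (n + 1) → Bool =>
        (Rer p b (n - 1) s t + √(Rer p b (n - 1) s t)) +
          if (diffSet a o).card < 2 * t then 1 else 0) := by
        refine Ex_mono Λ.w_nonneg fun o => ?_
        split_ifs with h
        · refine (Ex_le_of_le Λ.w_nonneg Λ.w_sum fun z =>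
            Pr_le_one Λ.w_nonneg Λ.w_sum _).trans ?_
          linarith
        · rw [add_zero]
          exact lap_step hv1 hv0 h2 hs ht0 a o (not_lt.1 h)
    _ = (Rer p b (n - 1) s t + √(Rer p b (n - 1) s t)) +
        Pr Λ.w (fun o : Fin (n + 1) × Fin (n + 1) → Bool => (diffSet a o).card < 2 * t) := by
        rw [Ex_add, Ex_const Λ.w_sum]
        unfold Pr
        congr!
    _ ≤ _ := by gcongr

end LapBound

/-! ### Passing from integer matrices to residues -/

section Transfer

lemma two_atoms {α : ℝ} (hα : 0 < α) {μ : Measure ℤ} (hμ : IsProbabilityMeasure μ)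
    (hbal : IsBalanced α μ) : ∃ a₁ a₂ : ℤ, a₁ ≠ a₂ ∧ μ {a₁} ≠ 0 ∧ μ {a₂} ≠ 0 := by
  have hnull : ∀ S : Set ℤ, (∀ a ∈ S, μ {a} = 0) → μ S = 0 := by
    intro S h
    rw [← Set.biUnion_of_singleton S]
    exact (measure_biUnion_null_iff S.to_countable).2 h
  obtain ⟨a₁, h₁⟩ : ∃ a, μ {a} ≠ 0 := by
    by_contra hcon
    push Not at hcon
    have := hnull Set.univ fun a _ => hcon a
    simp at this
  by_contra hcon
  push Not at hcon
  have h0 : μ {a₁}ᶜ = 0 := hnull _ fun a ha => hcon a₁ a (Ne.symm ha) h₁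
  have h1 : μ {a₁} = 1 := (prob_compl_eq_zero_iff (MeasurableSet.singleton _)).1 h0
  have h2 := hbal 2 Nat.prime_two (a₁ : ZMod 2)
  have h3 : μ {a₁} ≤ μ {x : ℤ | (x : ZMod 2) = (a₁ : ZMod 2)} :=
    measure_mono (by rintro x rfl; rfl)
  rw [h1] at h3
  have h4 : ENNReal.ofReal (1 - α) < 1 := by
    rw [← ENNReal.ofReal_one]
    exact (ENNReal.ofReal_lt_ofReal_iff one_pos).2 (by linarith)
  exact absurd (h3.trans h2) (not_le.2 h4)

/-- The weights of the reduction of `μ` modulo `p`. -/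
def resW (μ : Measure ℤ) (p : ℕ) (r : ZMod p) : ℝ := (μ {x : ℤ | (x : ZMod p) = r}).toReal

lemma resW_sum {μ : Measure ℤ} (hμ : IsProbabilityMeasure μ) (p : ℕ) [Fact p.Prime] :
    ∑ r : ZMod p, resW μ p r = 1 := by
  have h := sum_measure_preimage_singleton (μ := μ) (Finset.univ : Finset (ZMod p))
    (f := fun x : ℤ => (x : ZMod p)) (fun y _ => MeasurableSet.of_discrete)
  unfold resW
  rw [← ENNReal.toReal_sum fun _ _ => measure_ne_top _ _]
  have h' : ∑ r : ZMod p, μ {x : ℤ | (x : ZMod p) = r} = 1 := by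
    simp only [Finset.coe_univ, Set.preimage_univ, measure_univ] at h
    exact h
  rw [h']
  simp

lemma resW_ge {μ : Measure ℤ} (hμ : IsProbabilityMeasure μ) (p : ℕ) (a : ℤ) :
    (μ {a}).toReal ≤ resW μ p (a : ZMod p) :=
  ENNReal.toReal_mono (measure_ne_top _ _) (measure_mono (by rintro x rfl; rfl))

/-- The reduction modulo `p` of a probability measure on `ℤ` with two atoms of mass at least `q`. -/
def resLaw {μ : Measure ℤ} (hμ : IsProbabilityMeasure μ) (p : ℕ) [Fact p.Prime] (a₁ a₂ : ℤ) (q : ℝ)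
    (hq0 : 0 < q) (h₁ : q ≤ (μ {a₁}).toReal) (h₂ : q ≤ (μ {a₂}).toReal)
    (hv : (a₁ : ZMod p) ≠ (a₂ : ZMod p)) : Law p (ZMod p) (q / 8) :=
  twoAtomLaw (resW μ p) id (fun _ => ENNReal.toReal_nonneg) (resW_sum hμ p) a₁ a₂ q hq0
    (h₁.trans (resW_ge hμ p a₁)) (h₂.trans (resW_ge hμ p a₂)) hv

lemma pi_le {E : Type} [Fintype E] {μ : Measure ℤ} (hμ : IsProbabilityMeasure μ)
    (p : ℕ) [Fact p.Prime] (B : (E → ZMod p) → Prop) (S : Set (E → ℤ))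
    (hS : ∀ x ∈ S, B fun e => (x e : ZMod p)) :
    ((Measure.pi fun _ : E => μ) S).toReal ≤ Pr (resW μ p) B := by
  have h1 : S ⊆ ⋃ y ∈ (Finset.univ.filter B : Finset (E → ZMod p)),
      Set.pi Set.univ fun e => {x : ℤ | (x : ZMod p) = y e} := by
    intro x hx
    simp only [Set.mem_iUnion]
    exact ⟨fun e => (x e : ZMod p), by simp [hS x hx], by simp⟩
  have h2 : (Measure.pi fun _ : E => μ) S ≤
      ∑ y with B y, ∏ e, μ {x : ℤ | (x : ZMod p) = y e} := by
    refine (measure_mono h1).trans ((measure_biUnion_finset_le _ _).trans (le_of_eq ?_))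
    exact Finset.sum_congr rfl fun y _ => Measure.pi_pi _ _
  have hfin : ∀ y : E → ZMod p, ∏ e, μ {x : ℤ | (x : ZMod p) = y e} ≠ ⊤ :=
    fun y => ENNReal.prod_ne_top fun e _ => measure_ne_top _ _
  refine (ENNReal.toReal_mono (ENNReal.sum_ne_top.2 fun y _ => hfin y) h2).trans (le_of_eq ?_)
  rw [ENNReal.toReal_sum fun y _ => hfin y]
  unfold Pr Ex
  simp only [ENNReal.toReal_prod, mul_ite, mul_one, mul_zero]
  rw [Finset.sum_filter]
  rfl

lemma det_cast {n : ℕ} (p : ℕ) (M : Matrix (Fin n) (Fin n) ℤ) (h : M.det = 0) :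
    (M.map (Int.cast : ℤ → ZMod p)).det = 0 := by
  have := (Int.castRingHom (ZMod p)).map_det M
  rw [h, map_zero] at this
  exact this.symm

lemma sym_map {b : ℝ} {n p : ℕ} [Fact p.Prime] (Λ : Law p (ZMod p) b) (hΛ : Λ.val = id)
    (x : Fin n × Fin n → ℤ) : (symMatrix n x).map (Int.cast : ℤ → ZMod p) =
      sgnMat Λ (fun _ _ => 1) 1 fun e => (x e : ZMod p) := by
  ext i j
  simp only [Matrix.map_apply, symMatrix, sgnMat, Matrix.of_apply, hΛ, id, one_mul, pr]
  by_cases h : i = j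
  · subst h; simp
  · rw [if_neg h]
    by_cases hij : i ≤ j
    · simp [hij]
    · simp [hij, (not_le.1 hij).le]

/-- The signs of a skew-symmetric matrix. -/
def skewSgn (p n : ℕ) (i j : Fin n) : ZMod p := if i < j then 1 else -1

lemma skew_map {b : ℝ} {n p : ℕ} [Fact p.Prime] (Λ : Law p (ZMod p) b) (hΛ : Λ.val = id)
    (x : Fin n × Fin n → ℤ) : (skewMatrix n x).map (Int.cast : ℤ → ZMod p) =
      sgnMat Λ (skewSgn p n) 0 fun e => (x e : ZMod p) := by
  ext i j
  simp only [Matrix.map_apply, skewMatrix, sgnMat, Matrix.of_apply, hΛ, id, zero_mul, pr, skewSgn]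
  rcases lt_trichotomy i j with h | h | h
  · simp [h, h.ne, h.le]
  · subst h; simp
  · simp [h, h.ne', h.le, h.not_gt]

lemma lap_map {b : ℝ} {n p : ℕ} [Fact p.Prime] (Λ : Law p Bool b) (hv1 : Λ.val true = 1)
    (hv0 : Λ.val false = 0) (x : Fin (n + 1) × Fin (n + 1) → Bool) :
    (redLap n x).map (Int.cast : ℤ → ZMod p) = lapMat Λ x := by
  have he : ∀ i j, ((edgeInd x i j : ℤ) : ZMod p) = ev Λ x i j := by
    intro i j
    have hb : ∀ c : Bool, (((if c then 1 else 0 : ℤ)) : ZMod p) = Λ.val c := by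
      intro c
      cases c <;> simp [hv0, hv1]
    simp only [edgeInd, ev, pr]
    rcases lt_trichotomy i j with h | h | h
    · rw [if_pos h, if_neg h.ne, min_eq_left h.le, max_eq_right h.le, hb]
    · subst h; simp
    · rw [if_neg h.not_gt, if_pos h, if_neg h.ne', min_eq_right h.le, max_eq_left h.le, hb]
  ext i j
  simp only [Matrix.map_apply, redLap, lapMat, Matrix.of_apply]
  by_cases h : i = j
  · rw [if_pos h, if_pos h, Int.cast_neg, Int.cast_sum]
    simp only [he]
  · rw [if_neg h, if_neg h, he]

/-- The fair coin with values `0` and `1` modulo `p`. -/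
def coinLaw (p : ℕ) [Fact p.Prime] : Law p Bool (1 / 2 / 8) :=
  twoAtomLaw (fun _ => 1 / 2) (fun c => if c then 1 else 0) (fun _ => by norm_num) (by simp)
    true false (1 / 2) (by norm_num) le_rfl le_rfl (by simp)

lemma graph_le {n : ℕ} (B : (Fin (n + 1) × Fin (n + 1) → Bool) → Prop)
    (S : Set (Fin (n + 1) × Fin (n + 1) → Bool)) (hS : ∀ x ∈ S, B x) :
    ((graphMeasure n) S).toReal ≤ Pr (fun _ => 1 / 2) B := by
  have hmeas : MeasurableSet S := S.toFinite.measurableSet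
  have hm : ((graphMeasure n) S).toReal =
      Pr (fun _ : Bool => (1 / 2 : ℝ)) (fun x : Fin (n + 1) × Fin (n + 1) → Bool => x ∈ S) := by
    unfold graphMeasure
    rw [PMF.toMeasure_uniformOfFintype_apply _ hmeas]
    unfold Pr Ex
    simp only [Finset.prod_const, ← Finset.mul_sum, Finset.sum_boole]
    rw [ENNReal.toReal_div, ENNReal.toReal_natCast, ENNReal.toReal_natCast,
      Fintype.card_subtype]
    simp only [Fintype.card_fun, Fintype.card_bool, Finset.card_univ]
    push_cast
    rw [div_eq_mul_inv, mul_comm, one_div, inv_pow]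
    congr!
  rw [hm]
  exact Pr_mono (fun _ => by norm_num) hS

end Transfer

/-! ### The three ensembles for large size -/

section Final

lemma cast_ne {p : ℕ} {a₁ a₂ : ℤ} (hne : a₁ ≠ a₂) (hp : (a₁ - a₂).natAbs < p) :
    (a₁ : ZMod p) ≠ (a₂ : ZMod p) := by
  intro h
  rw [← sub_eq_zero, ← Int.cast_sub, ZMod.intCast_zmod_eq_zero_iff_dvd] at h
  have h1 := Int.natAbs_dvd_natAbs.2 h
  rw [Int.natAbs_natCast] at h1
  have := Nat.le_of_dvd (Int.natAbs_pos.2 (sub_ne_zero.2 hne)) h1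
  omega

lemma two_ne {p : ℕ} (hp : 2 < p) : (2 : ZMod p) ≠ 0 := by
  intro h
  have h1 : ((2 : ℕ) : ZMod p) = 0 := by exact_mod_cast h
  rw [ZMod.natCast_eq_zero_iff] at h1
  have := Nat.le_of_dvd (by norm_num) h1
  omega

/-- The modulus and the weights needed for the matrix ensembles of a balanced measure. -/
lemma setup {α : ℝ} (hα : 0 < α) {μ : Measure ℤ} (hμ : IsProbabilityMeasure μ)
    (hbal : IsBalanced α μ) : ∃ b : ℝ, 0 < b ∧ b ≤ 1 / 16 ∧ ∃ m0 : ℕ, 2 ≤ m0 ∧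
      ∀ (p : ℕ) [Fact p.Prime], m0 < p → ∃ Λ : Law p (ZMod p) b, Λ.val = id ∧ Λ.w = resW μ p := by
  obtain ⟨a₁, a₂, hne, h₁, h₂⟩ := two_atoms hα hμ hbal
  set q := min (μ {a₁}).toReal (μ {a₂}).toReal with hq
  have hq0 : 0 < q := lt_min (ENNReal.toReal_pos h₁ (measure_ne_top _ _))
    (ENNReal.toReal_pos h₂ (measure_ne_top _ _))
  have key : ∀ (p : ℕ) [Fact p.Prime], max 2 (a₁ - a₂).natAbs < p →
      ∃ Λ : Law p (ZMod p) (q / 8), Λ.val = id ∧ Λ.w = resW μ p := fun p _ hp =>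
    ⟨resLaw hμ p a₁ a₂ q hq0 (min_le_left _ _) (min_le_right _ _)
      (cast_ne hne (lt_of_le_of_lt (le_max_right _ _) hp)), rfl, rfl⟩
  refine ⟨q / 8, by linarith, ?_, max 2 (a₁ - a₂).natAbs, le_max_left _ _, key⟩
  obtain ⟨p, hp1, hp⟩ := Nat.exists_infinite_primes (max 2 (a₁ - a₂).natAbs + 1)
  have := Fact.mk hp
  obtain ⟨Λ, -, -⟩ := key p hp1
  exact Λ.b_le

variable {α : ℝ} (hα : 0 < α) {μ : Measure ℤ} (hμ : IsProbabilityMeasure μ)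
  (hbal : IsBalanced α μ)

include hα hbal in
lemma sym_final : ∃ n0 : ℕ, ∀ n : ℕ, n0 ≤ n →
    ((matMeasure μ hμ n) {x | (symMatrix n x).det = 0}).toReal
      ≤ Real.exp (-(n : ℝ) ^ (1 / 8 : ℝ)) := by
  obtain ⟨b, hb0, hb1, m0, hm0, hlaw⟩ := setup hα hμ hbal
  obtain ⟨n0, hn0⟩ := numerics b hb0 hb1 m0
  refine ⟨max n0 64, fun n hn => ?_⟩
  have hn64 : 64 ≤ n := (le_max_right _ _).trans hn
  obtain ⟨p, s, hp, hmp, hs, hb⟩ := hn0 n ((le_max_left _ _).trans hn)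
  have := Fact.mk hp
  obtain ⟨Λ, hval, hw⟩ := hlaw p hmp
  have h1 := pi_le hμ p (fun x => (sgnMat Λ (fun _ _ => 1) 1 x).det = 0)
    {x : Fin n × Fin n → ℤ | (symMatrix n x).det = 0} (fun x hx => by
      rw [← sym_map Λ hval]
      exact det_cast p _ hx)
  have h2 := sym_bound (Λ := Λ) (n := n) (sg := fun _ _ => 1) (D := 1) (σ := 1)
    (fun _ _ => Or.inl rfl) (fun _ _ _ => by simp) rfl (two_ne (by omega)) hs
    (t := (n - 1) / 16) (by omega)
  rw [hw] at h2
  refine h1.trans (h2.trans (le_trans ?_ (hb (n - 1) ((n - 1) / 16) (by omega) (by omega))))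
  have := Real.exp_pos (-((n : ℝ) - 1) / 4)
  refine mul_le_mul_of_nonneg_left ?_ (Nat.cast_nonneg _)
  linarith

include hα hbal in
lemma skew_final : ∃ n0 : ℕ, ∀ n : ℕ, n0 ≤ n →
    ((matMeasure μ hμ (2 * n)) {x | (skewMatrix (2 * n) x).det = 0}).toReal
      ≤ Real.exp (-(n : ℝ) ^ (1 / 8 : ℝ)) := by
  obtain ⟨b, hb0, hb1, m0, hm0, hlaw⟩ := setup hα hμ hbal
  obtain ⟨n0, hn0⟩ := numerics b hb0 hb1 m0
  refine ⟨max n0 64, fun n hn => ?_⟩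
  have hn64 : 64 ≤ n := (le_max_right _ _).trans hn
  obtain ⟨p, s, hp, hmp, hs, hb⟩ := hn0 (2 * n) (by have := (le_max_left n0 64).trans hn; omega)
  have := Fact.mk hp
  obtain ⟨Λ, hval, hw⟩ := hlaw p hmp
  have h1 := pi_le hμ p (fun x => (sgnMat Λ (skewSgn p (2 * n)) 0 x).det = 0)
    {x : Fin (2 * n) × Fin (2 * n) → ℤ | (skewMatrix (2 * n) x).det = 0} (fun x hx => by
      rw [← skew_map Λ hval]
      exact det_cast p _ hx)
  have h2 := skew_bound (Λ := Λ) (n := 2 * n) (sg := skewSgn p (2 * n)) (D := 0) (σ := -1)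
    (fun i j => by unfold skewSgn; split_ifs <;> simp)
    (fun i j hij => by
      unfold skewSgn
      rcases lt_or_gt_of_ne hij with h | h
      · simp [h, h.not_gt]
      · simp [h, h.not_gt])
    rfl rfl (two_ne (by omega)) (even_two_mul n) hs (t := (2 * n - 1) / 16) (by omega)
  rw [hw] at h2
  refine h1.trans (h2.trans (le_trans (le_trans ?_
    (hb (2 * n - 1) ((2 * n - 1) / 16) (by omega) (by omega))) ?_))
  · have := Real.exp_pos (-(((2 * n : ℕ) : ℝ) - 1) / 4)
    have := Real.sqrt_nonneg (Rer p b (2 * n - 1) s ((2 * n - 1) / 16))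
    refine mul_le_mul_of_nonneg_left ?_ (Nat.cast_nonneg _)
    linarith
  · refine Real.exp_le_exp.2 (neg_le_neg ?_)
    refine Real.rpow_le_rpow (Nat.cast_nonneg _) ?_ (by norm_num)
    exact_mod_cast (by omega : n ≤ 2 * n)

lemma lap_final : ∃ n0 : ℕ, ∀ n : ℕ, n0 ≤ n →
    ((graphMeasure n) {x | (redLap n x).det = 0}).toReal
      ≤ Real.exp (-(n : ℝ) ^ (1 / 8 : ℝ)) := by
  obtain ⟨n0, hn0⟩ := numerics (1 / 2 / 8) (by norm_num) (by norm_num) 2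
  refine ⟨max n0 64, fun n hn => ?_⟩
  have hn64 : 64 ≤ n := (le_max_right _ _).trans hn
  obtain ⟨p, s, hp, hmp, hs, hb⟩ := hn0 n ((le_max_left _ _).trans hn)
  have := Fact.mk hp
  have hv1 : (coinLaw p).val true = 1 := by simp [coinLaw, twoAtomLaw]
  have hv0 : (coinLaw p).val false = 0 := by simp [coinLaw, twoAtomLaw]
  have h1 := graph_le (fun x => (lapMat (coinLaw p) x).det = 0)
    {x | (redLap n x).det = 0} (fun x hx => by
      rw [← lap_map _ hv1 hv0]
      exact det_cast p _ hx)
  have h2 := lap_bound (Λ := coinLaw p) (n := n) (fun _ => rfl) hv1 hv0 (two_ne hmp) hs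
    (t := (n - 1) / 16) (by omega) (by omega)
  exact h1.trans (h2.trans (hb (n - 1) ((n - 1) / 16) (by omega) (by omega)))

/-- A bound valid for all large `n` becomes one for all `n` after enlarging the constant. -/
lemma extend {f : ℕ → ℝ} (h1 : ∀ n, f n ≤ 1) {n0 N : ℕ} (hN : n0 ≤ N)
    (h : ∀ n, n0 ≤ n → f n ≤ Real.exp (-(n : ℝ) ^ (1 / 8 : ℝ))) (n : ℕ) :
    f n ≤ Real.exp ((N : ℝ) ^ (1 / 8 : ℝ)) * Real.exp (-(n : ℝ) ^ (1 / 8 : ℝ)) := by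
  by_cases hn : n0 ≤ n
  · refine (h n hn).trans (le_mul_of_one_le_left (Real.exp_pos _).le (Real.one_le_exp ?_))
    positivity
  · refine (h1 n).trans ?_
    rw [← Real.exp_add]
    refine Real.one_le_exp ?_
    have : (n : ℝ) ^ (1 / 8 : ℝ) ≤ (N : ℝ) ^ (1 / 8 : ℝ) := by
      refine Real.rpow_le_rpow (Nat.cast_nonneg _) ?_ (by norm_num)
      exact_mod_cast (by omega : n ≤ N)
    linarith

lemma mat_le_one (n : ℕ) (S : Set (Fin n × Fin n → ℤ)) : ((matMeasure μ hμ n) S).toReal ≤ 1 := by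
  unfold matMeasure
  exact measureReal_le_one

lemma graph_le_one (n : ℕ) (S : Set (Fin (n + 1) × Fin (n + 1) → Bool)) :
    ((graphMeasure n) S).toReal ≤ 1 := by
  unfold graphMeasure
  exact measureReal_le_one

end Final

end SingB

theorem singularity_bounds (α : ℝ) (hα : 0 < α)
    (μ : Measure ℤ) (hμ : IsProbabilityMeasure μ) (hbal : IsBalanced α μ) :
    ∃ c : ℝ, 0 < c ∧ ∃ K : ℝ, 0 < K ∧ ∀ n : ℕ,
      ((matMeasure μ hμ (2 * n)) {x | (skewMatrix (2 * n) x).det = 0}).toReal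
        ≤ K * Real.exp (-(n : ℝ) ^ c) ∧
      ((matMeasure μ hμ n) {x | (symMatrix n x).det = 0}).toReal
        ≤ K * Real.exp (-(n : ℝ) ^ c) ∧
      ((graphMeasure n) {x | (redLap n x).det = 0}).toReal
        ≤ K * Real.exp (-(n : ℝ) ^ c) := by
  obtain ⟨n1, h1⟩ := SingB.skew_final hα hμ hbal
  obtain ⟨n2, h2⟩ := SingB.sym_final hα hμ hbal
  obtain ⟨n3, h3⟩ := SingB.lap_final
  refine ⟨1 / 8, by norm_num, Real.exp (((n1 + n2 + n3 : ℕ) : ℝ) ^ (1 / 8 : ℝ)), Real.exp_pos _,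
    fun n => ⟨?_, ?_, ?_⟩⟩
  · exact SingB.extend (f := fun n =>
      ((matMeasure μ hμ (2 * n)) {x | (skewMatrix (2 * n) x).det = 0}).toReal)
      (fun n => SingB.mat_le_one hμ _ _) (by omega) h1 n
  · exact SingB.extend (f := fun n => ((matMeasure μ hμ n) {x | (symMatrix n x).det = 0}).toReal)
      (fun n => SingB.mat_le_one hμ _ _) (by omega) h2 n
  · exact SingB.extend (f := fun n => ((graphMeasure n) {x | (redLap n x).det = 0}).toReal)
      (fun n => SingB.graph_le_one _ _) (by omega) h3 n
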